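/- Every Conway invariant weak Jacobi form of index 2 and weight k < −4 vanishes: J^{w,Co₀}_{k,Λ,2} = {0} for all integers k < −4. -/

import Mathlib

open Complex Matrix UpperHalfPlane
open scoped Manifold MatrixGroups Real Topology BigOperators

noncomputable section

/-- Vectors of the rank-24 lattice (coordinates w.r.t. a fixed basis). -/
abbrev LV := Fin 24 → ℤ

/-- Complexified vectors. -/
abbrev CV := Fin 24 → ℂ

/-- The bilinear form attached to a Gram matrix `B`. -/
def pairZ (B : Matrix (Fin 24) (Fin 24) ℤ) (v u : LV) : ℤ := v ⬝ᵥ B.mulVec u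

/-- The complex bilinear extension of the form. -/
def pairC (B : Matrix (Fin 24) (Fin 24) ℤ) (z w : CV) : ℂ :=
  z ⬝ᵥ ((B.map (Int.cast : ℤ → ℂ)).mulVec w)

/-- Inclusion of lattice vectors into complexified vectors. -/
def liftC (v : LV) : CV := fun i => (v i : ℂ)

/-- `B` is a Gram matrix of the Leech lattice: even, unimodular, positive definite of
rank 24, with no vectors of norm 2 (no roots). -/
def IsLeech (B : Matrix (Fin 24) (Fin 24) ℤ) : Prop :=
  B.IsSymm ∧ B.det = 1 ∧ (∀ v : LV, v ≠ 0 → 0 < pairZ B v v) ∧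
    (∀ v : LV, Even (pairZ B v v)) ∧ (∀ v : LV, pairZ B v v ≠ 2)

/-- The automorphism group `Co₀ = Aut(Λ)` of the lattice, as a set of integral matrices. -/
def ConwayGroup (B : Matrix (Fin 24) (Fin 24) ℤ) : Set (Matrix (Fin 24) (Fin 24) ℤ) :=
  {σ | IsUnit σ.det ∧ σᵀ * B * σ = B}

/-- Action of an integral matrix on complexified vectors. -/
def actC (σ : Matrix (Fin 24) (Fin 24) ℤ) (z : CV) : CV :=
  (σ.map (Int.cast : ℤ → ℂ)).mulVec z

/-- `e(x) = exp(2πix)`. -/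
def eC (x : ℂ) : ℂ := Complex.exp (2 * (Real.pi : ℂ) * Complex.I * x)

/-- The Fourier term `qⁿ ζ^ℓ`. -/
def fterm (B : Matrix (Fin 24) (Fin 24) ℤ) (n : ℕ) (ℓ : LV) (τ : UpperHalfPlane) (z : CV) : ℂ :=
  eC ((n : ℂ) * (τ : ℂ)) * eC (pairC B (liftC ℓ) z)

/-- Lower-left entry of `A ∈ SL(2,ℤ)`, as a complex number. -/
def slc (A : SL(2, ℤ)) : ℂ := ((A : Matrix (Fin 2) (Fin 2) ℤ) 1 0 : ℤ)

/-- Lower-right entry of `A ∈ SL(2,ℤ)`, as a complex number. -/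
def sld (A : SL(2, ℤ)) : ℂ := ((A : Matrix (Fin 2) (Fin 2) ℤ) 1 1 : ℤ)

/-- The automorphy factor `cτ + d`. -/
def jfactor (A : SL(2, ℤ)) (τ : UpperHalfPlane) : ℂ := slc A * (τ : ℂ) + sld A

/-- `φ : ℍ × (Λ⊗ℂ) → ℂ` is a Conway invariant weak Jacobi form of weight `k` and index `t`
with Fourier coefficients `f`. -/
structure IsJacobiFormWith (B : Matrix (Fin 24) (Fin 24) ℤ) (k : ℤ) (t : ℕ)
    (φ : UpperHalfPlane → CV → ℂ) (f : ℕ → LV → ℂ) : Prop where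
  holo_tau : ∀ z : CV, MDifferentiable 𝓘(ℂ) 𝓘(ℂ) fun τ : UpperHalfPlane => φ τ z
  holo_z : ∀ τ : UpperHalfPlane, Differentiable ℂ (φ τ)
  conway_invar : ∀ σ ∈ ConwayGroup B, ∀ (τ : UpperHalfPlane) (z : CV), φ τ (actC σ z) = φ τ z
  quasi_periodic : ∀ (x y : LV) (τ : UpperHalfPlane) (z : CV),
    φ τ (z + (τ : ℂ) • liftC x + liftC y) =
      Complex.exp (-(t : ℂ) * (Real.pi : ℂ) * Complex.I * (pairZ B x x : ℂ) * (τ : ℂ)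
        - 2 * (t : ℂ) * (Real.pi : ℂ) * Complex.I * pairC B (liftC x) z) * φ τ z
  modular : ∀ (A : SL(2, ℤ)) (τ : UpperHalfPlane) (z : CV),
    φ (A • τ) ((jfactor A τ)⁻¹ • z) =
      (jfactor A τ) ^ k *
        Complex.exp ((t : ℂ) * (Real.pi : ℂ) * Complex.I * slc A * pairC B z z / jfactor A τ) *
        φ τ z
  expansion : ∀ (τ : UpperHalfPlane) (z : CV),
    HasSum (fun p : ℕ × LV => f p.1 p.2 * fterm B p.1 p.2 τ z) (φ τ z)

/-- Conway invariant weak Jacobi forms. -/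
def IsWeakJacobiForm (B : Matrix (Fin 24) (Fin 24) ℤ) (k : ℤ) (t : ℕ)
    (φ : UpperHalfPlane → CV → ℂ) : Prop :=
  ∃ f, IsJacobiFormWith B k t φ f

/-- Conway invariant holomorphic Jacobi forms. -/
def IsHolJacobiForm (B : Matrix (Fin 24) (Fin 24) ℤ) (k : ℤ) (t : ℕ)
    (φ : UpperHalfPlane → CV → ℂ) : Prop :=
  ∃ f, IsJacobiFormWith B k t φ f ∧
    ∀ (n : ℕ) (ℓ : LV), 2 * (n : ℤ) * t - pairZ B ℓ ℓ < 0 → f n ℓ = 0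

/-- Modular forms of weight `k` on `SL₂(ℤ)`; the ring of all of them is `ℂ[E₄,E₆]`. -/
abbrev MForm (k : ℤ) := ModularForm (CongruenceSubgroup.Gamma 1) k

/-- The family `φ i` (of weights `w i`) freely generates the module of all forms satisfying
`P` over the ring `M_*(SL₂(ℤ)) = ℂ[E₄,E₆]` of modular forms on `SL₂(ℤ)`. -/
def FreelyGenerates (P : ℤ → (UpperHalfPlane → CV → ℂ) → Prop) {n : ℕ}
    (w : Fin n → ℤ) (φ : Fin n → UpperHalfPlane → CV → ℂ) : Prop :=
  (∀ i, P (w i) (φ i)) ∧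
  ∀ (k : ℤ) (ψ : UpperHalfPlane → CV → ℂ), P k ψ →
    ∃! g : (i : Fin n) → MForm (k - w i),
      ∀ (τ : UpperHalfPlane) (z : CV), ψ τ z = ∑ i, (g i) τ * φ i τ z

/-- The point `(aτ+b)/d` of the upper half-plane (for `a, d > 0`). -/
def heckePt (a d b : ℕ) (τ : UpperHalfPlane) : UpperHalfPlane :=
  if h : 0 < ((((a : ℂ) * (τ : ℂ) + (b : ℂ)) / (d : ℂ)).im) then
    ⟨((a : ℂ) * (τ : ℂ) + (b : ℂ)) / (d : ℂ), h⟩ else τ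

/-- The Hecke operator `T₋(m)` on Jacobi forms of weight `k`. -/
def heckeOp (k : ℤ) (m : ℕ) (φ : UpperHalfPlane → CV → ℂ) : UpperHalfPlane → CV → ℂ :=
  fun τ z => (m : ℂ)⁻¹ * ∑ d ∈ m.divisors, ∑ b ∈ Finset.range d,
    ((m / d : ℕ) : ℂ) ^ k * φ (heckePt (m / d) d b τ) (((m / d : ℕ) : ℂ) • z)

/-- The Jacobi theta function `Θ_Λ = A₁` of the lattice. -/
def thetaLeech (B : Matrix (Fin 24) (Fin 24) ℤ) : UpperHalfPlane → CV → ℂ := fun τ z =>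
  ∑' ℓ : LV, Complex.exp ((Real.pi : ℂ) * Complex.I * (pairZ B ℓ ℓ : ℂ) * (τ : ℂ)
    + 2 * (Real.pi : ℂ) * Complex.I * pairC B (liftC ℓ) z)

/-- `σ_k(n) = Σ_{d ∣ n} d^k`. -/
def sigmaNat (k n : ℕ) : ℕ := ∑ d ∈ n.divisors, d ^ k

/-- `A_t = σ₁₁(t)⁻¹ (A₁ | T₋(t))`, a holomorphic Jacobi form of weight 12 and index `t`. -/
def Aform (B : Matrix (Fin 24) (Fin 24) ℤ) (t : ℕ) : UpperHalfPlane → CV → ℂ := fun τ z =>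
  ((sigmaNat 11 t : ℂ))⁻¹ * heckeOp 12 t (thetaLeech B) τ z

/-- The quasimodular Eisenstein series `E₂`. -/
def E2 : UpperHalfPlane → ℂ := fun τ =>
  1 - 24 * ∑' n : ℕ, (sigmaNat 1 (n + 1) : ℂ) * eC (((n : ℂ) + 1) * (τ : ℂ))

/-- The discriminant cusp form `Δ(τ) = q ∏ (1-qⁿ)^24`. -/
def DeltaForm : UpperHalfPlane → ℂ := fun τ =>
  eC (τ : ℂ) * ∏' n : ℕ, (1 - eC (((n : ℂ) + 1) * (τ : ℂ))) ^ 24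

/-- `aτ`. -/
def scaleH (a : ℕ) (τ : UpperHalfPlane) : UpperHalfPlane := heckePt a 1 0 τ

/-- `(τ+j)/t`. -/
def sliceH (t j : ℕ) (τ : UpperHalfPlane) : UpperHalfPlane := heckePt 1 t j τ

/-- `f₂(τ) = (tE₂(tτ) - E₂(τ))/(t-1)`, a modular form of weight 2 on `Γ₀(t)`. -/
def f2w (t : ℕ) (τ : UpperHalfPlane) : ℂ := ((t : ℂ) * E2 (scaleH t τ) - E2 τ) / ((t : ℂ) - 1)

/-- `B_t`, a holomorphic Jacobi form of weight 14 and index `t` (for `t` prime). -/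
def Bform (B : Matrix (Fin 24) (Fin 24) ℤ) (t : ℕ) : UpperHalfPlane → CV → ℂ := fun τ z =>
  ((t : ℂ) ^ 12 / ((t : ℂ) ^ 12 - 1)) *
    (f2w t τ * thetaLeech B (scaleH t τ) ((t : ℂ) • z)
      - (t : ℂ) ^ (-13 : ℤ) *
        ∑ j ∈ Finset.range t, f2w t (sliceH t j τ) * thetaLeech B (sliceH t j τ) z)

/-- Fourier coefficients of `E₂`. -/
def e2coeff : ℕ → ℂ := fun m => if m = 0 then 1 else -24 * (sigmaNat 1 m : ℂ)

/-- Fourier coefficients of the image `H_k(φ)` of the modified heat operator applied to a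
Jacobi form of weight `k` and index `t` with Fourier coefficients `f`:
`H_k(φ) = 𝓗(φ) + ((12-k)/12)E₂φ` where `𝓗` multiplies `f(n,ℓ)` by `n - (ℓ,ℓ)/(2t)`. -/
def heatCoeff (B : Matrix (Fin 24) (Fin 24) ℤ) (k : ℤ) (t : ℕ) (f : ℕ → LV → ℂ) :
    ℕ → LV → ℂ := fun n ℓ =>
  ((n : ℂ) - (pairZ B ℓ ℓ : ℂ) / (2 * (t : ℂ))) * f n ℓ +
    ((12 - k : ℤ) : ℂ) / 12 * ∑ m ∈ Finset.range (n + 1), e2coeff m * f (n - m) ℓ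

/-- The function with Fourier coefficients `f`. -/
def fourierSeries (B : Matrix (Fin 24) (Fin 24) ℤ) (f : ℕ → LV → ℂ) :
    UpperHalfPlane → CV → ℂ := fun τ z =>
  ∑' p : ℕ × LV, f p.1 p.2 * fterm B p.1 p.2 τ z

/-- The family `Φ m = Φ_{12,m}` of Fourier–Jacobi coefficients of the Borcherds form `Φ₁₂`
at the Leech cusp:
`Δ(τ)·exp(−Σ_{m≥1}((Δ⁻¹A₁)|T₋(m))(τ,𝔷)e^{2πimω}) = Σ_{m≥0} Φ_{12,m}(τ,𝔷)e^{2πimω}`. -/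
def IsFJExpansionOfPhi12 (B : Matrix (Fin 24) (Fin 24) ℤ)
    (Φ : ℕ → UpperHalfPlane → CV → ℂ) : Prop :=
  ∀ (τ ω : UpperHalfPlane) (z : CV),
    HasSum (fun m : ℕ => Φ m τ z * eC ((m : ℂ) * (ω : ℂ)))
      (DeltaForm τ * Complex.exp
        (- ∑' m : ℕ, heckeOp 0 (m + 1) (fun σ w => thetaLeech B σ w / DeltaForm σ) τ z *
            eC (((m : ℂ) + 1) * (ω : ℂ))))

/-- `S_t`: the set of lattice vectors of minimal norm in their coset modulo `tΛ`. -/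
def minimalSet (B : Matrix (Fin 24) (Fin 24) ℤ) (t : ℕ) : Set LV :=
  {v | ∀ u : LV, (∃ w : LV, u = v + (t : ℤ) • w) → pairZ B v v ≤ pairZ B u u}

/-- `v` and `u` are conjugate modulo `tΛ` up to the Conway group. -/
def conjModT (B : Matrix (Fin 24) (Fin 24) ℤ) (t : ℕ) (v u : LV) : Prop :=
  ∃ σ ∈ ConwayGroup B, ∃ w : LV, v - σ.mulVec u = (t : ℤ) • w

/-- `s(t) = |(S_t/Co₀)/tΛ|`. -/
def sRank (B : Matrix (Fin 24) (Fin 24) ℤ) (t : ℕ) : ℕ :=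
  Nat.card (Quot (fun v u : minimalSet B t => conjModT B t v.1 u.1))

/-- `R` is a system of representatives for `(S_t/Co₀)/tΛ` (of minimal length). -/
def IsRepSystem (B : Matrix (Fin 24) (Fin 24) ℤ) (t : ℕ) (R : Finset LV) : Prop :=
  (↑R ⊆ minimalSet B t) ∧ ∀ v ∈ minimalSet B t, ∃! r, r ∈ R ∧ conjModT B t v r

/-- The Conway orbit of a lattice vector. -/
def orbitOf (B : Matrix (Fin 24) (Fin 24) ℤ) (v : LV) : Set LV :=
  {u | ∃ σ ∈ ConwayGroup B, u = σ.mulVec v}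

/-- `O` is a Conway orbit of Leech vectors of type `x` (i.e. norm `2x`) with `c` elements. -/
def OrbitData (B : Matrix (Fin 24) (Fin 24) ℤ) (O : Set LV) (x c : ℕ) : Prop :=
  (∃ v : LV, O = orbitOf B v) ∧ (∀ v ∈ O, pairZ B v v = 2 * (x : ℤ)) ∧ Nat.card O = c

/-- `W` is a `d`-dimensional subspace of the space of functions `ℍ × (Λ⊗ℂ) → ℂ`. -/
def SpanDimIs (W : (UpperHalfPlane → CV → ℂ) → Prop) (d : ℕ) : Prop :=
  ∃ φ : Fin d → UpperHalfPlane → CV → ℂ, (∀ i, W (φ i)) ∧ LinearIndependent ℂ φ ∧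
    ∀ ψ, W ψ → ∃ c : Fin d → ℂ, ψ = ∑ i, c i • φ i

/-!
Odd weights are excluded by `-1 ∈ Co₀`. Let `f(n, ·)` be the first nonzero `q`-coefficient of a
weak Jacobi form of index `2`. Translating by the lattice shows that `f(n, ℓ) ≠ 0` only if `ℓ` is
minimal in its class modulo `2Λ`. The theta series of `Λ` is determined by its weight, so the
numbers of vectors of norm `0, 2, 4, 6, 8` are known, and counting them modulo `2Λ` shows that they
represent every class; hence `(ℓ, ℓ) ≤ 8`. The equality case of this count provides orthogonal
frames of vectors of norm `8`, which show that `Co₀` is transitive on the vectors of each norm at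
most `8`. So `f(n, ·)` is determined by its sums over the shells of norm `0, 4, 6, 8`.

The coefficient of `s²ᵐ` in `exp(t(v,v)E₂(τ)s²/24) φ(τ, sv/2π)` transforms like a modular form of
weight `k + 2m`, so its leading `q`-coefficient vanishes when `k + 2m` is negative, is `0` with
`n > 0`, or is `2`. Applying the Laplacian in `v` turns this into linear relations between the
moments `∑ f(n,ℓ) (ℓ,ℓ)ᵃ`, and for `k ≤ -6` these relations force all shell sums to vanish.
-/

section Lattice

variable {B : Matrix (Fin 24) (Fin 24) ℤ}

/-! ### The bilinear form and its isometries -/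

@[simp] lemma pairZ_add_left (x y z : LV) : pairZ B (x + y) z = pairZ B x z + pairZ B y z := by
  simp [pairZ, add_dotProduct]

@[simp] lemma pairZ_add_right (x y z : LV) : pairZ B x (y + z) = pairZ B x y + pairZ B x z := by
  simp [pairZ, mulVec_add]

@[simp] lemma pairZ_sub_left (x y z : LV) : pairZ B (x - y) z = pairZ B x z - pairZ B y z := by
  simp [pairZ, sub_dotProduct]

@[simp] lemma pairZ_sub_right (x y z : LV) : pairZ B x (y - z) = pairZ B x y - pairZ B x z := by
  simp [pairZ, mulVec_sub]

@[simp] lemma pairZ_neg_left (x y : LV) : pairZ B (-x) y = -pairZ B x y := by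
  simp [pairZ]

@[simp] lemma pairZ_neg_right (x y : LV) : pairZ B x (-y) = -pairZ B x y := by
  simp [pairZ, mulVec_neg]

@[simp] lemma pairZ_smul_left (a : ℤ) (x y : LV) : pairZ B (a • x) y = a * pairZ B x y := by
  rw [pairZ, smul_dotProduct, smul_eq_mul, pairZ]

@[simp] lemma pairZ_smul_right (a : ℤ) (x y : LV) : pairZ B x (a • y) = a * pairZ B x y := by
  rw [pairZ, mulVec_smul, dotProduct_smul, smul_eq_mul, pairZ]

@[simp] lemma pairZ_zero_left (x : LV) : pairZ B 0 x = 0 := by simp [pairZ]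

lemma pairZ_sum_left {ι : Type*} (s : Finset ι) (f : ι → LV) (x : LV) :
    pairZ B (∑ i ∈ s, f i) x = ∑ i ∈ s, pairZ B (f i) x := by
  simp only [pairZ, sum_dotProduct]

lemma pairZ_sum_smul_of_orthogonal {ι : Type*} [DecidableEq ι] {w : ι → LV}
    (ho : Pairwise fun i j => pairZ B (w i) (w j) = 0) (s : Finset ι) (n : ι → ℤ) (i : ι) :
    pairZ B (∑ j ∈ s, n j • w j) (w i) = if i ∈ s then n i * pairZ B (w i) (w i) else 0 := by
  have term (j : ι) : pairZ B (n j • w j) (w i) =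
      if j = i then n i * pairZ B (w i) (w i) else 0 := by
    split_ifs with h
    · rw [h, pairZ_smul_left]
    · rw [pairZ_smul_left, ho h, mul_zero]
  simp only [pairZ_sum_left, term, Finset.sum_ite_eq']

/-- Pairing with `y` on the right, as a linear functional. -/
def pairZRight (B : Matrix (Fin 24) (Fin 24) ℤ) (y : LV) : LV →ₗ[ℤ] ℤ where
  toFun x := pairZ B x y
  map_add' x x' := pairZ_add_left x x' y
  map_smul' a x := pairZ_smul_left a x y

namespace IsLeech

lemma isSymm (hB : IsLeech B) : B.IsSymm := hB.1

lemma det_eq_one (hB : IsLeech B) : B.det = 1 := hB.2.1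

lemma pairZ_self_pos (hB : IsLeech B) {x : LV} (hx : x ≠ 0) : 0 < pairZ B x x := hB.2.2.1 x hx

lemma even_pairZ_self (hB : IsLeech B) (x : LV) : Even (pairZ B x x) := hB.2.2.2.1 x

lemma pairZ_comm (hB : IsLeech B) (x y : LV) : pairZ B x y = pairZ B y x := by
  unfold pairZ
  rw [dotProduct_mulVec, ← mulVec_transpose, hB.isSymm.eq, dotProduct_comm]

lemma pairZ_self_eq_zero (hB : IsLeech B) {x : LV} (h : pairZ B x x = 0) : x = 0 := by
  by_contra hx
  exact (hB.pairZ_self_pos hx).ne' h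

lemma pairZ_self_nonneg (hB : IsLeech B) (x : LV) : 0 ≤ pairZ B x x := by
  by_cases hx : x = 0
  · simp [hx]
  · exact (hB.pairZ_self_pos hx).le

lemma four_le_pairZ_self (hB : IsLeech B) {x : LV} (hx : x ≠ 0) : 4 ≤ pairZ B x x := by
  have hpos := hB.pairZ_self_pos hx
  obtain ⟨r, hr⟩ := hB.even_pairZ_self x
  have hne := hB.2.2.2.2 x
  omega

lemma exists_forall_pairZ_eq (hB : IsLeech B) (h : LV →ₗ[ℤ] ℤ) :
    ∃ u : LV, ∀ x, pairZ B x u = h x := by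
  have hu : IsUnit B.det := by rw [hB.det_eq_one]; exact isUnit_one
  refine ⟨B⁻¹ *ᵥ fun i => h (Pi.single i 1), fun x => ?_⟩
  rw [pairZ, mulVec_mulVec, Matrix.mul_nonsing_inv _ hu, one_mulVec]
  conv_rhs => rw [pi_eq_sum_univ' x, map_sum]
  exact Finset.sum_congr rfl fun i _ => (map_smul h (x i) _).symm

lemma ext_pairZ (hB : IsLeech B) {x y : LV} (h : ∀ z, pairZ B z x = pairZ B z y) : x = y :=
  sub_eq_zero.1 <| hB.pairZ_self_eq_zero <| by rw [pairZ_sub_right, h, sub_self]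

end IsLeech

lemma exists_linearMap_of_forall_eq_smul {R M N : Type*} [CommRing R] [AddCommGroup M]
    [AddCommGroup N] [Module R M] [Module R N] {c : R} (hc : IsSMulRegular N c)
    (G : M →ₗ[R] N) (h : ∀ x, ∃ u, G x = c • u) : ∃ U : M →ₗ[R] N, ∀ x, G x = c • U x := by
  choose u hu using h
  refine ⟨⟨⟨u, fun x y => hc ?_⟩, fun a x => hc ?_⟩, hu⟩
  · change c • u (x + y) = c • (u x + u y)
    rw [← hu, map_add, hu, hu, smul_add]
  · change c • u (a • x) = c • a • u x
    rw [← hu, map_smul, hu, smul_comm]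

lemma IsLeech.exists_eq_smul_of_forall_dvd (hB : IsLeech B) {c : ℤ} (hc : c ≠ 0) {y : LV}
    (h : ∀ x, c ∣ pairZ B x y) : ∃ u : LV, y = c • u := by
  obtain ⟨g, hg⟩ := exists_linearMap_of_forall_eq_smul (smul_right_injective ℤ hc)
    (pairZRight B y) h
  obtain ⟨u, hu⟩ := hB.exists_forall_pairZ_eq g
  refine ⟨u, hB.ext_pairZ fun z => ?_⟩
  rw [pairZ_smul_right, hu]
  exact hg z

/-- The linear map `F` preserves the bilinear form of `B`; for a Leech lattice this means that its
matrix lies in `ConwayGroup B`. -/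
def IsLatticeIsometry (B : Matrix (Fin 24) (Fin 24) ℤ) (F : LV →ₗ[ℤ] LV) : Prop :=
  ∀ x y, pairZ B (F x) (F y) = pairZ B x y

lemma IsLatticeIsometry.toMatrix'_mem_conwayGroup {F : LV →ₗ[ℤ] LV} (hF : IsLatticeIsometry B F)
    (hB : IsLeech B) : LinearMap.toMatrix' F ∈ ConwayGroup B := by
  have hgram : (LinearMap.toMatrix' F)ᵀ * B * LinearMap.toMatrix' F = B := by
    ext i j
    have hij := hF (Pi.single i 1) (Pi.single j 1)
    simp only [pairZ, ← LinearMap.toMatrix'_mulVec F] at hij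
    rw [← vecMul_transpose, ← dotProduct_mulVec, mulVec_mulVec, mulVec_mulVec] at hij
    simpa [Matrix.mul_assoc] using hij
  refine ⟨?_, hgram⟩
  have hdet := congrArg Matrix.det hgram
  rw [det_mul, det_mul, det_transpose, hB.det_eq_one] at hdet
  exact IsUnit.of_mul_eq_one (LinearMap.toMatrix' F).det (by linarith)

/-- `x` and `y` lie in the same orbit of the group of isometries of the lattice, that is, of `Co₀`
when the lattice is the Leech lattice. -/
def ConwayEquiv (B : Matrix (Fin 24) (Fin 24) ℤ) (x y : LV) : Prop :=
  ∃ F : LV →ₗ[ℤ] LV, IsLatticeIsometry B F ∧ F x = y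

namespace ConwayEquiv

lemma refl (x : LV) : ConwayEquiv B x x := ⟨LinearMap.id, fun _ _ => rfl, rfl⟩

lemma trans {x y z : LV} (hxy : ConwayEquiv B x y) (hyz : ConwayEquiv B y z) :
    ConwayEquiv B x z := by
  obtain ⟨F, hF, rfl⟩ := hxy
  obtain ⟨G, hG, rfl⟩ := hyz
  exact ⟨G ∘ₗ F, fun x y => (hG _ _).trans (hF x y), rfl⟩

lemma symm (hB : IsLeech B) {x y : LV} (h : ConwayEquiv B x y) : ConwayEquiv B y x := by
  obtain ⟨F, hF, rfl⟩ := h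
  have hunit := (hF.toMatrix'_mem_conwayGroup hB).1
  set M := LinearMap.toMatrix' F
  have hFM (x : LV) : F x = M *ᵥ x := (LinearMap.toMatrix'_mulVec F x).symm
  refine ⟨Matrix.toLin' M⁻¹, fun x y => ?_, ?_⟩
  · rw [← hF]
    simp [hFM, mulVec_mulVec, Matrix.mul_nonsing_inv _ hunit]
  · simp [hFM, mulVec_mulVec, Matrix.nonsing_inv_mul _ hunit]

lemma neg (x : LV) : ConwayEquiv B x (-x) :=
  ⟨-LinearMap.id, fun x y => by simp, rfl⟩

lemma pairZ_self_eq {x y : LV} (h : ConwayEquiv B x y) : pairZ B y y = pairZ B x x := by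
  obtain ⟨F, hF, rfl⟩ := h
  exact hF x x

end ConwayEquiv

/-! ### Orthogonal bases -/

lemma linearIndependent_of_orthogonal {ι : Type*} {w : ι → LV}
    (hne : ∀ i, pairZ B (w i) (w i) ≠ 0) (ho : Pairwise fun i j => pairZ B (w i) (w j) = 0) :
    LinearIndependent ℤ w := by
  classical
  refine linearIndependent_iff'.2 fun s g hg i hi => ?_
  have hpair := pairZ_sum_smul_of_orthogonal ho s g i
  rw [hg, pairZ_zero_left, if_pos hi] at hpair
  exact (mul_eq_zero.1 hpair.symm).resolve_right (hne i)

lemma IsLeech.card_le_of_orthogonal (hB : IsLeech B) {ι : Type*} [Fintype ι] {w : ι → LV}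
    (hne : ∀ i, w i ≠ 0) (ho : Pairwise fun i j => pairZ B (w i) (w j) = 0) :
    Fintype.card ι ≤ 24 := by
  simpa using (linearIndependent_of_orthogonal
    (fun i => (hB.pairZ_self_pos (hne i)).ne') ho).fintype_card_le_finrank

/-- `w` is an orthogonal basis of the rational quadratic space spanned by the lattice; it need not
be a basis of the lattice itself. -/
structure IsOrthogonalBasis (B : Matrix (Fin 24) (Fin 24) ℤ) (w : Fin 24 → LV) : Prop where
  pos (i : Fin 24) : 0 < pairZ B (w i) (w i)
  orthogonal : Pairwise fun i j => pairZ B (w i) (w j) = 0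

namespace IsOrthogonalBasis

variable {w : Fin 24 → LV}

lemma pairZ_sum_smul (hw : IsOrthogonalBasis B w) (n : Fin 24 → ℤ) (i : Fin 24) :
    pairZ B (∑ j, n j • w j) (w i) = n i * pairZ B (w i) (w i) := by
  rw [pairZ_sum_smul_of_orthogonal hw.orthogonal, if_pos (Finset.mem_univ i)]

lemma eq_zero_of_forall_pairZ_eq_zero (hw : IsOrthogonalBasis B w) (hB : IsLeech B) {y : LV}
    (hy : ∀ i, pairZ B y (w i) = 0) : y = 0 := by
  by_contra hne
  have hw0 (i : Fin 24) : w i ≠ 0 := fun h => (hw.pos i).ne' (by rw [h, pairZ_zero_left])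
  have hcard := hB.card_le_of_orthogonal (w := fun o : Option (Fin 24) => o.elim y w)
    (by rintro (_ | i); exacts [hne, hw0 i])
    (by
      rintro (_ | i) (_ | j) hij
      · exact absurd rfl hij
      · exact hy j
      · exact (hB.pairZ_comm _ _).trans (hy i)
      · exact hw.orthogonal fun h => hij (congrArg some h))
  simp at hcard

lemma ext (hw : IsOrthogonalBasis B w) (hB : IsLeech B) {x y : LV}
    (h : ∀ i, pairZ B x (w i) = pairZ B y (w i)) : x = y :=
  sub_eq_zero.1 <| hw.eq_zero_of_forall_pairZ_eq_zero hB fun i => by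
    rw [pairZ_sub_left, h, sub_self]

lemma prod_smul_eq_sum (hw : IsOrthogonalBasis B w) (hB : IsLeech B) (x : LV) :
    (∏ i, pairZ B (w i) (w i)) • x =
      ∑ i, ((∏ j ∈ Finset.univ.erase i, pairZ B (w j) (w j)) * pairZ B x (w i)) • w i :=
  hw.ext hB fun i => by
    rw [hw.pairZ_sum_smul, pairZ_smul_left, ← Finset.mul_prod_erase _ _ (Finset.mem_univ i)]
    ring

lemma parseval (hw : IsOrthogonalBasis B w) (hB : IsLeech B) (K : Type*) [Field K] [CharZero K]
    (x y : LV) : (pairZ B x y : K) =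
      ∑ i, (pairZ B x (w i) : K) * pairZ B y (w i) / pairZ B (w i) (w i) := by
  have hne (i : Fin 24) : (pairZ B (w i) (w i) : K) ≠ 0 := Int.cast_ne_zero.2 (hw.pos i).ne'
  have hscaled := congrArg (pairZ B · y) (hw.prod_smul_eq_sum hB x)
  simp only [pairZ_smul_left, pairZ_sum_left, hB.pairZ_comm (w _) y] at hscaled
  apply_fun ((↑) : ℤ → K) at hscaled
  push_cast at hscaled
  refine mul_left_cancel₀ (Finset.prod_ne_zero_iff.2 fun i _ => hne i) (hscaled.trans ?_)
  rw [Finset.mul_sum]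
  refine Finset.sum_congr rfl fun i _ => ?_
  rw [← Finset.mul_prod_erase _ _ (Finset.mem_univ i)]
  have hi := hne i
  field_simp

end IsOrthogonalBasis

end Lattice

/-! ### Frames and their codes -/

section Frames

variable {B : Matrix (Fin 24) (Fin 24) ℤ}

/-- Congruence of lattice vectors modulo `2Λ`. -/
def CongrModTwo (x y : LV) : Prop := ∃ w : LV, x = y + (2 : ℤ) • w

namespace CongrModTwo

lemma refl (x : LV) : CongrModTwo x x := ⟨0, by module⟩

lemma symm {x y : LV} (h : CongrModTwo x y) : CongrModTwo y x := by
  obtain ⟨w, rfl⟩ := h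
  exact ⟨-w, by module⟩

lemma trans {x y z : LV} (hxy : CongrModTwo x y) (hyz : CongrModTwo y z) : CongrModTwo x z := by
  obtain ⟨w, rfl⟩ := hxy
  obtain ⟨w', rfl⟩ := hyz
  exact ⟨w' + w, by module⟩

lemma neg_left {x y : LV} (h : CongrModTwo x y) : CongrModTwo (-x) y := by
  obtain ⟨w, rfl⟩ := h
  exact ⟨-y - w, by module⟩

/-- Both `(x - y) / 2` and `(x + y) / 2` are nonzero lattice vectors, hence have norm at least 4. -/
lemma sixteen_le (hB : IsLeech B) {x y : LV} (h : CongrModTwo x y) (hne : x ≠ y)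
    (hne' : x ≠ -y) : 16 ≤ pairZ B x x + pairZ B y y - 2 * |pairZ B x y| := by
  obtain ⟨w, rfl⟩ := h
  have hdiff := hB.four_le_pairZ_self (x := w) (by rintro rfl; simp at hne)
  have hsum := hB.four_le_pairZ_self (x := w + y) fun h0 => hne' <| by
    rw [eq_neg_of_add_eq_zero_left h0]; module
  have hcomm := hB.pairZ_comm y w
  simp only [pairZ_add_left, pairZ_add_right, pairZ_smul_left, pairZ_smul_right] at *
  rcases abs_cases (pairZ B y y + 2 * pairZ B w y) with ⟨habs, _⟩ | ⟨habs, _⟩ <;>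
    rw [habs] <;> linarith

end CongrModTwo

/-- A frame: 24 pairwise orthogonal vectors of norm 8 (type 4) which are congruent modulo `2Λ`. -/
structure IsFrame (B : Matrix (Fin 24) (Fin 24) ℤ) (v : Fin 24 → LV) : Prop where
  norm_eq (i : Fin 24) : pairZ B (v i) (v i) = 8
  orthogonal : Pairwise fun i j => pairZ B (v i) (v j) = 0
  congr (i j : Fin 24) : CongrModTwo (v i) (v j)

/-- `S` is a codeword of the binary code of the frame `v`, i.e. the set of odd coordinates of some
lattice vector `s` whose coordinates `t i = (s, v i) / 2` are integral. -/
def IsFrameCodeword (B : Matrix (Fin 24) (Fin 24) ℤ) (v : Fin 24 → LV) (S : Finset (Fin 24)) :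
    Prop :=
  ∃ (s : LV) (t : Fin 24 → ℤ), ∀ i, pairZ B s (v i) = 2 * t i ∧ (i ∈ S ↔ Odd (t i))

lemma sum_mul_modEq_two {ι : Type*} [Fintype ι] {S : Finset ι} {t : ι → ℤ}
    (hS : ∀ i, i ∈ S ↔ Odd (t i)) (a : ι → ℤ) : ∑ i, a i * t i ≡ ∑ i ∈ S, a i [ZMOD 2] := by
  classical
  rw [← Fintype.sum_ite_mem S]
  refine Int.ModEq.sum fun i _ => ?_
  split_ifs with h
  · obtain ⟨r, hr⟩ := (hS i).1 h
    rw [hr, Int.modEq_iff_dvd]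
    exact ⟨-(a i * r), by ring⟩
  · exact Int.modEq_zero_iff_dvd.2
      ((Int.not_odd_iff_even.1 ((hS i).not.1 h)).two_dvd.mul_left _)

lemma sum_sq_modEq_four {ι : Type*} [Fintype ι] {S : Finset ι} {t : ι → ℤ}
    (hS : ∀ i, i ∈ S ↔ Odd (t i)) : ∑ i, t i ^ 2 ≡ S.card [ZMOD 4] := by
  classical
  rw [Finset.cast_card, ← Fintype.sum_ite_mem S]
  refine Int.ModEq.sum fun i _ => ?_
  split_ifs with h
  · exact Int.sq_mod_four_eq_one_of_odd ((hS i).1 h)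
  · obtain ⟨r, hr⟩ := (Int.not_odd_iff_even.1 ((hS i).not.1 h)).two_dvd
    exact Int.modEq_zero_iff_dvd.2 ⟨r ^ 2, by rw [hr]; ring⟩

namespace IsFrame

variable {v : Fin 24 → LV} {S : Finset (Fin 24)}

lemma isOrthogonalBasis (hv : IsFrame B v) : IsOrthogonalBasis B v :=
  ⟨fun i => by rw [hv.norm_eq]; norm_num, hv.orthogonal⟩

lemma parseval (hv : IsFrame B v) (hB : IsLeech B) (x y : LV) :
    8 * pairZ B x y = ∑ i, pairZ B x (v i) * pairZ B y (v i) := by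
  have h := hv.isOrthogonalBasis.parseval hB ℚ x y
  simp only [hv.norm_eq, ← Finset.sum_div] at h
  rw [eq_div_iff (by norm_num), mul_comm] at h
  exact_mod_cast h

lemma even_pairZ_iff (hv : IsFrame B v) (x : LV) (i j : Fin 24) :
    Even (pairZ B x (v i)) ↔ Even (pairZ B x (v j)) := by
  obtain ⟨w, hw⟩ := hv.congr i j
  rw [hw, pairZ_add_right, pairZ_smul_right, Int.even_add, iff_true_right (even_two_mul _)]

lemma smul_of_sign (hv : IsFrame B v) {e : Fin 24 → ℤ} (he : ∀ i, e i = 1 ∨ e i = -1) :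
    IsFrame B fun i => e i • v i where
  norm_eq i := by
    rw [pairZ_smul_left, pairZ_smul_right, hv.norm_eq]
    rcases he i with h | h <;> rw [h] <;> norm_num
  orthogonal i j hij := by
    change pairZ B (e i • v i) (e j • v j) = 0
    rw [pairZ_smul_left, pairZ_smul_right, hv.orthogonal hij]; ring
  congr i j := by
    have hself (i : Fin 24) : CongrModTwo (e i • v i) (v i) := by
      rcases he i with h | h <;> rw [h]
      · rw [one_smul]; exact .refl _
      · rw [neg_one_smul]; exact (CongrModTwo.refl _).neg_left
    exact ((hself i).trans (hv.congr i j)).trans (hself j).symm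

lemma exists_eq_or_eq_neg (hv : IsFrame B v) (hB : IsLeech B) {x : LV} {i : Fin 24}
    (hx : pairZ B x x = 8) (h : CongrModTwo x (v i)) : ∃ j, x = v j ∨ x = -v j := by
  by_contra! hne
  suffices x = 0 by
    rw [this, pairZ_zero_left] at hx
    norm_num at hx
  refine hv.isOrthogonalBasis.eq_zero_of_forall_pairZ_eq_zero hB fun j => ?_
  have hbound := (h.trans (hv.congr i j)).sixteen_le hB (hne j).1 (hne j).2
  rw [hx, hv.norm_eq] at hbound
  exact abs_eq_zero.1 (le_antisymm (by linarith) (abs_nonneg _))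

lemma sum_mul_eq_two_mul_pairZ (hv : IsFrame B v) (hB : IsLeech B) {x y : LV} {a b : Fin 24 → ℤ}
    (ha : ∀ i, pairZ B x (v i) = 2 * a i) (hb : ∀ i, pairZ B y (v i) = 2 * b i) :
    ∑ i, a i * b i = 2 * pairZ B x y := by
  have h := hv.parseval hB x y
  have hterm (i : Fin 24) : pairZ B x (v i) * pairZ B y (v i) = 4 * (a i * b i) := by
    rw [ha, hb]; ring
  simp only [hterm, ← Finset.mul_sum] at h
  linarith

lemma exists_half_of_even (hv : IsFrame B v) {x : LV} {j : Fin 24} (hx : Even (pairZ B x (v j))) :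
    ∃ a : Fin 24 → ℤ, ∀ i, pairZ B x (v i) = 2 * a i :=
  Classical.skolem.1 fun i => ((hv.even_pairZ_iff x i j).2 hx).two_dvd

lemma even_sum_codeword (hv : IsFrame B v) (hB : IsLeech B) (hS : IsFrameCodeword B v S) {x : LV}
    {a : Fin 24 → ℤ} (ha : ∀ i, pairZ B x (v i) = 2 * a i) : Even (∑ i ∈ S, a i) := by
  obtain ⟨s, t, hst⟩ := hS
  have h := sum_mul_modEq_two (fun i => (hst i).2) a
  rw [hv.sum_mul_eq_two_mul_pairZ hB ha fun i => (hst i).1] at h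
  exact Int.even_iff.2 <| h.symm.trans (Int.modEq_zero_iff_dvd.2 ⟨_, rfl⟩)

lemma four_dvd_card_codeword (hv : IsFrame B v) (hB : IsLeech B) (hS : IsFrameCodeword B v S) :
    (4 : ℤ) ∣ S.card := by
  obtain ⟨s, t, hst⟩ := hS
  have h := sum_sq_modEq_four fun i => (hst i).2
  have hnorm := hv.sum_mul_eq_two_mul_pairZ hB (fun i => (hst i).1) fun i => (hst i).1
  simp only [← pow_two] at hnorm
  obtain ⟨r, hr⟩ := hB.even_pairZ_self s
  exact Int.modEq_zero_iff_dvd.1 <| h.symm.trans <|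
    Int.modEq_zero_iff_dvd.2 ⟨r, by rw [hnorm, hr]; ring⟩

lemma four_dvd_sum_codeword_of_even (hv : IsFrame B v) (hB : IsLeech B)
    (hS : IsFrameCodeword B v S) {x : LV} (hx : Even (pairZ B x (v 0))) (y : LV) :
    4 ∣ ∑ i ∈ S, pairZ B x (v i) * pairZ B y (v i) := by
  obtain ⟨a, ha⟩ := hv.exists_half_of_even hx
  have heven : Even (∑ i ∈ S, a i * pairZ B y (v i)) := by
    rcases Int.even_or_odd (pairZ B y (v 0)) with hy | hy
    · exact Finset.even_sum _ fun i _ => ((hv.even_pairZ_iff y i 0).2 hy).mul_left _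
    · have hdiff : Even (∑ i ∈ S, a i * pairZ B y (v i) - ∑ i ∈ S, a i) := by
        rw [← Finset.sum_sub_distrib]
        refine Finset.even_sum _ fun i _ => ?_
        have hyi : Odd (pairZ B y (v i)) := by
          rwa [← Int.not_even_iff_odd, hv.even_pairZ_iff y i 0, Int.not_even_iff_odd]
        rw [← mul_sub_one]
        exact (hyi.sub_odd odd_one).mul_left _
      exact (Int.even_sub.1 hdiff).2 (hv.even_sum_codeword hB hS ha)
  obtain ⟨r, hr⟩ := heven
  refine ⟨r, ?_⟩
  simp only [ha, mul_assoc, ← Finset.mul_sum, hr]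
  ring

lemma four_dvd_sum_codeword (hv : IsFrame B v) (hB : IsLeech B) (hS : IsFrameCodeword B v S)
    (x y : LV) : 4 ∣ ∑ i ∈ S, pairZ B x (v i) * pairZ B y (v i) := by
  rcases Int.even_or_odd (pairZ B x (v 0)) with hx | hx
  · exact hv.four_dvd_sum_codeword_of_even hB hS hx y
  rcases Int.even_or_odd (pairZ B y (v 0)) with hy | hy
  · simpa only [mul_comm] using hv.four_dvd_sum_codeword_of_even hB hS hy x
  have hdiff := hv.four_dvd_sum_codeword_of_even hB hS (x := x - y)
    (by rw [pairZ_sub_left]; exact hx.sub_odd hy) y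
  have hsq : ∑ i ∈ S, pairZ B y (v i) * pairZ B y (v i) ≡ S.card [ZMOD 4] := by
    rw [Finset.cast_card]
    refine Int.ModEq.sum fun i _ => ?_
    rw [← pow_two]
    refine Int.sq_mod_four_eq_one_of_odd ?_
    rwa [← Int.not_even_iff_odd, hv.even_pairZ_iff y i 0, Int.not_even_iff_odd]
  simp only [pairZ_sub_left, sub_mul, Finset.sum_sub_distrib] at hdiff
  exact (dvd_iff_dvd_of_dvd_sub hdiff).2 <| Int.modEq_zero_iff_dvd.1 <|
    hsq.trans <| Int.modEq_zero_iff_dvd.2 <| hv.four_dvd_card_codeword hB hS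

/-- Changing the signs of the coordinates in a codeword is the map `x ↦ x - ¼ ∑_{i ∈ S} (x, vᵢ) vᵢ`,
which is integral because all the sums `∑_{i ∈ S} (x, vᵢ) (y, vᵢ)` are divisible by 4. -/
lemma exists_isometry_of_codeword (hv : IsFrame B v) (hB : IsLeech B)
    (hS : IsFrameCodeword B v S) : ∃ F : LV →ₗ[ℤ] LV, IsLatticeIsometry B F ∧
      ∀ x i, pairZ B (F x) (v i) = if i ∈ S then -pairZ B x (v i) else pairZ B x (v i) := by
  let G : LV →ₗ[ℤ] LV := ∑ i ∈ S, (pairZRight B (v i)).smulRight (v i)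
  have hG (x : LV) : G x = ∑ i ∈ S, pairZ B x (v i) • v i := by
    simp only [G, LinearMap.sum_apply, LinearMap.smulRight_apply]
    rfl
  obtain ⟨U, hU⟩ := exists_linearMap_of_forall_eq_smul
    (smul_right_injective LV (four_ne_zero (α := ℤ))) G fun x =>
      hB.exists_eq_smul_of_forall_dvd four_ne_zero fun y => by
        rw [hG, hB.pairZ_comm, pairZ_sum_left]
        simpa only [pairZ_smul_left, hB.pairZ_comm y] using hv.four_dvd_sum_codeword hB hS x y
  have hcoord (x : LV) (i : Fin 24) : pairZ B ((LinearMap.id - U : LV →ₗ[ℤ] LV) x) (v i) =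
      if i ∈ S then -pairZ B x (v i) else pairZ B x (v i) := by
    have h := congrArg (pairZ B · (v i)) (hU x)
    simp only [hG, pairZ_smul_left, pairZ_sum_smul_of_orthogonal hv.orthogonal, hv.norm_eq] at h
    rw [LinearMap.sub_apply, pairZ_sub_left, LinearMap.id_apply]
    split_ifs at * <;> linarith
  refine ⟨LinearMap.id - U, fun x y => ?_, hcoord⟩
  refine mul_left_cancel₀ (by norm_num : (8 : ℤ) ≠ 0) ?_
  rw [hv.parseval hB, hv.parseval hB]
  refine Finset.sum_congr rfl fun i _ => ?_
  rw [hcoord, hcoord]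
  split_ifs <;> ring

end IsFrame

end Frames

section SignPatterns

lemma exists_mem_eqOn_single_or_exists_relation {K ι : Type*} [Field K] [Fintype ι] [DecidableEq ι]
    (C : Submodule K (ι → K)) (T : Finset ι) (i : ι) :
    (∃ c ∈ C, ∀ j ∈ T, c j = (Pi.single i 1 : ι → K) j) ∨
      ∃ l : ι → K, l i ≠ 0 ∧ (∀ j ∉ T, l j = 0) ∧ ∀ c ∈ C, ∑ j, l j * c j = 0 := by
  let Z : Submodule K (ι → K) := Submodule.pi T fun _ => ⊥
  by_cases h : Pi.single i 1 ∈ C ⊔ Z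
  · obtain ⟨c, hc, z, hz, hcz⟩ := Submodule.mem_sup.1 h
    refine .inl ⟨c, hc, fun j hj => ?_⟩
    rw [← hcz, Pi.add_apply, (Submodule.mem_bot K).1 (hz j hj), add_zero]
  · obtain ⟨g, hgi, hg⟩ := Submodule.exists_le_ker_of_notMem h
    refine .inr ⟨fun j => g (Pi.single j 1), hgi, fun j hj => ?_, fun c hc => ?_⟩
    · refine hg (Submodule.mem_sup_right fun k hk => (Submodule.mem_bot K).2 ?_)
      exact Pi.single_eq_of_ne (by rintro rfl; exact hj hk) 1
    · rw [← LinearMap.mem_ker.1 (hg (Submodule.mem_sup_left hc))]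
      conv_rhs => rw [pi_eq_sum_univ' c, map_sum]
      exact Finset.sum_congr rfl fun j _ => by
        rw [map_smul, smul_eq_mul, mul_comm]

variable {B : Matrix (Fin 24) (Fin 24) ℤ} {v : Fin 24 → LV}

/-- The binary code of a frame: the coordinates modulo 2 of the lattice vectors `s` for which
`(s, v i) / 2` is integral. -/
def frameCode (B : Matrix (Fin 24) (Fin 24) ℤ) (v : Fin 24 → LV) :
    Submodule (ZMod 2) (Fin 24 → ZMod 2) where
  carrier := {c | ∃ (s : LV) (t : Fin 24 → ℤ), ∀ i, pairZ B s (v i) = 2 * t i ∧ c i = t i}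
  add_mem' := by
    rintro c c' ⟨s, t, h⟩ ⟨s', t', h'⟩
    refine ⟨s + s', t + t', fun i => ⟨?_, ?_⟩⟩
    · rw [pairZ_add_left, (h i).1, (h' i).1, Pi.add_apply, mul_add]
    · rw [Pi.add_apply, (h i).2, (h' i).2, Pi.add_apply, Int.cast_add]
  zero_mem' := ⟨0, 0, fun i => by simp⟩
  smul_mem' := by
    rintro a c ⟨s, t, h⟩
    refine ⟨(a.val : ℤ) • s, (a.val : ℤ) • t, fun i => ⟨?_, ?_⟩⟩
    · rw [pairZ_smul_left, (h i).1, Pi.smul_apply, smul_eq_mul]; ring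
    · rw [Pi.smul_apply, (h i).2, Pi.smul_apply, smul_eq_mul, smul_eq_mul]
      push_cast
      rw [ZMod.natCast_val, ZMod.cast_id]

namespace IsFrame

/-- `¼ ∑ mᵢ vᵢ` would be a nonzero lattice vector of norm `½ ∑ mᵢ² < 4`. -/
lemma not_forall_four_dvd (hv : IsFrame B v) (hB : IsLeech B) {m : Fin 24 → ℤ} (hm0 : m ≠ 0)
    (hm : ∑ i, m i ^ 2 < 8) : ¬ ∀ x, 4 ∣ ∑ i, m i * pairZ B x (v i) := by
  intro hdvd
  obtain ⟨u, hu⟩ := hB.exists_eq_smul_of_forall_dvd (c := 4) four_ne_zero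
    (y := ∑ i, m i • v i) fun x => by
      rw [hB.pairZ_comm, pairZ_sum_left]
      simpa only [pairZ_smul_left, hB.pairZ_comm x] using hdvd x
  have hcoord (i : Fin 24) : pairZ B u (v i) = 2 * m i := by
    have h := hv.isOrthogonalBasis.pairZ_sum_smul m i
    rw [hu, pairZ_smul_left, hv.norm_eq] at h
    linarith
  have hnorm := hv.sum_mul_eq_two_mul_pairZ hB hcoord hcoord
  simp only [← pow_two] at hnorm
  have hu0 : u ≠ 0 := by
    rintro rfl
    refine hm0 (funext fun i => ?_)
    simpa using (hcoord i).symm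
  linarith [hB.four_le_pairZ_self hu0]

lemma forall_four_dvd_or (hv : IsFrame B v) {m : Fin 24 → ℤ} (k : Fin 24)
    (hm : ∀ (x : LV) (a : Fin 24 → ℤ), (∀ i, pairZ B x (v i) = 2 * a i) → Even (∑ i, m i * a i)) :
    (∀ x, 4 ∣ ∑ i, m i * pairZ B x (v i)) ∨
      ∀ x, 4 ∣ ∑ i, m i * pairZ B x (v i) - 2 * pairZ B x (v k) := by
  have heven (x : LV) (hx : Even (pairZ B x (v k))) : 4 ∣ ∑ i, m i * pairZ B x (v i) := by
    obtain ⟨a, ha⟩ := hv.exists_half_of_even hx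
    obtain ⟨r, hr⟩ := hm x a ha
    refine ⟨r, ?_⟩
    simp only [ha, mul_left_comm _ (2 : ℤ), ← Finset.mul_sum, hr]
    ring
  refine or_iff_not_imp_left.2 fun hall x => ?_
  obtain ⟨x₀, hx₀⟩ := not_forall.1 hall
  have hodd : ¬ Even (pairZ B x₀ (v k)) := mt (heven x₀) hx₀
  have hdouble : Even (∑ i, m i * pairZ B x₀ (v i)) :=
    hm ((2 : ℤ) • x₀) _ fun i => pairZ_smul_left _ _ _
  by_cases hx : Even (pairZ B x (v k))
  · have := heven x hx
    rw [Int.even_iff] at hx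
    omega
  · have hdiff := heven (x - x₀) (by rw [pairZ_sub_left, Int.even_sub]; tauto)
    simp only [pairZ_sub_left, mul_sub, Finset.sum_sub_distrib] at hdiff
    rw [Int.even_iff] at hx hdouble
    omega

lemma exists_not_even_sum (hv : IsFrame B v) (hB : IsLeech B) {m : Fin 24 → ℤ} {k : Fin 24}
    (hk : m k = 1) (hm : ∑ i, m i ^ 2 < 8) :
    ∃ (x : LV) (a : Fin 24 → ℤ), (∀ i, pairZ B x (v i) = 2 * a i) ∧ ¬ Even (∑ i, m i * a i) := by
  by_contra! hall
  rcases hv.forall_four_dvd_or k hall with h | h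
  · exact hv.not_forall_four_dvd hB (by rintro rfl; simp at hk) hm h
  · have hsub (i : Fin 24) : (m - Pi.single k 2 : Fin 24 → ℤ) i = if i = k then -1 else m i := by
      rw [Pi.sub_apply, Pi.single_apply]
      split_ifs with hi
      · rw [hi, hk]; norm_num
      · rw [sub_zero]
    refine hv.not_forall_four_dvd hB (m := m - Pi.single k 2) (fun h0 => ?_) ?_ fun x => ?_
    · simpa [hk] using congrFun h0 k
    · refine lt_of_eq_of_lt (Finset.sum_congr rfl fun i _ => ?_) hm
      rw [hsub]
      split_ifs with hi
      · rw [hi, hk]; norm_num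
      · rfl
    · simpa [sub_mul, Finset.sum_sub_distrib, Pi.single_apply] using h x

lemma exists_codeword_inter_eq_singleton (hv : IsFrame B v) (hB : IsLeech B)
    {T : Finset (Fin 24)} (hT : T.card < 8) {k : Fin 24} (hk : k ∈ T) :
    ∃ S, IsFrameCodeword B v S ∧ S ∩ T = {k} := by
  rcases exists_mem_eqOn_single_or_exists_relation (frameCode B v) T k with
    ⟨c, ⟨s, t, hst⟩, hc⟩ | ⟨l, hlk, hlT, hl⟩
  · refine ⟨Finset.univ.filter fun i => Odd (t i), ⟨s, t, fun i => ⟨(hst i).1, by simp⟩⟩, ?_⟩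
    ext j
    simp only [Finset.mem_inter, Finset.mem_filter_univ, Finset.mem_singleton,
      ← ZMod.intCast_eq_one_iff_odd, ← (hst j).2]
    refine ⟨fun ⟨hj, hjT⟩ => ?_, ?_⟩
    · by_contra hne
      rw [hc j hjT, Pi.single_eq_of_ne hne] at hj
      exact zero_ne_one hj
    · rintro rfl
      exact ⟨by rw [hc j hk, Pi.single_eq_same], hk⟩
  · exfalso
    let m (i : Fin 24) : ℤ := if l i = 0 then 0 else 1
    have hml (i : Fin 24) : (m i : ZMod 2) = l i := by
      have hl01 : ∀ a : ZMod 2, ((if a = 0 then 0 else 1 : ℤ) : ZMod 2) = a := by decide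
      exact hl01 (l i)
    have hmsq : ∑ i, m i ^ 2 < 8 := by
      refine lt_of_le_of_lt ?_ (Nat.cast_lt.2 hT)
      rw [Finset.cast_card, ← Fintype.sum_ite_mem T]
      refine Finset.sum_le_sum fun i _ => ?_
      by_cases hi : i ∈ T
      · rw [if_pos hi]
        simp only [m]
        split_ifs <;> norm_num
      · simp [m, hi, hlT i hi]
    obtain ⟨x, a, ha, hodd⟩ := hv.exists_not_even_sum hB (if_neg hlk : m k = 1) hmsq
    refine hodd (ZMod.intCast_eq_zero_iff_even.1 ?_)
    push_cast
    simpa only [hml] using hl (fun i => a i) ⟨x, a, fun i => ⟨ha i, rfl⟩⟩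

end IsFrame

end SignPatterns

section NormFour

variable {B : Matrix (Fin 24) (Fin 24) ℤ} {v : Fin 24 → LV}

/-- Every vector of norm 8 belongs to a frame. -/
def HasFrames (B : Matrix (Fin 24) (Fin 24) ℤ) : Prop :=
  ∀ y, pairZ B y y = 8 → ∃ v, IsFrame B v ∧ ∃ i, v i = y

lemma HasFrames.exists_frame_extending {ι : Type*} [Nonempty ι] (hF : HasFrames B) (hB : IsLeech B)
    {w : ι → LV} (hnorm : ∀ i, pairZ B (w i) (w i) = 8)
    (ho : Pairwise fun i j => pairZ B (w i) (w j) = 0) (hc : ∀ i j, CongrModTwo (w i) (w j)) :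
    ∃ v, IsFrame B v ∧ ∃ p : ι → Fin 24, Function.Injective p ∧ ∀ j, v (p j) = w j := by
  obtain ⟨v, hv, i₀, hi₀⟩ := hF (w (Classical.arbitrary ι)) (hnorm _)
  choose p hp using fun j =>
    hv.exists_eq_or_eq_neg hB (hnorm j) (hi₀ ▸ hc j (Classical.arbitrary ι))
  have hinj : Function.Injective p := by
    intro a b hab
    by_contra hne
    have hzero := ho hne
    have hnorm_eq := hv.norm_eq (p b)
    rcases hp a with ha | ha <;> rcases hp b with hb | hb <;>
      simp only [ha, hb, hab, pairZ_neg_left, pairZ_neg_right] at hzero <;> linarith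
  classical
  let e (i : Fin 24) : ℤ := if ∃ j, p j = i ∧ w j = v i then 1 else -1
  refine ⟨fun i => e i • v i, hv.smul_of_sign fun i => ite_eq_or_eq _ _ _, p, hinj, fun j => ?_⟩
  by_cases hj : w j = v (p j)
  · have hpos : e (p j) = 1 := if_pos ⟨j, rfl, hj⟩
    simp only [hpos, one_smul, hj]
  · have hneg : e (p j) = -1 := if_neg fun ⟨j', hj', h⟩ => hj (hinj hj' ▸ h)
    simp only [hneg, neg_one_smul, (hp j).resolve_left hj]

namespace IsFrame

lemma exists_isometry_neg_and_fix (hv : IsFrame B v) (hB : IsLeech B) {T : Finset (Fin 24)}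
    (hT : T.card < 8) {k : Fin 24} (hk : k ∈ T) :
    ∃ F : LV →ₗ[ℤ] LV, IsLatticeIsometry B F ∧ F (v k) = -v k ∧ ∀ j ∈ T, j ≠ k → F (v j) = v j := by
  obtain ⟨S, hS, hST⟩ := hv.exists_codeword_inter_eq_singleton hB hT hk
  obtain ⟨F, hF, hFv⟩ := hv.exists_isometry_of_codeword hB hS
  have hkS : k ∈ S := (Finset.mem_inter.1 (hST ▸ Finset.mem_singleton_self k)).1
  refine ⟨F, hF, hv.isOrthogonalBasis.ext hB fun i => ?_, fun j hj hjk =>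
    hv.isOrthogonalBasis.ext hB fun i => ?_⟩
  · rw [hFv, pairZ_neg_left]
    split_ifs with hi
    · rfl
    · rw [hv.orthogonal (ne_of_mem_of_not_mem hkS hi), neg_zero]
  · rw [hFv]
    split_ifs with hi
    · have hji : j ≠ i := by
        rintro rfl
        exact hjk (Finset.mem_singleton.1 (hST ▸ Finset.mem_inter.2 ⟨hi, hj⟩))
      rw [hv.orthogonal hji, neg_zero]
    · rfl

section HalfSum

variable {ι : Type*} [Fintype ι] {p : ι → Fin 24} {z : LV}

lemma exists_two_smul_eq_sum (hv : IsFrame B v) (hι : Even (Fintype.card ι)) (p : ι → Fin 24) :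
    ∃ z : LV, (2 : ℤ) • z = ∑ j, v (p j) := by
  choose u hu using fun j => hv.congr (p j) 0
  obtain ⟨r, hr⟩ := hι
  refine ⟨(r : ℤ) • v 0 + ∑ j, u j, ?_⟩
  simp only [hu, Finset.sum_add_distrib, Finset.sum_const, Finset.card_univ, hr, smul_add,
    ← Finset.smul_sum]
  module

lemma pairZ_half_sum (hv : IsFrame B v) (hp : Function.Injective p)
    (hz : (2 : ℤ) • z = ∑ j, v (p j)) (j : ι) : pairZ B z (v (p j)) = 4 := by
  classical
  have h := pairZ_sum_smul_of_orthogonal (w := v ∘ p)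
    (fun a b hab => hv.orthogonal (hp.ne hab)) Finset.univ 1 j
  simp only [Pi.one_apply, one_smul, Function.comp_apply, ← hz, pairZ_smul_left, hv.norm_eq,
    Finset.mem_univ, if_true] at h
  linarith

lemma pairZ_half_sum_self (hv : IsFrame B v) (hB : IsLeech B) (hp : Function.Injective p)
    (hz : (2 : ℤ) • z = ∑ j, v (p j)) : pairZ B z z = 2 * Fintype.card ι := by
  have h := congrArg (pairZ B · z) hz
  simp only [pairZ_smul_left, pairZ_sum_left, hB.pairZ_comm (v _) z, hv.pairZ_half_sum hp hz,
    Finset.sum_const, Finset.card_univ, nsmul_eq_mul] at h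
  linarith

lemma conwayEquiv_half_sum_sub (hv : IsFrame B v) (hB : IsLeech B) (hp : Function.Injective p)
    (hι : Fintype.card ι < 8) (hz : (2 : ℤ) • z = ∑ j, v (p j)) (k : ι) :
    ConwayEquiv B z (z - v (p k)) := by
  classical
  obtain ⟨F, hF, hFk, hFj⟩ := hv.exists_isometry_neg_and_fix hB
    (T := Finset.univ.image p) (Finset.card_image_le.trans_lt hι)
    (Finset.mem_image_of_mem p (Finset.mem_univ k))
  have hterm (j : ι) : F (v (p j)) = v (p j) - if j = k then (2 : ℤ) • v (p k) else 0 := by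
    split_ifs with hj
    · rw [hj, hFk]; module
    · rw [hFj _ (Finset.mem_image_of_mem p (Finset.mem_univ j)) (hp.ne hj), sub_zero]
  refine ⟨F, hF, smul_right_injective LV (two_ne_zero' ℤ) ?_⟩
  simp only [← map_smul, hz, map_sum, hterm, Finset.sum_sub_distrib, Finset.sum_ite_eq',
    Finset.mem_univ, if_true, smul_sub]

lemma exists_frame_half_sum_sub [Nonempty ι] (hv : IsFrame B v) (hB : IsLeech B)
    (hF : HasFrames B) (hp : Function.Injective p) (hι : Fintype.card ι = 4)
    (hz : (2 : ℤ) • z = ∑ j, v (p j)) :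
    ∃ v', IsFrame B v' ∧ ∃ q : ι → Fin 24, Function.Injective q ∧ ∀ j, v' (q j) = z - v (p j) := by
  have hzv := hv.pairZ_half_sum hp hz
  have hzz := hv.pairZ_half_sum_self hB hp hz
  rw [hι] at hzz
  refine hF.exists_frame_extending hB (fun i => ?_) (fun i j hij => ?_) fun i j => ?_
  · simp only [pairZ_sub_left, pairZ_sub_right, hzz, hzv, hB.pairZ_comm (v (p i)) z, hv.norm_eq]
    rfl
  · simp only [pairZ_sub_left, pairZ_sub_right, hzz, hzv, hB.pairZ_comm (v (p i)) z,
      hv.orthogonal (hp.ne hij)]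
    rfl
  · obtain ⟨u, hu⟩ := hv.congr (p i) (p j)
    exact ⟨-u, by rw [hu]; module⟩

/-- The vectors `z - v (p j)` are again part of a frame, of which `z` is again the half sum. -/
lemma conwayEquiv_half_sum (hv : IsFrame B v) (hB : IsLeech B) (hF : HasFrames B)
    (hp : Function.Injective p) (hι : Fintype.card ι = 4) (hz : (2 : ℤ) • z = ∑ j, v (p j))
    (k : ι) : ConwayEquiv B z (v (p k)) := by
  have : Nonempty ι := ⟨k⟩
  obtain ⟨v', hv', q, hq, hqv⟩ := hv.exists_frame_half_sum_sub hB hF hp hι hz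
  have hz' : (2 : ℤ) • z = ∑ j, v' (q j) := by
    simp only [hqv, Finset.sum_sub_distrib, ← hz, Finset.sum_const, Finset.card_univ, hι]
    module
  simpa only [hqv, sub_sub_cancel] using
    hv'.conwayEquiv_half_sum_sub hB hq (by rw [hι]; norm_num) hz' k

end HalfSum

lemma conwayEquiv (hv : IsFrame B v) (hB : IsLeech B) (hF : HasFrames B) (i j : Fin 24) :
    ConwayEquiv B (v i) (v j) := by
  obtain ⟨T, hijT, -, hT⟩ := Finset.exists_subsuperset_card_eq (n := 4)
    (Finset.subset_univ {i, j}) (Finset.card_le_two.trans (by norm_num)) (by simp)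
  have hcard : Fintype.card T = 4 := by rw [Fintype.card_coe, hT]
  obtain ⟨z, hz⟩ := hv.exists_two_smul_eq_sum (by rw [hcard]; decide) ((↑) : T → Fin 24)
  have hequiv := hv.conwayEquiv_half_sum hB hF Subtype.val_injective hcard hz
  exact ((hequiv ⟨i, hijT (by simp)⟩).symm hB).trans (hequiv ⟨j, hijT (by simp)⟩)

lemma exists_norm_four_half_sub (hv : IsFrame B v) {i j : Fin 24} (hij : i ≠ j) {s : ℤ}
    (hs : s = 1 ∨ s = -1) : ∃ u, pairZ B u u = 4 ∧
      ∀ x, pairZ B x (v i) = s * pairZ B x (v j) → pairZ B x u = 0 := by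
  obtain ⟨u, hu⟩ : ∃ u : LV, v i - s • v j = (2 : ℤ) • u := by
    obtain ⟨w, hw⟩ := hv.congr i j
    rcases hs with rfl | rfl
    · exact ⟨w, by rw [hw]; module⟩
    · exact ⟨w + v j, by rw [hw]; module⟩
  have hpair (x : LV) : 2 * pairZ B x u = pairZ B x (v i) - s * pairZ B x (v j) := by
    rw [← pairZ_smul_right, ← hu, pairZ_sub_right, pairZ_smul_right]
  refine ⟨u, ?_, fun x hx => by linarith [hpair x]⟩
  have hnorm := congrArg (fun x => pairZ B x x) hu
  simp only [pairZ_sub_left, pairZ_sub_right, pairZ_smul_left, pairZ_smul_right, hv.norm_eq,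
    hv.orthogonal hij, hv.orthogonal hij.symm] at hnorm
  rcases hs with rfl | rfl <;> linarith

end IsFrame

/-- `x + y` and `x - y` lie in a common frame, and `y` is obtained from `x` by changing the sign
of `x - y`. -/
lemma HasFrames.conwayEquiv_of_orthogonal (hF : HasFrames B) (hB : IsLeech B) {x y : LV}
    (hx : pairZ B x x = 4) (hy : pairZ B y y = 4) (hxy : pairZ B x y = 0) : ConwayEquiv B x y := by
  have hyx : pairZ B y x = 0 := by rw [hB.pairZ_comm]; exact hxy
  have hcongr : CongrModTwo (x + y) (x - y) := ⟨y, by module⟩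
  obtain ⟨v, hv, p, hp, hvp⟩ := hF.exists_frame_extending hB (w := ![x + y, x - y])
    (fun i => by fin_cases i <;> simp [hx, hy, hxy, hyx])
    (fun i j _ => by fin_cases i <;> fin_cases j <;> simp_all)
    (fun i j => by
      fin_cases i <;> fin_cases j
      exacts [.refl _, hcongr, hcongr.symm, .refl _])
  obtain ⟨F, hFiso, hneg, hfix⟩ := hv.exists_isometry_neg_and_fix hB
    (T := {p 0, p 1}) (Finset.card_le_two.trans_lt (by norm_num)) (k := p 1) (by simp)
  have hsub : F (x - y) = -(x - y) := by simpa [hvp] using hneg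
  have hadd : F (x + y) = x + y := by
    simpa [hvp] using hfix (p 0) (by simp) (hp.ne (by decide))
  refine ⟨F, hFiso, smul_right_injective LV (two_ne_zero' ℤ) ?_⟩
  have hdouble : (2 : ℤ) • x = (x + y) + (x - y) := by module
  change (2 : ℤ) • F x = (2 : ℤ) • y
  rw [← map_smul, hdouble, map_add, hadd, hsub]
  module

lemma card_filter_two_le_abs_le {ι : Type*} [Fintype ι] {a : ι → ℤ} {n : ℕ}
    (h : ∑ i, a i * a i ≤ 4 * n) : (Finset.univ.filter fun i => 2 ≤ |a i|).card ≤ n := by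
  have hsum : ∑ _i ∈ Finset.univ.filter (fun i => 2 ≤ |a i|), (4 : ℤ) ≤ ∑ i, a i * a i := by
    refine le_trans (Finset.sum_le_sum (g := fun i => a i * a i) fun i hi => ?_)
      (Finset.sum_le_sum_of_subset_of_nonneg (Finset.subset_univ _) fun i _ _ => mul_self_nonneg _)
    rw [← abs_mul_abs_self]
    nlinarith [(Finset.mem_filter.1 hi).2]
  rw [Finset.sum_const, nsmul_eq_mul] at hsum
  exact_mod_cast (show ((Finset.univ.filter fun i => 2 ≤ |a i|).card : ℤ) ≤ n by linarith)

/-- The pairs `(a i, b i) ∈ {-1, 0, 1}²` fall into five classes up to sign. -/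
lemma exists_ne_eq_sign_mul {ι : Type*} {a b : ι → ℤ} {T : Finset ι} (hT : 5 < T.card)
    (hab : ∀ i ∈ T, |a i| < 2 ∧ |b i| < 2) :
    ∃ i j, i ≠ j ∧ ∃ s : ℤ, (s = 1 ∨ s = -1) ∧ a i = s * a j ∧ b i = s * b j := by
  have hmaps : ∀ i ∈ T, (a i * a i, a i * b i, b i * b i) ∈
      ({(0, 0, 0), (1, 0, 0), (0, 0, 1), (1, 1, 1), (1, -1, 1)} : Finset (ℤ × ℤ × ℤ)) := by
    intro i hi
    obtain ⟨ha, hb⟩ := hab i hi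
    rw [abs_lt] at ha hb
    obtain h | h | h : a i = -1 ∨ a i = 0 ∨ a i = 1 := by omega
    all_goals obtain h' | h' | h' : b i = -1 ∨ b i = 0 ∨ b i = 1 := by omega
    all_goals rw [h, h']; decide
  obtain ⟨i, -, j, -, hij, heq⟩ := Finset.exists_ne_map_eq_of_card_lt_of_maps_to
    (lt_of_le_of_lt (by decide) hT) hmaps
  simp only [Prod.mk.injEq] at heq
  refine ⟨i, j, hij, ?_⟩
  rcases mul_self_eq_mul_self_iff.1 heq.1 with ha | ha <;>
    rcases mul_self_eq_mul_self_iff.1 heq.2.2 with hb | hb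
  · exact ⟨1, by simp [ha, hb]⟩
  · rw [ha, hb] at heq
    rcases mul_eq_zero.1 (by linarith [heq.2.1] : a j * b j = 0) with h | h
    · exact ⟨-1, by simp [ha, hb, h]⟩
    · exact ⟨1, by simp [ha, hb, h]⟩
  · rw [ha, hb] at heq
    rcases mul_eq_zero.1 (by linarith [heq.2.1] : a j * b j = 0) with h | h
    · exact ⟨1, by simp [ha, hb, h]⟩
    · exact ⟨-1, by simp [ha, hb, h]⟩
  · exact ⟨-1, by simp [ha, hb]⟩

lemma IsFrame.conwayEquiv_of_norm_four (hv : IsFrame B v) (hB : IsLeech B) (hF : HasFrames B)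
    {x y : LV} (hx : pairZ B x x = 4) (hy : pairZ B y y = 4) : ConwayEquiv B x y := by
  have hlarge (x : LV) (hx : pairZ B x x = 4) :
      (Finset.univ.filter fun i => 2 ≤ |pairZ B x (v i)|).card ≤ 8 :=
    card_filter_two_le_abs_le (by rw [← hv.parseval hB, hx]; norm_num)
  let large := (Finset.univ.filter fun i => 2 ≤ |pairZ B x (v i)|) ∪
    Finset.univ.filter fun i => 2 ≤ |pairZ B y (v i)|
  have hsmall : 5 < largeᶜ.card := by
    have := (Finset.card_union_le _ _).trans (add_le_add (hlarge x hx) (hlarge y hy))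
    rw [Finset.card_compl, Fintype.card_fin]
    change large.card ≤ 16 at this
    omega
  obtain ⟨i, j, hij, s, hs, hsx, hsy⟩ := exists_ne_eq_sign_mul hsmall
    (a := fun i => pairZ B x (v i)) (b := fun i => pairZ B y (v i)) fun i hi => by
      simpa [large] using hi
  obtain ⟨u, hu, horth⟩ := hv.exists_norm_four_half_sub hij hs
  exact (hF.conwayEquiv_of_orthogonal hB hx hu (horth x hsx)).trans
    ((hF.conwayEquiv_of_orthogonal hB hy hu (horth y hsy)).symm hB)

end NormFour

section NormSixAndEight

variable {B : Matrix (Fin 24) (Fin 24) ℤ} {v : Fin 24 → LV} {x y : LV}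

lemma IsLeech.exists_conwayEquiv_maximal (hB : IsLeech B) (x y : LV) :
    ∃ z, ConwayEquiv B y z ∧ ∀ z', ConwayEquiv B y z' → pairZ B x z' ≤ pairZ B x z := by
  obtain ⟨m, ⟨z, hz, rfl⟩, hmax⟩ := Int.exists_greatest_of_bdd
    (P := fun m => ∃ z, ConwayEquiv B y z ∧ pairZ B x z = m)
    ⟨pairZ B y y + pairZ B x x, by
      rintro m ⟨z, hz, rfl⟩
      have hdist := hB.pairZ_self_nonneg (x - z)
      simp only [pairZ_sub_left, pairZ_sub_right, hB.pairZ_comm z x, hz.pairZ_self_eq] at hdist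
      linarith [hB.pairZ_self_nonneg x, hB.pairZ_self_nonneg y]⟩
    ⟨_, y, .refl _, rfl⟩
  exact ⟨z, hz, fun z' hz' => hmax _ ⟨z', hz', rfl⟩⟩

namespace IsFrame

lemma exists_frame_pairZ_eq_abs (hv : IsFrame B v) (x : LV) :
    ∃ v', IsFrame B v' ∧ ∀ i, pairZ B x (v' i) = |pairZ B x (v i)| ∧
      (v' i = v i ∨ v' i = -v i) ∧ (0 ≤ pairZ B x (v i) → v' i = v i) := by
  let e (i : Fin 24) : ℤ := if 0 ≤ pairZ B x (v i) then 1 else -1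
  refine ⟨fun i => e i • v i, hv.smul_of_sign fun i => ite_eq_or_eq _ _ _, fun i => ?_⟩
  by_cases hi : 0 ≤ pairZ B x (v i)
  · simp only [e, if_pos hi, one_smul, abs_of_nonneg hi, true_or, imp_true_iff, and_self]
  · simp only [e, if_neg hi, neg_one_smul, pairZ_neg_right, abs_of_neg (not_le.1 hi), or_true,
      false_imp_iff, and_self, hi]

lemma sum_abs_pairZ_le (hv : IsFrame B v) (hB : IsLeech B) (hF : HasFrames B) {m : ℤ}
    (hmax : ∀ z, ConwayEquiv B y z → pairZ B x z ≤ m) {k : Fin 24}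
    (hk : ConwayEquiv B y (v k)) {T : Finset (Fin 24)} (hT : T.card = 4) :
    ∑ i ∈ T, |pairZ B x (v i)| ≤ 2 * m := by
  obtain ⟨v', hv', hvv'⟩ := hv.exists_frame_pairZ_eq_abs x
  have hcard : Fintype.card T = 4 := by rw [Fintype.card_coe, hT]
  obtain ⟨z, hz⟩ := hv'.exists_two_smul_eq_sum (by rw [hcard]; decide) ((↑) : T → Fin 24)
  obtain ⟨i, hi⟩ : T.Nonempty := Finset.card_pos.1 (by omega)
  have hvz : ConwayEquiv B (v' i) z :=
    (hv'.conwayEquiv_half_sum hB hF Subtype.val_injective hcard hz ⟨i, hi⟩).symm hB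
  have hvv'i : ConwayEquiv B (v i) (v' i) := by
    rcases (hvv' i).2.1 with h | h <;> rw [h]
    exacts [.refl _, .neg _]
  have hxz := hmax z (((hk.trans (hv.conwayEquiv hB hF k i)).trans hvv'i).trans hvz)
  have hdouble := congrArg (fun z => pairZ B z x) hz
  simp only [pairZ_smul_left, pairZ_sum_left, hB.pairZ_comm (v' _) x, hB.pairZ_comm z x,
    (hvv' _).1] at hdouble
  rw [Finset.sum_coe_sort T fun i => |pairZ B x (v i)|] at hdouble
  linarith

end IsFrame

/-- A frame adapted to `x` and the orbit of `y`: all coordinates of `x` are nonnegative, and `v k`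
has maximal inner product with `x` among the vectors of the orbit of `y`. -/
structure IsAdaptedFrame (B : Matrix (Fin 24) (Fin 24) ℤ) (x y : LV) (v : Fin 24 → LV)
    (k : Fin 24) : Prop extends IsFrame B v where
  conwayEquiv : ConwayEquiv B y (v k)
  nonneg (i : Fin 24) : 0 ≤ pairZ B x (v i)
  le_of_conwayEquiv (z : LV) (hz : ConwayEquiv B y z) : pairZ B x z ≤ pairZ B x (v k)

lemma HasFrames.exists_isAdaptedFrame (hF : HasFrames B) (hB : IsLeech B) (x : LV)
    (hy : pairZ B y y = 8) : ∃ v k, IsAdaptedFrame B x y v k := by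
  obtain ⟨z, hz, hmax⟩ := hB.exists_conwayEquiv_maximal x y
  have hxz : 0 ≤ pairZ B x z := by
    have := hmax _ (hz.trans (.neg z))
    rw [pairZ_neg_right] at this
    linarith
  obtain ⟨v, hv, k, rfl⟩ := hF z (by rw [hz.pairZ_self_eq, hy])
  obtain ⟨v', hv', hvv'⟩ := hv.exists_frame_pairZ_eq_abs x
  have hk : v' k = v k := (hvv' k).2.2 hxz
  exact ⟨v', k, hv', hk ▸ hz, fun i => (hvv' i).1 ▸ abs_nonneg _, fun z' hz' => hk ▸ hmax z' hz'⟩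

lemma exists_largest_three {ι : Type*} [DecidableEq ι] (a : ι → ℤ) {s : Finset ι}
    (hs : 3 ≤ s.card) : ∃ i ∈ s, ∃ j ∈ s.erase i, ∃ l ∈ (s.erase i).erase j,
      a j ≤ a i ∧ a l ≤ a j ∧ ∀ n ∈ (s.erase i).erase j, a n ≤ a l := by
  obtain ⟨i, hi, himax⟩ := s.exists_max_image a (Finset.card_pos.1 (by omega))
  have hcard := Finset.card_erase_of_mem hi
  obtain ⟨j, hj, hjmax⟩ := (s.erase i).exists_max_image a (Finset.card_pos.1 (by omega))
  have hcard' := Finset.card_erase_of_mem hj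
  obtain ⟨l, hl, hlmax⟩ := ((s.erase i).erase j).exists_max_image a (Finset.card_pos.1 (by omega))
  exact ⟨i, hi, j, hj, l, hl, himax j (Finset.mem_of_mem_erase hj),
    hjmax l (Finset.mem_of_mem_erase hl), hlmax⟩

namespace IsAdaptedFrame

variable {k : Fin 24}

lemma exists_three_largest (hv : IsAdaptedFrame B x y v k) (hB : IsLeech B) (hF : HasFrames B) :
    ∃ p : Fin 4 → Fin 24, Function.Injective p ∧ p 0 = k ∧
      pairZ B x (v (p 1)) + pairZ B x (v (p 2)) + pairZ B x (v (p 3)) ≤ pairZ B x (v k) ∧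
      pairZ B x (v (p 2)) ≤ pairZ B x (v (p 1)) ∧ pairZ B x (v (p 3)) ≤ pairZ B x (v (p 2)) ∧
      pairZ B x (v k) ^ 2 + pairZ B x (v (p 1)) ^ 2 ≤ 8 * pairZ B x x ∧
      8 * pairZ B x x ≤ pairZ B x (v k) ^ 2 + pairZ B x (v (p 1)) ^ 2 + pairZ B x (v (p 2)) ^ 2 +
        21 * pairZ B x (v (p 3)) ^ 2 := by
  have hcard : (Finset.univ.erase k).card = 23 := by simp
  obtain ⟨i, hi, j, hj, l, hl, hij, hjl, hmax⟩ :=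
    exists_largest_three (fun n => pairZ B x (v n)) (s := Finset.univ.erase k)
      (by rw [hcard]; norm_num)
  have hinj : Function.Injective ![k, i, j, l] := by
    simp only [Finset.mem_erase] at hi hj hl
    intro a b hab
    fin_cases a <;> fin_cases b <;> simp at hab ⊢ <;> grind
  have hnorm := hv.parseval hB x x
  rw [← Finset.add_sum_erase _ _ (Finset.mem_univ k), ← Finset.add_sum_erase _ _ hi] at hnorm
  refine ⟨![k, i, j, l], hinj, rfl, ?_, hij, hjl, ?_, ?_⟩
  · have hsum := hv.sum_abs_pairZ_le hB hF hv.le_of_conwayEquiv hv.conwayEquiv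
      (T := Finset.univ.map ⟨_, hinj⟩) (by simp)
    simp only [Finset.sum_map, Function.Embedding.coeFn_mk, abs_of_nonneg (hv.nonneg _),
      Fin.sum_univ_four] at hsum
    simp only [cons_val] at hsum ⊢
    linarith
  · have : 0 ≤ ∑ n ∈ (Finset.univ.erase k).erase i, pairZ B x (v n) * pairZ B x (v n) :=
      Finset.sum_nonneg fun n _ => mul_self_nonneg _
    simp only [cons_val]
    linarith
  · rw [← Finset.add_sum_erase _ _ hj] at hnorm
    have hrest : ∑ n ∈ ((Finset.univ.erase k).erase i).erase j,
        pairZ B x (v n) * pairZ B x (v n) ≤ 21 * pairZ B x (v l) ^ 2 := by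
      have hle := Finset.sum_le_card_nsmul (((Finset.univ.erase k).erase i).erase j)
        (fun n => pairZ B x (v n) * pairZ B x (v n)) (pairZ B x (v l) ^ 2) fun n hn => by
          rw [pow_two]
          exact mul_self_le_mul_self (hv.nonneg n) (hmax n hn)
      rwa [Finset.card_erase_of_mem hj, Finset.card_erase_of_mem hi, hcard, nsmul_eq_mul] at hle
    simp only [cons_val]
    linarith

lemma sq_add_le_of_odd (hv : IsAdaptedFrame B x y v k) (hB : IsLeech B)
    (hodd : Odd (pairZ B x (v k))) : pairZ B x (v k) ^ 2 + 23 ≤ 8 * pairZ B x x := by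
  have hone (i : Fin 24) : 1 ≤ pairZ B x (v i) * pairZ B x (v i) := by
    have hne : pairZ B x (v i) ≠ 0 := fun h =>
      Int.not_even_iff_odd.2 hodd ((hv.even_pairZ_iff x i k).1 (h ▸ Even.zero))
    exact mul_self_pos.2 hne
  have hle := Finset.card_nsmul_le_sum (Finset.univ.erase k) _ 1 fun i _ => hone i
  rw [Finset.card_erase_of_mem (Finset.mem_univ k), Finset.card_univ, Fintype.card_fin] at hle
  have hnorm := hv.parseval hB x x
  rw [← Finset.add_sum_erase _ _ (Finset.mem_univ k)] at hnorm
  simp only [Nat.reduceSub, nsmul_eq_mul, Nat.cast_ofNat, mul_one] at hle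
  linarith

/-- Reflecting the frame in `x`'s four large coordinates turns `6, 2, 2, 2` into `0, 4, 4, 4`, after
which maximality leaves no room for the remaining coordinates. -/
lemma not_six_two_two_two (hv : IsAdaptedFrame B x y v k) (hB : IsLeech B) (hF : HasFrames B)
    (hx : pairZ B x x = 8) {p : Fin 4 → Fin 24} (hp : Function.Injective p) (hp0 : p 0 = k)
    (hk : pairZ B x (v k) = 6) (hpx : ∀ j : Fin 3, pairZ B x (v (p j.succ)) = 2) : False := by
  obtain ⟨u, hu⟩ := hv.exists_two_smul_eq_sum (by decide) p
  obtain ⟨v', hv', q, hq, hqv⟩ := hv.exists_frame_half_sum_sub hB hF hp rfl hu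
  have hxu : pairZ B x u = 6 := by
    have h := congrArg (pairZ B · x) hu
    simp only [pairZ_smul_left, pairZ_sum_left, hB.pairZ_comm (v _) x, hB.pairZ_comm u x] at h
    rw [Fin.sum_univ_succ, hp0, hk, Finset.sum_congr rfl fun j _ => hpx j] at h
    simp at h
    linarith
  have hyu : ConwayEquiv B y (v' (q 0)) := by
    rw [hqv, hp0]
    have huk : ConwayEquiv B u (v k) := hp0 ▸ hv.conwayEquiv_half_sum hB hF hp rfl hu 0
    refine (hv.conwayEquiv.trans (huk.symm hB)).trans ?_
    exact hp0 ▸ hv.conwayEquiv_half_sum_sub hB hp (by simp) hu 0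
  have hfour (j : Fin 3) : pairZ B x (v' (q j.succ)) = 4 := by
    rw [hqv, pairZ_sub_right, hxu, hpx]
    rfl
  let T : Finset (Fin 24) := Finset.univ.map ⟨q ∘ Fin.succ, hq.comp (Fin.succ_injective 3)⟩
  have hzero : ∀ i ∉ T, pairZ B x (v' i) = 0 := by
    intro i hi
    have hsum := hv'.sum_abs_pairZ_le hB hF hv.le_of_conwayEquiv hyu (T := insert i T)
      (by rw [Finset.card_insert_of_notMem hi, Finset.card_map]; rfl)
    rw [Finset.sum_insert hi, Finset.sum_map, hk] at hsum
    simpa [hfour] using hsum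
  have hnorm := hv'.parseval hB x x
  rw [hx, ← Finset.sum_subset (Finset.subset_univ T) fun i _ hi => by rw [hzero i hi, zero_mul],
    Finset.sum_map] at hnorm
  simp [hfour] at hnorm

end IsAdaptedFrame

section LargestCoordinates

variable {m r₁ r₂ r₃ : ℤ}

lemma eq_eight_or_six_two_two_two (h₃ : 0 ≤ r₃) (h₂₃ : r₃ ≤ r₂) (h₁₂ : r₂ ≤ r₁)
    (hsum : r₁ + r₂ + r₃ ≤ m) (hm : m ≤ 8) (heven₁ : Even r₁ ↔ Even m) (heven₂ : Even r₂ ↔ Even m)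
    (heven₃ : Even r₃ ↔ Even m) (hle : m ^ 2 + r₁ ^ 2 ≤ 64)
    (hge : 64 ≤ m ^ 2 + r₁ ^ 2 + r₂ ^ 2 + 21 * r₃ ^ 2) (hodd : Odd m → m ^ 2 + 23 ≤ 64) :
    m = 8 ∨ m = 6 ∧ r₁ = 2 ∧ r₂ = 2 ∧ r₃ = 2 := by
  simp only [Int.even_iff, Int.odd_iff] at heven₁ heven₂ heven₃ hodd
  have : r₃ ≤ 2 := by omega
  have : r₂ ≤ 4 := by omega
  have hm0 : 0 ≤ m := by omega
  interval_cases r₃ <;> interval_cases r₂ <;> try omega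
  all_goals interval_cases m <;> try omega
  all_goals
    have hr₁ : r₁ ≤ 8 := by omega
    interval_cases r₁ <;> omega

lemma eq_five_of_le_five (h₃ : 0 ≤ r₃) (h₂₃ : r₃ ≤ r₂) (h₁₂ : r₂ ≤ r₁)
    (hsum : r₁ + r₂ + r₃ ≤ m) (hm : m ≤ 5) (heven₁ : Even r₁ ↔ Even m) (heven₂ : Even r₂ ↔ Even m)
    (heven₃ : Even r₃ ↔ Even m) (hge : 48 ≤ m ^ 2 + r₁ ^ 2 + r₂ ^ 2 + 21 * r₃ ^ 2) : m = 5 := by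
  simp only [Int.even_iff] at heven₁ heven₂ heven₃
  have : r₃ ≤ 2 := by omega
  have : r₂ ≤ 4 := by omega
  have hm0 : 0 ≤ m := by omega
  interval_cases r₃ <;> interval_cases r₂ <;> try omega
  all_goals interval_cases m <;> try omega
  all_goals
    have hr₁ : r₁ ≤ 8 := by omega
    interval_cases r₁ <;> omega

end LargestCoordinates

namespace HasFrames

lemma conwayEquiv_of_norm_eight (hF : HasFrames B) (hB : IsLeech B) (hx : pairZ B x x = 8)
    (hy : pairZ B y y = 8) : ConwayEquiv B y x := by
  obtain ⟨v, k, hv⟩ := hF.exists_isAdaptedFrame hB x hy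
  have hdist : pairZ B (x - v k) (x - v k) = 2 * (8 - pairZ B x (v k)) := by
    simp only [pairZ_sub_left, pairZ_sub_right, hB.pairZ_comm (v k) x, hx, hv.norm_eq]
    ring
  have hle : pairZ B x (v k) ≤ 8 := by linarith [hB.pairZ_self_nonneg (x - v k)]
  obtain ⟨p, hp, hp0, hsum, h₁₂, h₂₃, hsq_le, hle_sq⟩ := hv.exists_three_largest hB hF
  rw [hx] at hsq_le hle_sq
  have heven (i : Fin 24) := hv.even_pairZ_iff x i k
  rcases eq_eight_or_six_two_two_two (hv.nonneg _) h₂₃ h₁₂ hsum hle (heven _) (heven _) (heven _)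
    hsq_le hle_sq (fun hodd => by linarith [hv.sq_add_le_of_odd hB hodd]) with h | ⟨h, h₁, h₂, h₃⟩
  · rw [sub_eq_zero.1 (hB.pairZ_self_eq_zero (hdist.trans (by rw [h]; rfl)))]
    exact hv.conwayEquiv
  · exact (hv.not_six_two_two_two hB hF hx hp hp0 h fun j => by
      fin_cases j
      exacts [h₁, h₂, h₃]).elim

lemma exists_conwayEquiv_pairZ_eq_five (hF : HasFrames B) (hB : IsLeech B) (hx : pairZ B x x = 6)
    (hy : pairZ B y y = 8) : ∃ z, ConwayEquiv B y z ∧ pairZ B x z = 5 := by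
  obtain ⟨v, k, hv⟩ := hF.exists_isAdaptedFrame hB x hy
  have hle : pairZ B x (v k) ≤ 5 := by
    have hne : x - v k ≠ 0 := fun h => by
      have := hv.norm_eq k
      rw [← sub_eq_zero.1 h, hx] at this
      norm_num at this
    have hdist := hB.four_le_pairZ_self hne
    simp only [pairZ_sub_left, pairZ_sub_right, hB.pairZ_comm (v k) x, hx, hv.norm_eq] at hdist
    linarith
  obtain ⟨p, -, -, hsum, h₁₂, h₂₃, -, hle_sq⟩ := hv.exists_three_largest hB hF
  rw [hx] at hle_sq
  have heven (i : Fin 24) := hv.even_pairZ_iff x i k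
  exact ⟨v k, hv.conwayEquiv, eq_five_of_le_five (hv.nonneg _) h₂₃ h₁₂ hsum hle (heven _) (heven _)
    (heven _) hle_sq⟩

end HasFrames

lemma IsFrame.abs_pairZ_eq_one (hv : IsFrame B v) (hB : IsLeech B) (hx : pairZ B x x = 6)
    {k i : Fin 24} (hk : pairZ B x (v k) = 5) (hi : i ≠ k) : |pairZ B x (v i)| = 1 := by
  have hodd (j : Fin 24) : 0 ≤ pairZ B x (v j) * pairZ B x (v j) - 1 := by
    have hne : pairZ B x (v j) ≠ 0 := fun h => by
      have := (hv.even_pairZ_iff x j k).1 (h ▸ Even.zero)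
      rw [hk] at this
      exact absurd this (by decide)
    exact Int.sub_nonneg_of_le (mul_self_pos.2 hne)
  have hnorm := hv.parseval hB x x
  rw [hx, ← Finset.add_sum_erase _ _ (Finset.mem_univ k), hk] at hnorm
  have hsum : ∑ j ∈ Finset.univ.erase k, (pairZ B x (v j) * pairZ B x (v j) - 1) = 0 := by
    rw [Finset.sum_sub_distrib, Finset.sum_const, Finset.card_erase_of_mem (Finset.mem_univ k)]
    simp only [Finset.card_univ, Fintype.card_fin, nsmul_eq_mul, mul_one]
    push_cast
    linarith
  have hzero := (Finset.sum_eq_zero_iff_of_nonneg fun j _ => hodd j).1 hsum i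
    (Finset.mem_erase.2 ⟨hi, Finset.mem_univ i⟩)
  rw [← abs_mul_abs_self, sub_eq_zero] at hzero
  exact (mul_self_eq_one_iff.1 hzero).resolve_right fun h => by
    linarith [abs_nonneg (pairZ B x (v i))]

/-- `(x - x') / 2` has coordinate `0` or `(x, v i)`, so the coordinates in which `x` and `x'` differ
form a codeword. -/
lemma IsFrame.conwayEquiv_of_abs_eq (hv : IsFrame B v) (hB : IsLeech B) {x' : LV}
    (hodd : ∀ i, Odd (pairZ B x (v i))) (habs : ∀ i, |pairZ B x (v i)| = |pairZ B x' (v i)|) :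
    ConwayEquiv B x x' := by
  let S : Finset (Fin 24) := Finset.univ.filter fun i => pairZ B x (v i) ≠ pairZ B x' (v i)
  have hneg {i : Fin 24} (hi : i ∈ S) : pairZ B x' (v i) = -pairZ B x (v i) :=
    (abs_eq_abs.1 (habs i).symm).resolve_left (Ne.symm (Finset.mem_filter.1 hi).2)
  have heq {i : Fin 24} (hi : i ∉ S) : pairZ B x (v i) = pairZ B x' (v i) := by
    simpa [S] using hi
  have hS : IsFrameCodeword B v S := by
    refine ⟨x - x', fun i => if i ∈ S then pairZ B x (v i) else 0, fun i => ?_⟩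
    rw [pairZ_sub_left]
    by_cases hi : i ∈ S
    · simp only [hi, if_true, hodd i, and_true, hneg hi]
      ring
    · simp [hi, heq hi]
  obtain ⟨E, hE, hEv⟩ := hv.exists_isometry_of_codeword hB hS
  refine ⟨E, hE, hv.isOrthogonalBasis.ext hB fun i => ?_⟩
  rw [hEv]
  split_ifs with hi
  exacts [(hneg hi).symm, heq hi]

lemma HasFrames.conwayEquiv_of_norm_six (hF : HasFrames B) (hB : IsLeech B) {x' : LV}
    (hy : pairZ B y y = 8) (hx : pairZ B x x = 6) (hx' : pairZ B x' x' = 6) :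
    ConwayEquiv B x x' := by
  obtain ⟨z, hz, hxz⟩ := hF.exists_conwayEquiv_pairZ_eq_five hB hx hy
  obtain ⟨z', hz', hxz'⟩ := hF.exists_conwayEquiv_pairZ_eq_five hB hx' hy
  obtain ⟨F, hFiso, hFz⟩ := (hz'.symm hB).trans hz
  obtain ⟨v, hv, k, rfl⟩ := hF z (hz.pairZ_self_eq.trans hy)
  have hFx : pairZ B (F x') (F x') = 6 := (hFiso x' x').trans hx'
  have hFk : pairZ B (F x') (v k) = 5 := by rw [← hFz, hFiso, hxz']
  have hxF : ConwayEquiv B x (F x') := by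
    refine hv.conwayEquiv_of_abs_eq hB (fun i => ?_) fun i => ?_
    · rw [← Int.not_even_iff_odd, hv.even_pairZ_iff x i k, hxz]
      decide
    · by_cases hi : i = k
      · rw [hi, hxz, hFk]
      · rw [hv.abs_pairZ_eq_one hB hx hxz hi, hv.abs_pairZ_eq_one hB hFx hFk hi]
  exact hxF.trans (.symm hB ⟨F, hFiso, rfl⟩)

end NormSixAndEight

/-! ### Short vectors modulo `2Λ` -/

section ClassesModTwo

variable {B : Matrix (Fin 24) (Fin 24) ℤ} {A : Finset LV} {x y : LV}

/-- The class of a lattice vector in `Λ / 2Λ`. -/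
def modTwo (x : LV) : Fin 24 → ZMod 2 := fun i => (x i : ZMod 2)

lemma modTwo_eq_iff : modTwo x = modTwo y ↔ CongrModTwo x y := by
  constructor
  · intro h
    have hdvd (i : Fin 24) : (2 : ℤ) ∣ x i - y i :=
      (ZMod.intCast_eq_intCast_iff_dvd_sub (y i) (x i) 2).1 (congrFun h i).symm
    choose w hw using hdvd
    exact ⟨w, funext fun i => by
      rw [Pi.add_apply, Pi.smul_apply, smul_eq_mul, ← hw, add_sub_cancel]⟩
  · rintro ⟨w, rfl⟩
    ext i
    have htwo : (2 : ZMod 2) = 0 := rfl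
    simp [modTwo, htwo]

lemma modTwo_neg (x : LV) : modTwo (-x) = modTwo x :=
  modTwo_eq_iff.2 (CongrModTwo.refl x).neg_left

lemma exists_half_of_neg_mem (h0 : 0 ∉ A) (hneg : ∀ x ∈ A, -x ∈ A) :
    ∃ H ⊆ A, (∀ x ∈ A, x ∈ H ∨ -x ∈ H) ∧ (∀ x ∈ H, -x ∉ H) ∧ A.card ≤ 2 * H.card := by
  classical
  let H := A.filter fun x => 0 < toLex x
  have hcover : ∀ x ∈ A, x ∈ H ∨ -x ∈ H := by
    intro x hx
    rcases lt_trichotomy (toLex x) 0 with hlt | heq | hgt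
    · exact .inr (Finset.mem_filter.2 ⟨hneg x hx, neg_pos.2 hlt⟩)
    · exact absurd ((show x = 0 from heq) ▸ hx) h0
    · exact .inl (Finset.mem_filter.2 ⟨hx, hgt⟩)
  refine ⟨H, Finset.filter_subset _ _, hcover, fun x hx hnx => ?_, ?_⟩
  · exact lt_asymm (Finset.mem_filter.1 hx).2 (neg_pos.1 (Finset.mem_filter.1 hnx).2)
  · have hsub : A ⊆ H ∪ H.image (-·) := fun x hx =>
      Finset.mem_union.2 ((hcover x hx).imp_right fun h =>
        Finset.mem_image.2 ⟨-x, h, neg_neg x⟩)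
    have hle := (Finset.card_le_card hsub).trans (Finset.card_union_le _ _)
    have himage := Finset.card_image_le (s := H) (f := (-·))
    omega

namespace IsLeech

lemma exists_half_orthogonal (hB : IsLeech B) (hA : ∀ x ∈ A, pairZ B x x = 8)
    (hcongr : ∀ x ∈ A, ∀ y ∈ A, CongrModTwo x y) (hneg : ∀ x ∈ A, -x ∈ A) :
    ∃ H ⊆ A, (∀ x ∈ A, x ∈ H ∨ -x ∈ H) ∧ A.card ≤ 2 * H.card ∧ H.card ≤ 24 ∧
      (H : Set LV).Pairwise fun x y => pairZ B x y = 0 := by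
  have h0 : 0 ∉ A := fun h => by simpa [pairZ_zero_left] using hA 0 h
  obtain ⟨H, hHA, hcover, hanti, hcard⟩ := exists_half_of_neg_mem h0 hneg
  have ho : (H : Set LV).Pairwise fun x y => pairZ B x y = 0 := by
    intro x hx y hy hne
    have hle := (hcongr x (hHA hx) y (hHA hy)).sixteen_le hB hne fun h =>
      hanti y hy (h ▸ hx)
    rw [hA x (hHA hx), hA y (hHA hy)] at hle
    exact abs_eq_zero.1 (le_antisymm (by linarith) (abs_nonneg _))
  refine ⟨H, hHA, hcover, hcard, ?_, ho⟩
  rw [← Fintype.card_coe H]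
  exact hB.card_le_of_orthogonal (w := Subtype.val) (fun x h => h0 (h ▸ hHA x.2))
    fun x y hxy => ho x.2 y.2 (Subtype.coe_ne_coe.2 hxy)

lemma pairZ_self_mem_of_le_eight (hB : IsLeech B) (h : pairZ B x x ≤ 8) :
    pairZ B x x = 0 ∨ pairZ B x x = 4 ∨ pairZ B x x = 6 ∨ pairZ B x x = 8 := by
  rcases eq_or_ne x 0 with rfl | hx
  · exact .inl (pairZ_zero_left 0)
  · have hfour := hB.four_le_pairZ_self hx
    obtain ⟨r, hr⟩ := hB.even_pairZ_self x
    omega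

lemma eq_or_eq_neg_of_congr_of_lt_eight (hB : IsLeech B) (hx : pairZ B x x < 8)
    (hy : pairZ B y y ≤ 8) (h : CongrModTwo y x) : y = x ∨ y = -x := by
  by_contra! hne
  linarith [h.sixteen_le hB hne.1 hne.2, abs_nonneg (pairZ B y x)]

end IsLeech

lemma exists_isFrame_of_card_eq {H : Finset LV} (hcard : H.card = 24)
    (hnorm : ∀ x ∈ H, pairZ B x x = 8) (hcongr : ∀ x ∈ H, ∀ y ∈ H, CongrModTwo x y)
    (ho : (H : Set LV).Pairwise fun x y => pairZ B x y = 0) :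
    ∃ v, IsFrame B v ∧ ∀ x ∈ H, ∃ i, v i = x := by
  let e := H.equivFinOfCardEq hcard
  refine ⟨fun i => e.symm i, ⟨fun i => hnorm _ (e.symm i).2, fun i j hij => ?_,
    fun i j => hcongr _ (e.symm i).2 _ (e.symm j).2⟩, fun x hx => ⟨e ⟨x, hx⟩, by simp⟩⟩
  exact ho (e.symm i).2 (e.symm j).2 fun h => hij (e.symm.injective (Subtype.ext h))

/-- The weight `48 / c` of a vector of norm `n ≤ 8`, where `c` is the number of vectors of norm at
most `8` in its class modulo `2Λ` (`1` for the zero vector, `2` for norms `4` and `6`, and `48` for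
norm `8`). -/
def shortVectorWeight (n : ℤ) : ℕ := if n = 0 then 48 else if n = 8 then 1 else 24

lemma sum_shortVectorWeight_eq_card (hA : ∀ x ∈ A, pairZ B x x = 8) :
    ∑ x ∈ A, shortVectorWeight (pairZ B x x) = A.card := by
  rw [Finset.card_eq_sum_ones]
  exact Finset.sum_congr rfl fun x hx => by rw [hA x hx]; rfl

lemma IsLeech.sum_shortVectorWeight_le (hB : IsLeech B) (hA : ∀ x ∈ A, pairZ B x x ≤ 8)
    (hcongr : ∀ x ∈ A, ∀ y ∈ A, CongrModTwo x y) (hneg : ∀ x ∈ A, -x ∈ A) :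
    ∑ x ∈ A, shortVectorWeight (pairZ B x x) ≤ 48 := by
  classical
  by_cases hlt : ∃ x ∈ A, pairZ B x x < 8
  · obtain ⟨x, hx, hx8⟩ := hlt
    have hsub : A ⊆ {x, -x} := fun y hy => by
      simpa using hB.eq_or_eq_neg_of_congr_of_lt_eight hx8 (hA y hy) (hcongr y hy x hx)
    refine (Finset.sum_le_sum_of_subset hsub).trans ?_
    have hpair (hw : shortVectorWeight (pairZ B x x) = 24) :
        ∑ y ∈ {x, -x}, shortVectorWeight (pairZ B y y) ≤ 48 := by
      refine (Finset.sum_le_card_nsmul _ _ 24 fun y hy => ?_).trans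
        (Nat.mul_le_mul_right 24 Finset.card_le_two)
      rcases Finset.mem_insert.1 hy with rfl | hy
      · exact hw.le
      · rw [Finset.mem_singleton.1 hy, pairZ_neg_left, pairZ_neg_right, neg_neg, hw]
    rcases hB.pairZ_self_mem_of_le_eight hx8.le with h | h | h | h
    · obtain rfl := hB.pairZ_self_eq_zero h
      simp [pairZ_zero_left, shortVectorWeight]
    · exact hpair (by rw [h]; rfl)
    · exact hpair (by rw [h]; rfl)
    · omega
  · push Not at hlt
    have h8 : ∀ x ∈ A, pairZ B x x = 8 := fun x hx => le_antisymm (hA x hx) (hlt x hx)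
    obtain ⟨H, -, -, hcard, hle, -⟩ := hB.exists_half_orthogonal h8 hcongr hneg
    rw [sum_shortVectorWeight_eq_card h8]
    omega

/-- The finite set `U` consists of the vectors of norm at most `8`, and their total weight is the
one which forces every class modulo `2Λ` to contain as many of them as possible. -/
structure IsSaturatedShortSet (B : Matrix (Fin 24) (Fin 24) ℤ) (U : Finset LV) : Prop where
  mem_iff (x : LV) : x ∈ U ↔ pairZ B x x ≤ 8
  sum_weight : ∑ x ∈ U, shortVectorWeight (pairZ B x x) = 48 * 2 ^ 24

namespace IsSaturatedShortSet

variable {U : Finset LV}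

lemma neg_mem_class (hU : IsSaturatedShortSet B U) (c : Fin 24 → ZMod 2) :
    ∀ x ∈ U.filter (modTwo · = c), -x ∈ U.filter (modTwo · = c) := by
  intro x hx
  rw [Finset.mem_filter, hU.mem_iff] at hx ⊢
  rwa [pairZ_neg_left, pairZ_neg_right, neg_neg, modTwo_neg]

lemma congr_of_mem_class (c : Fin 24 → ZMod 2) :
    ∀ x ∈ U.filter (modTwo · = c), ∀ y ∈ U.filter (modTwo · = c), CongrModTwo x y :=
  fun _ hx _ hy =>
    modTwo_eq_iff.1 ((Finset.mem_filter.1 hx).2.trans (Finset.mem_filter.1 hy).2.symm)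

lemma sum_weight_class (hU : IsSaturatedShortSet B U) (hB : IsLeech B) (c : Fin 24 → ZMod 2) :
    ∑ x ∈ U.filter (modTwo · = c), shortVectorWeight (pairZ B x x) = 48 := by
  have hle (c : Fin 24 → ZMod 2) :
      ∑ x ∈ U.filter (modTwo · = c), shortVectorWeight (pairZ B x x) ≤ 48 :=
    hB.sum_shortVectorWeight_le (fun x hx => (hU.mem_iff x).1 (Finset.mem_filter.1 hx).1)
      (congr_of_mem_class c) (hU.neg_mem_class c)
  have htotal : ∑ c, ∑ x ∈ U.filter (modTwo · = c), shortVectorWeight (pairZ B x x) =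
      ∑ _c : Fin 24 → ZMod 2, 48 := by
    rw [Finset.sum_fiberwise, hU.sum_weight, Finset.sum_const, Finset.card_univ, Fintype.card_fun,
      ZMod.card, Fintype.card_fin, smul_eq_mul, mul_comm]
  exact (Finset.sum_eq_sum_iff_of_le fun c _ => hle c).1 htotal c (Finset.mem_univ c)

lemma exists_congr_le_eight (hU : IsSaturatedShortSet B U) (hB : IsLeech B) (x : LV) :
    ∃ y, CongrModTwo y x ∧ pairZ B y y ≤ 8 := by
  by_contra! hlong
  have hsum := hU.sum_weight_class hB (modTwo x)
  rw [Finset.filter_eq_empty_iff.2 fun y hy hyx =>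
    (hlong y (modTwo_eq_iff.1 hyx)).not_ge ((hU.mem_iff y).1 hy), Finset.sum_empty] at hsum
  norm_num at hsum

lemma hasFrames (hU : IsSaturatedShortSet B U) (hB : IsLeech B) : HasFrames B := by
  intro y hy
  have hsum := hU.sum_weight_class hB (modTwo y)
  have hcongr := congr_of_mem_class (U := U) (modTwo y)
  have hyA : y ∈ U.filter (modTwo · = modTwo y) :=
    Finset.mem_filter.2 ⟨(hU.mem_iff y).2 hy.le, rfl⟩
  have h8 : ∀ x ∈ U.filter (modTwo · = modTwo y), pairZ B x x = 8 := by
    intro x hx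
    have hx8 := (hU.mem_iff x).1 (Finset.mem_filter.1 hx).1
    by_contra hne
    rcases hB.eq_or_eq_neg_of_congr_of_lt_eight (lt_of_le_of_ne hx8 hne) hy.le
      (hcongr y hyA x hx) with rfl | rfl
    · exact hne hy
    · rw [pairZ_neg_left, pairZ_neg_right, neg_neg] at hy
      exact hne hy
  rw [sum_shortVectorWeight_eq_card h8] at hsum
  obtain ⟨H, hHA, hcover, hcard, hle, ho⟩ :=
    hB.exists_half_orthogonal h8 hcongr (hU.neg_mem_class _)
  obtain ⟨v, hv, hvH⟩ := exists_isFrame_of_card_eq (by omega) (fun x hx => h8 x (hHA hx))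
    (fun x hx y hy => hcongr x (hHA hx) y (hHA hy)) ho
  rcases hcover y hyA with hyH | hyH
  · exact ⟨v, hv, hvH y hyH⟩
  · obtain ⟨i, hi⟩ := hvH _ hyH
    exact ⟨_, hv.smul_of_sign fun _ => .inr rfl, i, by rw [hi, neg_one_smul, neg_neg]⟩

lemma conwayEquiv_of_norm_eq (hU : IsSaturatedShortSet B U) (hB : IsLeech B)
    (hex : ∃ z, pairZ B z z = 8) (hx : pairZ B x x ≤ 8) (hxy : pairZ B x x = pairZ B y y) :
    ConwayEquiv B x y := by
  have hF := hU.hasFrames hB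
  obtain ⟨z, hz⟩ := hex
  obtain ⟨v, hv, -⟩ := hF z hz
  rcases hB.pairZ_self_mem_of_le_eight hx with h | h | h | h <;> rw [h] at hxy
  · rw [hB.pairZ_self_eq_zero h, hB.pairZ_self_eq_zero hxy.symm]
    exact .refl 0
  · exact hv.conwayEquiv_of_norm_four hB hF h hxy.symm
  · exact hF.conwayEquiv_of_norm_six hB hz h hxy.symm
  · exact hF.conwayEquiv_of_norm_eight hB hxy.symm h

end IsSaturatedShortSet

end ClassesModTwo

/-! ### q-expansions -/

section QExpansion

open ModularForm ModularGroup Function.Periodic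

/-- `F` is given on the whole upper half-plane by the `q`-series with coefficients `p`. -/
def HasQExpansion (F : ℍ → ℂ) (p : PowerSeries ℂ) : Prop :=
  ∀ τ : ℍ, HasSum (fun m => p.coeff m • qParam 1 τ ^ m) (F τ)

lemma qParam_one_pow (τ : ℂ) (n : ℕ) : qParam 1 τ ^ n = eC (n * τ) := by
  rw [qParam, ← Complex.exp_nat_mul, eC]
  congr 1
  push_cast
  ring

variable {F G : ℍ → ℂ} {p r : PowerSeries ℂ} {k : ℤ}

lemma slash_S_eq_self_iff : F ∣[k] S = F ↔ ∀ τ : ℍ, F (S • τ) = (τ : ℂ) ^ k * F τ := by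
  rw [funext_iff]
  refine forall_congr' fun τ => ?_
  have hdenom : denom (S : GL (Fin 2) ℝ) τ = (τ : ℂ) := by
    erw [ModularGroup.denom_apply]
    simp [ModularGroup.S]
  rw [SL_slash_apply, hdenom, _root_.zpow_neg, ← div_eq_mul_inv,
    div_eq_iff (zpow_ne_zero k (UpperHalfPlane.ne_zero τ)), mul_comm]

namespace HasQExpansion

lemma summable_norm (h : HasQExpansion F p) (τ : ℍ) :
    Summable fun m => ‖p.coeff m‖ * ‖qParam 1 (τ : ℂ)‖ ^ m := by
  simpa [norm_smul] using (h τ).summable.norm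

lemma differentiableOn_tsum (h : HasQExpansion F p) (σ : ℍ) :
    DifferentiableOn ℂ (fun w : ℂ => ∑' m, p.coeff m * qParam 1 w ^ m) {w | σ.im < w.im} := by
  refine differentiableOn_tsum_of_summable_norm (h.summable_norm σ) (fun m => ?_)
    (isOpen_lt continuous_const Complex.continuous_im) fun m w hw => ?_
  · refine Differentiable.differentiableOn (.const_mul (.pow ?_ m) _)
    unfold qParam
    fun_prop
  · rw [norm_mul, norm_pow]
    gcongr
    rw [norm_qParam, norm_qParam, Real.exp_le_exp, div_one, div_one]
    have hle : σ.im ≤ w.im := le_of_lt hw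
    change -2 * π * w.im ≤ -2 * π * σ.im
    nlinarith [Real.pi_pos]

lemma mdifferentiable (h : HasQExpansion F p) : MDifferentiable 𝓘(ℂ) 𝓘(ℂ) F := by
  rw [UpperHalfPlane.mdifferentiable_iff]
  intro z (hz : 0 < z.im)
  let σ : ℍ := ⟨Complex.I * (z.im / 2 : ℝ), by simpa using hz⟩
  have hσ : σ.im = z.im / 2 := by simp [σ, ← UpperHalfPlane.coe_im]
  have hnhds : {w : ℂ | σ.im < w.im} ∈ 𝓝 z :=
    (isOpen_lt continuous_const Complex.continuous_im).mem_nhds (by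
      change σ.im < z.im
      linarith)
  refine (((h.differentiableOn_tsum σ).differentiableAt hnhds).congr_of_eventuallyEq
    ?_).differentiableWithinAt
  filter_upwards [hnhds] with w hw
  have hw0 : 0 < w.im := σ.im_pos.trans hw
  simp only [Function.comp, UpperHalfPlane.ofComplex_apply_of_im_pos hw0]
  simpa using (h ⟨w, hw0⟩).tsum_eq.symm

lemma slash_T (h : HasQExpansion F p) (k : ℤ) : F ∣[k] T = F := by
  ext τ
  have hdenom : denom (T : GL (Fin 2) ℝ) τ = 1 := by
    erw [ModularGroup.denom_apply]
    simp [ModularGroup.T]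
  have hq : qParam 1 ((T • τ : ℍ) : ℂ) = qParam 1 (τ : ℂ) := by
    rw [UpperHalfPlane.modular_T_smul, UpperHalfPlane.coe_vadd, qParam, qParam,
      Complex.exp_eq_exp_iff_exists_int]
    exact ⟨1, by push_cast; ring⟩
  have hT := h (T • τ)
  rw [hq] at hT
  rw [SL_slash_apply, hdenom, _root_.one_zpow, mul_one]
  exact hT.unique (h τ)

/-- The modular form of level one given by a `q`-series with the right behaviour under `S`. -/
def toModularForm (h : HasQExpansion F p) (hS : F ∣[k] S = F) : ModularForm 𝒮ℒ k where
  toFun := F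
  slash_action_eq' := fun _ ⟨γ, hγ⟩ =>
    hγ ▸ SlashInvariantForm.slash_action_generators_SL2Z hS (h.slash_T k) γ
  holo' := h.mdifferentiable
  bdd_at_cusps' {c} hc := by
    rw [Subgroup.IsArithmetic.isCusp_iff_isCusp_SL2Z] at hc
    rw [OnePoint.isBoundedAt_iff_forall_SL2Z hc]
    intro γ _
    rw [SlashInvariantForm.slash_action_generators_SL2Z hS (h.slash_T k) γ]
    exact isBoundedAtImInfty_of_hasSum_qExpansion one_pos h

lemma of_modularForm (f : ModularForm 𝒮ℒ k) : HasQExpansion f (qExpansion 1 f) :=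
  fun τ => UpperHalfPlane.hasSum_qExpansion one_pos
    (SlashInvariantFormClass.periodic_comp_ofComplex f one_mem_strictPeriods_SL)
    (ModularFormClass.holo f) (ModularFormClass.bdd_at_infty f) τ

lemma qExpansion_eq {f : ModularForm 𝒮ℒ k} (h : HasQExpansion f p) : qExpansion 1 f = p := by
  ext m
  exact (ModularFormClass.qExpansion_coeff_unique one_pos one_mem_strictPeriods_SL h m).symm

lemma unique (h : HasQExpansion F p) (h' : HasQExpansion F r) (hS : F ∣[k] S = F) : p = r := by
  rw [← qExpansion_eq (f := h.toModularForm hS) h, qExpansion_eq (f := h.toModularForm hS) h']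

lemma const (c : ℂ) : HasQExpansion (fun _ => c) (PowerSeries.C c) := by
  intro τ
  convert hasSum_ite_eq 0 c using 2 with m
  by_cases hm : m = 0 <;> simp [hm, PowerSeries.coeff_C]

lemma eq_zero_of_weight_neg (h : HasQExpansion F p) (hS : F ∣[k] S = F) (hk : k < 0) : p = 0 := by
  rw [← qExpansion_eq (f := h.toModularForm hS) h,
    ModularFormClass.levelOne_neg_weight_eq_zero hk (h.toModularForm hS), qExpansion_zero]

lemma eq_C_of_weight_zero (h : HasQExpansion F p) (hS : F ∣[(0 : ℤ)] S = F) :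
    ∃ c, p = PowerSeries.C c := by
  obtain ⟨c, hc⟩ := ModularFormClass.levelOne_weight_zero_const (h.toModularForm hS)
  have hF : F = fun _ => c := hc
  exact ⟨c, h.unique (hF ▸ const c) hS⟩

lemma eq_zero_of_weight_two (h : HasQExpansion F p) (hS : F ∣[(2 : ℤ)] S = F) : p = 0 := by
  rw [← qExpansion_eq (f := h.toModularForm hS) h,
    rank_zero_iff_forall_zero.mp levelOne_weight_two_rank_zero (h.toModularForm hS),
    FunLike.coe_zero, qExpansion_zero]

lemma coeff_eq_zero (h : HasQExpansion F p) (hS : F ∣[k] S = F) {n : ℕ}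
    (hk : k < 0 ∨ k = 0 ∧ n ≠ 0 ∨ k = 2) : p.coeff n = 0 := by
  rcases hk with hk | ⟨rfl, hn⟩ | rfl
  · rw [h.eq_zero_of_weight_neg hS hk, map_zero]
  · obtain ⟨c, rfl⟩ := h.eq_C_of_weight_zero hS
    rw [PowerSeries.coeff_C, if_neg hn]
  · rw [h.eq_zero_of_weight_two hS, map_zero]

lemma mul (hF : HasQExpansion F p) (hG : HasQExpansion G r) :
    HasQExpansion (fun τ => F τ * G τ) (p * r) := by
  intro τ
  have hsum := (summable_norm_sum_mul_antidiagonal_of_summable_norm (hF τ).summable.norm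
    (hG τ).summable.norm).of_norm.hasSum
  rw [← tsum_mul_tsum_eq_tsum_sum_antidiagonal_of_summable_norm (hF τ).summable.norm
    (hG τ).summable.norm, (hF τ).tsum_eq, (hG τ).tsum_eq] at hsum
  refine hsum.congr_fun fun m => ?_
  rw [PowerSeries.coeff_mul, Finset.sum_smul]
  refine Finset.sum_congr rfl fun x hx => ?_
  rw [← Finset.HasAntidiagonal.mem_antidiagonal.1 hx, pow_add]
  simp only [smul_eq_mul]
  ring

lemma add (hF : HasQExpansion F p) (hG : HasQExpansion G r) :
    HasQExpansion (fun τ => F τ + G τ) (p + r) := by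
  intro τ
  simpa [add_mul] using (hF τ).add (hG τ)

lemma const_mul (c : ℂ) (hF : HasQExpansion F p) : HasQExpansion (fun τ => c * F τ) (c • p) := by
  intro τ
  simpa [mul_assoc] using (hF τ).mul_left c

lemma pow (hF : HasQExpansion F p) (n : ℕ) : HasQExpansion (fun τ => F τ ^ n) (p ^ n) := by
  induction n with
  | zero => simpa using const 1
  | succ n ih => simpa [pow_succ] using ih.mul hF

lemma sum {ι : Type*} (s : Finset ι) {F : ι → ℍ → ℂ} {p : ι → PowerSeries ℂ}
    (h : ∀ i ∈ s, HasQExpansion (F i) (p i)) :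
    HasQExpansion (fun τ => ∑ i ∈ s, F i τ) (∑ i ∈ s, p i) := by
  intro τ
  simpa [Finset.sum_mul] using hasSum_sum fun i hi => h i hi τ

end HasQExpansion

end QExpansion

/-! ### The theta series of the lattice -/

section ProductsOfSums

theorem summable_norm_prod_and_tsum_prod {α : Type*} {n : ℕ} (f : Fin n → α → ℂ)
    (hf : ∀ i, Summable fun a => ‖f i a‖) :
    (Summable fun a : Fin n → α => ‖∏ i, f i (a i)‖) ∧
      ∑' a : Fin n → α, ∏ i, f i (a i) = ∏ i, ∑' a, f i a := by
  induction n with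
  | zero =>
    refine ⟨(hasSum_fintype _).summable, ?_⟩
    rw [tsum_fintype]
    simp
  | succ n ih =>
    obtain ⟨htail, htail_eq⟩ := ih (fun i => f i.succ) fun i => hf _
    let cons := Fin.consEquiv fun _ : Fin (n + 1) => α
    have hcons (p : α × (Fin n → α)) :
        ∏ i, f i (cons p i) = f 0 p.1 * ∏ i, f i.succ (p.2 i) := by
      rw [Fin.prod_univ_succ]
      simp [cons, Fin.consEquiv]
    constructor
    · rw [← cons.summable_iff]
      refine (summable_mul_of_summable_norm (hf 0) htail).norm.congr fun p => ?_
      rw [← hcons, Function.comp]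
    · rw [← cons.tsum_eq, Fin.prod_univ_succ, ← htail_eq,
        tsum_mul_tsum_of_summable_norm (hf 0) htail]
      exact tsum_congr hcons

lemma summable_norm_prod {α : Type*} {n : ℕ} {f : Fin n → α → ℂ}
    (hf : ∀ i, Summable fun a => ‖f i a‖) : Summable fun a : Fin n → α => ‖∏ i, f i (a i)‖ :=
  (summable_norm_prod_and_tsum_prod f hf).1

lemma tsum_prod_eq_prod_tsum {α : Type*} {n : ℕ} {f : Fin n → α → ℂ}
    (hf : ∀ i, Summable fun a => ‖f i a‖) :
    ∑' a : Fin n → α, ∏ i, f i (a i) = ∏ i, ∑' a, f i a :=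
  (summable_norm_prod_and_tsum_prod f hf).2

end ProductsOfSums

section ExponentialCharacter

lemma eC_zero : eC 0 = 1 := by rw [eC, mul_zero, Complex.exp_zero]

lemma eC_add (x y : ℂ) : eC (x + y) = eC x * eC y := by
  rw [eC, eC, eC, mul_add, Complex.exp_add]

lemma eC_sum {ι : Type*} (s : Finset ι) (x : ι → ℂ) : eC (∑ i ∈ s, x i) = ∏ i ∈ s, eC (x i) := by
  simp only [eC, Finset.mul_sum, Complex.exp_sum]

lemma eC_eq_one_iff {x : ℂ} : eC x = 1 ↔ ∃ n : ℤ, x = n := by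
  rw [eC, Complex.exp_eq_one_iff]
  refine exists_congr fun n => ?_
  rw [mul_comm (n : ℂ), mul_right_inj' Complex.two_pi_I_ne_zero]

lemma eC_intCast (n : ℤ) : eC n = 1 := eC_eq_one_iff.2 ⟨n, rfl⟩

lemma norm_eC_ofReal (x : ℝ) : ‖eC x‖ = 1 := by
  rw [eC, show 2 * (π : ℂ) * Complex.I * x = ((2 * π * x : ℝ) : ℂ) * Complex.I by push_cast; ring]
  exact Complex.norm_exp_ofReal_mul_I _

end ExponentialCharacter

section OrthogonalSublattice

variable {B : Matrix (Fin 24) (Fin 24) ℤ} {w : Fin 24 → LV}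

lemma IsLeech.exists_orthogonal_family (hB : IsLeech B) (m : ℕ) (hm : m ≤ 24) :
    ∃ w : Fin m → LV, (∀ i, w i ≠ 0) ∧ Pairwise fun i j => pairZ B (w i) (w j) = 0 := by
  induction m with
  | zero => exact ⟨fun i => i.elim0, fun i => i.elim0, fun i => i.elim0⟩
  | succ m ih =>
    obtain ⟨w, hne, ho⟩ := ih (by lia)
    have hker : LinearMap.ker (LinearMap.pi fun i => pairZRight B (w i)) ≠ ⊥ := fun h => by
      have := LinearMap.finrank_le_finrank_of_injective (LinearMap.ker_eq_bot.1 h)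
      simp only [Module.finrank_fin_fun] at this
      lia
    obtain ⟨x, hx, hx0⟩ := Submodule.exists_mem_ne_zero_of_ne_bot hker
    have hxw (i : Fin m) : pairZ B x (w i) = 0 := congrFun (LinearMap.mem_ker.1 hx) i
    refine ⟨Fin.snoc w x, fun i => ?_, fun i j => ?_⟩
    · refine Fin.lastCases (by simpa using hx0) (fun i => by simpa using hne i) i
    · refine Fin.lastCases ?_ (fun i => ?_) i <;> refine Fin.lastCases ?_ (fun j => ?_) j
      · exact fun h => absurd rfl h
      · exact fun _ => by simpa using hxw j
      · exact fun _ => by simpa [hB.pairZ_comm (w _) x] using hxw i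
      · exact fun h => by simpa using ho fun e => h (congrArg _ e)

lemma IsLeech.exists_isOrthogonalBasis (hB : IsLeech B) : ∃ w, IsOrthogonalBasis B w :=
  let ⟨w, hne, ho⟩ := hB.exists_orthogonal_family 24 le_rfl
  ⟨w, fun i => hB.pairZ_self_pos (hne i), ho⟩

/-- The sublattice spanned by a family of vectors. -/
def spanLattice (w : Fin 24 → LV) : AddSubgroup LV := (Submodule.span ℤ (Set.range w)).toAddSubgroup

lemma mem_spanLattice {x : LV} : x ∈ spanLattice w ↔ ∃ n : Fin 24 → ℤ, ∑ i, n i • w i = x :=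
  Submodule.mem_span_range_iff_exists_fun ℤ

namespace IsOrthogonalBasis

lemma finite_quotient (hw : IsOrthogonalBasis B w) (hB : IsLeech B) :
    Finite (LV ⧸ spanLattice w) := by
  have hP : ∏ i, pairZ B (w i) (w i) ≠ 0 := Finset.prod_ne_zero_iff.2 fun i _ => (hw.pos i).ne'
  have : Module.Finite ℤ (LV ⧸ spanLattice w) :=
    Module.Finite.of_surjective (QuotientAddGroup.mk' (spanLattice w)).toIntLinearMap
      (QuotientAddGroup.mk'_surjective _)
  refine Module.finite_of_fg_torsion _ ?_
  rintro ⟨x⟩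
  refine ⟨⟨_, mem_nonZeroDivisors_of_ne_zero hP⟩, (QuotientAddGroup.eq_zero_iff _).2 ?_⟩
  exact mem_spanLattice.2 ⟨_, (hw.prod_smul_eq_sum hB x).symm⟩

lemma bijective_out_add_sum (hw : IsOrthogonalBasis B w) :
    Function.Bijective fun p : (LV ⧸ spanLattice w) × (Fin 24 → ℤ) =>
      p.1.out + ∑ i, p.2 i • w i := by
  have hmk (a : LV ⧸ spanLattice w) (n : Fin 24 → ℤ) :
      (QuotientAddGroup.mk (a.out + ∑ i, n i • w i) : LV ⧸ spanLattice w) = a := by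
    rw [QuotientAddGroup.mk_add, (QuotientAddGroup.eq_zero_iff _).2 (mem_spanLattice.2 ⟨n, rfl⟩),
      add_zero]
    exact Quotient.out_eq' a
  constructor
  · rintro ⟨a, n⟩ ⟨b, m⟩ (h : a.out + ∑ i, n i • w i = b.out + ∑ i, m i • w i)
    obtain rfl : a = b := by rw [← hmk a n, h, hmk b m]
    refine Prod.ext rfl (funext fun i => mul_right_cancel₀ (hw.pos i).ne' ?_)
    rw [← hw.pairZ_sum_smul, add_left_cancel h, hw.pairZ_sum_smul]
  · intro x
    obtain ⟨n, hn⟩ := mem_spanLattice.1 (QuotientAddGroup.eq.1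
      (QuotientAddGroup.out_eq' (x : LV ⧸ spanLattice w)))
    exact ⟨⟨x, n⟩, by simp only [hn, add_neg_cancel_left]⟩

end IsOrthogonalBasis

/-- The character of the lattice attached to the element `∑ kᵢ wᵢ / (wᵢ, wᵢ)` of the dual of the
sublattice spanned by `w`. -/
def dualChar (B : Matrix (Fin 24) (Fin 24) ℤ) (w : Fin 24 → LV) (k : Fin 24 → ℤ) :
    AddChar LV ℂ where
  toFun x := eC (∑ i, (k i : ℂ) * pairZ B x (w i) / pairZ B (w i) (w i))
  map_zero_eq_one' := by simp [pairZ_zero_left, eC_zero]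
  map_add_eq_mul' x y := by
    rw [← eC_add, ← Finset.sum_add_distrib]
    refine congrArg eC (Finset.sum_congr rfl fun i _ => ?_)
    rw [pairZ_add_left]
    push_cast
    ring

lemma dualChar_apply (k : Fin 24 → ℤ) (x : LV) :
    dualChar B w k x = eC (∑ i, (k i : ℂ) * pairZ B x (w i) / pairZ B (w i) (w i)) := rfl

lemma norm_dualChar (k : Fin 24 → ℤ) (x : LV) : ‖dualChar B w k x‖ = 1 := by
  rw [dualChar_apply, ← norm_eC_ofReal (∑ i, (k i : ℝ) * pairZ B x (w i) / pairZ B (w i) (w i))]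
  push_cast
  rfl

namespace IsOrthogonalBasis

lemma dualChar_eq_one_of_mem (hw : IsOrthogonalBasis B w) (k : Fin 24 → ℤ) {x : LV}
    (hx : x ∈ spanLattice w) : dualChar B w k x = 1 := by
  obtain ⟨n, rfl⟩ := mem_spanLattice.1 hx
  rw [dualChar_apply, ← eC_intCast (∑ i, k i * n i)]
  push_cast
  refine congrArg eC (Finset.sum_congr rfl fun i _ => ?_)
  have hi : (pairZ B (w i) (w i) : ℂ) ≠ 0 := Int.cast_ne_zero.2 (hw.pos i).ne'
  rw [hw.pairZ_sum_smul]
  push_cast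
  field_simp

/-- The character `dualChar B w k`, viewed on the quotient by the sublattice spanned by `w`. -/
def quotientChar (hw : IsOrthogonalBasis B w) (k : Fin 24 → ℤ) :
    AddChar (LV ⧸ spanLattice w) ℂ :=
  AddChar.toAddMonoidHomEquiv.symm <|
    QuotientAddGroup.lift _ (dualChar B w k).toAddMonoidHom fun _ hx =>
      hw.dualChar_eq_one_of_mem k hx

lemma quotientChar_mk (hw : IsOrthogonalBasis B w) (k : Fin 24 → ℤ) (x : LV) :
    hw.quotientChar k (x : LV ⧸ spanLattice w) = dualChar B w k x := rfl

lemma quotientChar_apply (hw : IsOrthogonalBasis B w) (k : Fin 24 → ℤ)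
    (a : LV ⧸ spanLattice w) : hw.quotientChar k a = dualChar B w k a.out := by
  rw [← hw.quotientChar_mk, QuotientAddGroup.out_eq']

lemma pairZ_eq_of_dualChar (hw : IsOrthogonalBasis B w) {k : Fin 24 → ℤ} {n : LV → ℤ}
    (hn : ∀ x, ∑ i, (k i : ℂ) * pairZ B x (w i) / pairZ B (w i) (w i) = n x) (i : Fin 24) :
    n (w i) = k i := by
  have hi : (pairZ B (w i) (w i) : ℂ) ≠ 0 := Int.cast_ne_zero.2 (hw.pos i).ne'
  have h := hn (w i)
  rw [Finset.sum_eq_single i (fun j _ hj => by rw [hw.orthogonal hj.symm]; simp) (by simp),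
    mul_div_assoc, div_self hi, mul_one] at h
  exact_mod_cast h.symm

/-- Unimodularity enters here: an integral functional is pairing with a lattice vector. -/
lemma quotientChar_eq_zero_iff (hw : IsOrthogonalBasis B w) (hB : IsLeech B) (k : Fin 24 → ℤ) :
    hw.quotientChar k = 0 ↔ ∃ u, ∀ i, pairZ B u (w i) = k i := by
  constructor
  · intro h
    have hval (x : LV) : ∃ n : ℤ, ∑ i, (k i : ℂ) * pairZ B x (w i) / pairZ B (w i) (w i) = n := by
      rw [← eC_eq_one_iff, ← dualChar_apply, ← hw.quotientChar_mk, h, AddChar.zero_apply]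
    choose n hn using hval
    have hadd (x y : LV) : n (x + y) = n x + n y := by
      rw [← Int.cast_inj (α := ℂ), Int.cast_add, ← hn, ← hn, ← hn, ← Finset.sum_add_distrib]
      refine Finset.sum_congr rfl fun i _ => ?_
      rw [pairZ_add_left]
      push_cast
      ring
    obtain ⟨u, hu⟩ := hB.exists_forall_pairZ_eq (AddMonoidHom.mk' n hadd).toIntLinearMap
    exact ⟨u, fun i => (hB.pairZ_comm _ _).trans ((hu (w i)).trans (hw.pairZ_eq_of_dualChar hn i))⟩
  · rintro ⟨u, hu⟩
    refine DFunLike.ext _ _ fun a => ?_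
    rw [hw.quotientChar_apply, AddChar.zero_apply, dualChar_apply]
    simp only [← hu, ← hw.parseval hB ℂ, eC_intCast]

open Classical in
lemma sum_dualChar_out (hw : IsOrthogonalBasis B w) (hB : IsLeech B)
    [Fintype (LV ⧸ spanLattice w)] (k : Fin 24 → ℤ) :
    ∑ a : LV ⧸ spanLattice w, dualChar B w k a.out =
      if ∃ u, ∀ i, pairZ B u (w i) = k i then (Fintype.card (LV ⧸ spanLattice w) : ℂ) else 0 := by
  simp only [← hw.quotientChar_apply, AddChar.sum_eq_ite, hw.quotientChar_eq_zero_iff hB]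

end IsOrthogonalBasis

end OrthogonalSublattice

section ThetaTransformation

variable {B : Matrix (Fin 24) (Fin 24) ℤ} {w : Fin 24 → LV} {τ : ℂ}

/-- The summand `exp(πi (u, u) τ)` of the theta series. -/
def thetaTerm (B : Matrix (Fin 24) (Fin 24) ℤ) (u : LV) (τ : ℂ) : ℂ :=
  cexp (π * Complex.I * pairZ B u u * τ)

/-- The theta series of the lattice with Gram matrix `B`. -/
def thetaSeries (B : Matrix (Fin 24) (Fin 24) ℤ) (τ : ℂ) : ℂ := ∑' u : LV, thetaTerm B u τ

lemma im_neg_one_div_pos (hτ : 0 < τ.im) : 0 < (-1 / τ).im := by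
  simpa [neg_div, inv_neg] using UpperHalfPlane.im_inv_neg_coe_pos ⟨τ, hτ⟩

lemma im_div_intCast_pos (hτ : 0 < τ.im) {m : ℤ} (hm : 0 < m) : 0 < (τ / m).im := by
  rw [← Complex.ofReal_intCast, Complex.div_ofReal_im]
  exact div_pos hτ (by exact_mod_cast hm)

lemma jacobiTheta₂_term_zero_right_mul (k : ℤ) (z τ : ℂ) :
    jacobiTheta₂_term k z τ = eC (k * z) * jacobiTheta₂_term k 0 τ := by
  rw [jacobiTheta₂_term, jacobiTheta₂_term, eC, ← Complex.exp_add]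
  congr 1
  ring

/-- Completing the square in the summands of a theta series over the coset `c + mℤ`. -/
lemma jacobiTheta₂_term_coset (hτ : 0 < τ.im) {m : ℤ} (hm : 0 < m) (c n : ℤ) :
    jacobiTheta₂_term (c + n * m) 0 (-1 / τ / m) =
      cexp (-π * Complex.I * (c / m) ^ 2 / (τ / m)) *
        jacobiTheta₂_term (-n) ((c / m) / (τ / m)) (-1 / (τ / m)) := by
  have hτ0 : τ ≠ 0 := by
    rintro rfl
    simp at hτ
  have hm0 : (m : ℂ) ≠ 0 := Int.cast_ne_zero.2 hm.ne'
  rw [jacobiTheta₂_term, jacobiTheta₂_term, ← Complex.exp_add]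
  congr 1
  push_cast
  field_simp
  ring

lemma summable_jacobiTheta₂_term_coset (hτ : 0 < τ.im) {m : ℤ} (hm : 0 < m) (c : ℤ) :
    Summable fun n : ℤ => ‖jacobiTheta₂_term (c + n * m) 0 (-1 / τ / m)‖ := by
  simp_rw [jacobiTheta₂_term_coset hτ hm, norm_mul]
  have him := im_neg_one_div_pos (im_div_intCast_pos hτ hm)
  exact .mul_left _ ((Equiv.neg ℤ).summable_iff.2 ((summable_jacobiTheta₂_term_iff _ _).2 him).norm)

lemma tsum_jacobiTheta₂_term_coset (hτ : 0 < τ.im) {m : ℤ} (hm : 0 < m) (c : ℤ) :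
    ∑' n : ℤ, jacobiTheta₂_term (c + n * m) 0 (-1 / τ / m) =
      (-Complex.I * (τ / m)) ^ (1 / 2 : ℂ) * jacobiTheta₂ (c / m) (τ / m) := by
  have hne : (-Complex.I * (τ / m)) ^ (1 / 2 : ℂ) ≠ 0 := by
    rw [Complex.cpow_ne_zero_iff_of_exponent_ne_zero (by norm_num)]
    refine mul_ne_zero (neg_ne_zero.2 Complex.I_ne_zero) fun h => ?_
    simpa [h] using im_div_intCast_pos hτ hm
  simp_rw [jacobiTheta₂_term_coset hτ hm]
  rw [tsum_mul_left, jacobiTheta₂_functional_equation (c / m) (τ / m), jacobiTheta₂,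
    tsum_comp_neg fun n => jacobiTheta₂_term n ((c / m) / (τ / m)) (-1 / (τ / m)),
    ← mul_assoc, ← mul_assoc, mul_one_div_cancel hne, one_mul]

namespace IsOrthogonalBasis

lemma thetaTerm_eq_prod (hw : IsOrthogonalBasis B w) (hB : IsLeech B) (u : LV) (τ : ℂ) :
    thetaTerm B u τ = ∏ i, jacobiTheta₂_term (pairZ B u (w i)) 0 (τ / pairZ B (w i) (w i)) := by
  simp only [jacobiTheta₂_term, ← Complex.exp_sum]
  rw [thetaTerm, hw.parseval hB ℂ u u, Finset.mul_sum, Finset.sum_mul]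
  refine congrArg cexp (Finset.sum_congr rfl fun i _ => ?_)
  ring

lemma pairing_injective (hw : IsOrthogonalBasis B w) (hB : IsLeech B) :
    Function.Injective fun (u : LV) (i : Fin 24) => pairZ B u (w i) :=
  fun _ _ h => hw.ext hB (congrFun h)

lemma summable_norm_prod_jacobiTheta₂_term (hw : IsOrthogonalBasis B w) (hτ : 0 < τ.im) :
    Summable fun k : Fin 24 → ℤ =>
      ‖∏ i, jacobiTheta₂_term (k i) 0 (τ / pairZ B (w i) (w i))‖ :=
  summable_norm_prod (f := fun i k => jacobiTheta₂_term k 0 (τ / pairZ B (w i) (w i))) fun i =>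
    ((summable_jacobiTheta₂_term_iff _ _).2 (im_div_intCast_pos hτ (hw.pos i))).norm

end IsOrthogonalBasis

lemma IsLeech.summable_norm_thetaTerm (hB : IsLeech B) (hτ : 0 < τ.im) :
    Summable fun u => ‖thetaTerm B u τ‖ := by
  obtain ⟨w, hw⟩ := hB.exists_isOrthogonalBasis
  simp only [hw.thetaTerm_eq_prod hB]
  exact (hw.summable_norm_prod_jacobiTheta₂_term hτ).comp_injective (hw.pairing_injective hB)

namespace IsOrthogonalBasis

/-- One-dimensional theta inversion in each coordinate; the position of the coset only shows in
the character. -/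
lemma tsum_thetaTerm_coset (hw : IsOrthogonalBasis B w) (hB : IsLeech B) (hτ : 0 < τ.im)
    (x : LV) : ∑' n : Fin 24 → ℤ, thetaTerm B (x + ∑ i, n i • w i) (-1 / τ) =
      (∏ i, (-Complex.I * (τ / pairZ B (w i) (w i))) ^ (1 / 2 : ℂ)) *
        ∑' k : Fin 24 → ℤ, dualChar B w k x *
          ∏ i, jacobiTheta₂_term (k i) 0 (τ / pairZ B (w i) (w i)) := by
  have hdual (k : Fin 24 → ℤ) : dualChar B w k x *
      ∏ i, jacobiTheta₂_term (k i) 0 (τ / pairZ B (w i) (w i)) =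
        ∏ i, jacobiTheta₂_term (k i) (pairZ B x (w i) / pairZ B (w i) (w i))
          (τ / pairZ B (w i) (w i)) := by
    rw [dualChar_apply, eC_sum, ← Finset.prod_mul_distrib]
    refine Finset.prod_congr rfl fun i _ => ?_
    rw [jacobiTheta₂_term_zero_right_mul _ (_ / _), mul_div_assoc]
  simp only [hdual, hw.thetaTerm_eq_prod hB, pairZ_add_left, hw.pairZ_sum_smul]
  rw [tsum_prod_eq_prod_tsum (f := fun i n => jacobiTheta₂_term
      (pairZ B x (w i) + n * pairZ B (w i) (w i)) 0 (-1 / τ / pairZ B (w i) (w i)))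
      fun i => summable_jacobiTheta₂_term_coset hτ (hw.pos i) _,
    tsum_prod_eq_prod_tsum (f := fun i k => jacobiTheta₂_term k
      (pairZ B x (w i) / pairZ B (w i) (w i)) (τ / pairZ B (w i) (w i)))
      fun i => ((summable_jacobiTheta₂_term_iff _ _).2 (im_div_intCast_pos hτ (hw.pos i))).norm,
    ← Finset.prod_mul_distrib]
  exact Finset.prod_congr rfl fun i _ => tsum_jacobiTheta₂_term_coset hτ (hw.pos i) _

lemma thetaSeries_eq_sum_coset (hw : IsOrthogonalBasis B w) (hB : IsLeech B)
    [Fintype (LV ⧸ spanLattice w)] (hτ : 0 < τ.im) :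
    thetaSeries B τ =
      ∑ a : LV ⧸ spanLattice w, ∑' n : Fin 24 → ℤ, thetaTerm B (a.out + ∑ i, n i • w i) τ := by
  let e := Equiv.ofBijective _ hw.bijective_out_add_sum
  rw [thetaSeries, ← e.tsum_eq, Summable.tsum_prod, tsum_fintype]
  · rfl
  · exact e.summable_iff.2 (hB.summable_norm_thetaTerm hτ).of_norm

lemma tsum_sum_dualChar_mul (hw : IsOrthogonalBasis B w) (hB : IsLeech B)
    [Fintype (LV ⧸ spanLattice w)] (τ : ℂ) :
    ∑' k : Fin 24 → ℤ, (∑ a : LV ⧸ spanLattice w, dualChar B w k a.out) *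
      ∏ i, jacobiTheta₂_term (k i) 0 (τ / pairZ B (w i) (w i)) =
        Fintype.card (LV ⧸ spanLattice w) * thetaSeries B τ := by
  simp only [hw.sum_dualChar_out hB]
  rw [← (hw.pairing_injective hB).tsum_eq fun k hk => ?_, thetaSeries, ← tsum_mul_left]
  · refine tsum_congr fun u => ?_
    rw [if_pos ⟨u, fun i => rfl⟩, hw.thetaTerm_eq_prod hB]
  · by_contra hrange
    refine hk ?_
    simp only
    rw [if_neg fun ⟨u, hu⟩ => hrange ⟨u, funext hu⟩, zero_mul]

lemma thetaSeries_neg_one_div (hw : IsOrthogonalBasis B w) (hB : IsLeech B) (hτ : 0 < τ.im) :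
    thetaSeries B (-1 / τ) = (∏ i, (-Complex.I * (τ / pairZ B (w i) (w i))) ^ (1 / 2 : ℂ)) *
      (Nat.card (LV ⧸ spanLattice w) * thetaSeries B τ) := by
  have := hw.finite_quotient hB
  have := Fintype.ofFinite (LV ⧸ spanLattice w)
  have hsummable (a : LV ⧸ spanLattice w) : Summable fun k : Fin 24 → ℤ => dualChar B w k a.out *
      ∏ i, jacobiTheta₂_term (k i) 0 (τ / pairZ B (w i) (w i)) :=
    .of_norm <| (hw.summable_norm_prod_jacobiTheta₂_term hτ).congr fun k => by
      rw [norm_mul, norm_dualChar, one_mul]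
  rw [hw.thetaSeries_eq_sum_coset hB (im_neg_one_div_pos hτ),
    Finset.sum_congr rfl fun a _ => hw.tsum_thetaTerm_coset hB hτ a.out, ← Finset.mul_sum,
    ← Summable.tsum_finsetSum fun a _ => hsummable a, Nat.card_eq_fintype_card,
    ← hw.tsum_sum_dualChar_mul hB]
  simp only [Finset.sum_mul]

end IsOrthogonalBasis

lemma exists_forall_div_cpow_eq (s : ℂ) {d : ℝ} (hd : 0 < d) :
    ∃ c : ℂ, ∀ x : ℂ, x ≠ 0 → (x / d) ^ s = c * x ^ s := by
  refine ⟨cexp (Real.log d⁻¹ * s), fun x hx => ?_⟩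
  have hd' : (d : ℂ) ≠ 0 := Complex.ofReal_ne_zero.2 hd.ne'
  rw [Complex.cpow_def_of_ne_zero (div_ne_zero hx hd'), Complex.cpow_def_of_ne_zero hx,
    ← Complex.exp_add, div_eq_inv_mul, ← Complex.ofReal_inv,
    Complex.log_ofReal_mul (inv_pos.2 hd) hx, add_mul]

lemma thetaTerm_I (u : LV) :
    thetaTerm B u Complex.I = ((Real.exp (-π * pairZ B u u) : ℝ) : ℂ) := by
  rw [thetaTerm, Complex.ofReal_exp]
  congr 1
  push_cast
  linear_combination (π * (pairZ B u u : ℂ)) * Complex.I_mul_I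

namespace IsLeech

lemma exists_thetaSeries_neg_one_div_eq (hB : IsLeech B) : ∃ κ : ℂ, ∀ τ : ℂ, 0 < τ.im →
    thetaSeries B (-1 / τ) = κ * (τ ^ 12 * thetaSeries B τ) := by
  obtain ⟨w, hw⟩ := hB.exists_isOrthogonalBasis
  choose c hc using fun i => exists_forall_div_cpow_eq (1 / 2)
    (Int.cast_pos (R := ℝ).2 (hw.pos i))
  refine ⟨(∏ i, c i) * Nat.card (LV ⧸ spanLattice w), fun τ hτ => ?_⟩
  have hne : -Complex.I * τ ≠ 0 := by
    refine mul_ne_zero (neg_ne_zero.2 Complex.I_ne_zero) ?_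
    rintro rfl
    simp at hτ
  have hfactor (i : Fin 24) : (-Complex.I * (τ / pairZ B (w i) (w i))) ^ (1 / 2 : ℂ) =
      c i * (-Complex.I * τ) ^ (1 / 2 : ℂ) := by
    rw [← hc i _ hne, Complex.ofReal_intCast, mul_div_assoc]
  have hpow : ∏ _i : Fin 24, (-Complex.I * τ) ^ (1 / 2 : ℂ) = τ ^ 12 := by
    rw [Finset.prod_const, Finset.card_univ, Fintype.card_fin, ← Complex.cpow_nat_mul,
      show ((24 : ℕ) : ℂ) * (1 / 2) = (12 : ℕ) by norm_num, Complex.cpow_natCast, mul_pow,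
      Even.neg_pow (by decide), Complex.I_pow_eq_pow_mod, pow_zero, one_mul]
  rw [hw.thetaSeries_neg_one_div hB hτ, Finset.prod_congr rfl fun i _ => hfactor i,
    Finset.prod_mul_distrib, hpow]
  ring

lemma summable_exp_neg_pi (hB : IsLeech B) : Summable fun u => Real.exp (-π * pairZ B u u) := by
  refine (hB.summable_norm_thetaTerm (τ := Complex.I) (by simp)).congr fun u => ?_
  rw [thetaTerm_I, Complex.norm_real, Real.norm_of_nonneg (Real.exp_pos _).le]

lemma thetaSeries_I_ne_zero (hB : IsLeech B) : thetaSeries B Complex.I ≠ 0 := by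
  rw [thetaSeries, tsum_congr thetaTerm_I, ← Complex.ofReal_tsum]
  exact Complex.ofReal_ne_zero.2 (hB.summable_exp_neg_pi.tsum_pos
    (fun u => (Real.exp_pos _).le) 0 (Real.exp_pos _)).ne'

/-- The constant in the transformation law is found at the fixed point `i`. -/
lemma thetaSeries_neg_one_div (hB : IsLeech B) (hτ : 0 < τ.im) :
    thetaSeries B (-1 / τ) = τ ^ 12 * thetaSeries B τ := by
  obtain ⟨κ, hκ⟩ := hB.exists_thetaSeries_neg_one_div_eq
  have hI := hκ Complex.I (by simp)
  rw [show (-1 : ℂ) / Complex.I = Complex.I by simp [neg_div], Complex.I_pow_eq_pow_mod, pow_zero,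
    one_mul] at hI
  obtain rfl : κ = 1 := mul_right_cancel₀ hB.thetaSeries_I_ne_zero (by rw [one_mul, ← hI])
  rw [hκ τ hτ, one_mul]

lemma thetaSeries_S_smul (hB : IsLeech B) (τ : ℍ) :
    thetaSeries B ((ModularGroup.S • τ : ℍ) : ℂ) = (τ : ℂ) ^ (12 : ℤ) * thetaSeries B τ := by
  rw [UpperHalfPlane.modular_S_smul, UpperHalfPlane.coe_mk, ← neg_inv, ← one_div, ← neg_div,
    hB.thetaSeries_neg_one_div τ.im_pos]
  norm_cast

end IsLeech

end ThetaTransformation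

/-! ### The shells of the Leech lattice -/

section Shells

open ModularForm ModularGroup

variable {B : Matrix (Fin 24) (Fin 24) ℤ}

/-- Half the norm of a vector, i.e. its type in the sense of Conway; negative norms give `0`. -/
def halfNorm (B : Matrix (Fin 24) (Fin 24) ℤ) (u : LV) : ℕ := (pairZ B u u / 2).toNat

/-- The number of vectors of type `n`. -/
def shellCard (B : Matrix (Fin 24) (Fin 24) ℤ) (n : ℕ) : ℕ := Nat.card (halfNorm B ⁻¹' {n})

namespace IsLeech

lemma pairZ_self_eq_two_mul_halfNorm (hB : IsLeech B) (u : LV) :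
    pairZ B u u = 2 * (halfNorm B u : ℤ) := by
  have hnonneg := hB.pairZ_self_nonneg u
  obtain ⟨r, hr⟩ := hB.even_pairZ_self u
  rw [halfNorm]
  lia

lemma finite_setOf_pairZ_self_le (hB : IsLeech B) (R : ℤ) : {u : LV | pairZ B u u ≤ R}.Finite := by
  have hev := hB.summable_exp_neg_pi.tendsto_cofinite_zero.eventually_lt_const
    (Real.exp_pos (-π * R))
  refine (Filter.eventually_cofinite.1 hev).subset fun u hu => ?_
  have hle : (pairZ B u u : ℝ) ≤ R := by exact_mod_cast hu
  refine not_lt.2 (Real.exp_le_exp.2 ?_)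
  nlinarith [Real.pi_pos]

lemma thetaTerm_eq_qParam_pow (hB : IsLeech B) (u : LV) (τ : ℂ) :
    thetaTerm B u τ = Function.Periodic.qParam 1 τ ^ halfNorm B u := by
  rw [qParam_one_pow, thetaTerm, eC, hB.pairZ_self_eq_two_mul_halfNorm]
  congr 1
  push_cast
  ring

lemma hasQExpansion_thetaSeries (hB : IsLeech B) :
    HasQExpansion (fun τ => thetaSeries B τ) (PowerSeries.mk fun n => (shellCard B n : ℂ)) := by
  intro τ
  have hsum := (hB.summable_norm_thetaTerm τ.im_pos).of_norm.hasSum.tsum_fiberwise (halfNorm B)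
  refine hsum.congr_fun fun n => ?_
  have hconst (u : halfNorm B ⁻¹' {n}) :
      thetaTerm B u τ = Function.Periodic.qParam 1 (τ : ℂ) ^ n := by
    rw [hB.thetaTerm_eq_qParam_pow, show halfNorm B u = n from u.2]
  rw [tsum_congr hconst, tsum_const, PowerSeries.coeff_mk, shellCard, nsmul_eq_mul, smul_eq_mul]

lemma shellCard_zero (hB : IsLeech B) : shellCard B 0 = 1 := by
  refine Nat.card_eq_one_iff_exists.2 ⟨⟨0, by simp [halfNorm, pairZ_zero_left]⟩, fun u => ?_⟩
  refine Subtype.ext (hB.pairZ_self_eq_zero ?_)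
  rw [hB.pairZ_self_eq_two_mul_halfNorm, show halfNorm B u = 0 from u.2]
  rfl

lemma halfNorm_ne_one (hB : IsLeech B) (u : LV) : halfNorm B u ≠ 1 := fun hu =>
  hB.2.2.2.2 u (by rw [hB.pairZ_self_eq_two_mul_halfNorm, hu]; rfl)

lemma shellCard_one (hB : IsLeech B) : shellCard B 1 = 0 := by
  have : IsEmpty (halfNorm B ⁻¹' {1}) := ⟨fun u => hB.halfNorm_ne_one u u.2⟩
  exact Nat.card_of_isEmpty

end IsLeech

lemma qExpansion_E₄_coeff (m : ℕ) : (qExpansion 1 (E₄ : ℍ → ℂ)).coeff m =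
    if m = 0 then 1 else 240 * (ArithmeticFunction.sigma 3 m : ℂ) := by
  rw [EisensteinSeries.E_qExpansion_coeff _ ⟨2, rfl⟩, show bernoulli 4 = -1 / 30 by decide +kernel]
  norm_num

lemma qExpansion_E₆_coeff (m : ℕ) : (qExpansion 1 (E₆ : ℍ → ℂ)).coeff m =
    if m = 0 then 1 else -504 * (ArithmeticFunction.sigma 5 m : ℂ) := by
  rw [EisensteinSeries.E_qExpansion_coeff _ ⟨3, rfl⟩, show bernoulli 6 = 1 / 42 by decide +kernel]
  norm_num

lemma apply_S_smul_of_modularForm {k : ℤ} (f : ModularForm 𝒮ℒ k) (τ : ℍ) :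
    f (S • τ) = (τ : ℂ) ^ k * f τ :=
  slash_S_eq_self_iff.1 (SlashInvariantFormClass.slash_action_eq f _ ⟨S, rfl⟩) τ

lemma HasQExpansion.eq_zero_of_coeff_zero_of_coeff_one {F : ℍ → ℂ} {p : PowerSeries ℂ}
    (h : HasQExpansion F p) (hS : F ∣[(12 : ℤ)] S = F) (h0 : p.coeff 0 = 0) (h1 : p.coeff 1 = 0) :
    p = 0 := by
  have hq : qExpansion 1 (h.toModularForm hS) = p := qExpansion_eq h
  have horder : ((2 : ℕ) : ℕ∞) ≤ p.order :=
    PowerSeries.nat_le_order _ _ fun i hi => by interval_cases i <;> assumption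
  have hzero : h.toModularForm hS = 0 := by
    refine ModularForm.sturm_bound_levelOne (lt_of_lt_of_le ?_ (hq ▸ horder))
    rw [show Int.toNat 12 / 12 = 1 from rfl]
    norm_num
  rw [← hq, hzero, FunLike.coe_zero, qExpansion_zero]

namespace IsLeech

/-- A form of weight `12` and level one is determined by its first two coefficients, here `1` and
`0`. -/
lemma mk_shellCard_eq (hB : IsLeech B) : (PowerSeries.mk fun n => (shellCard B n : ℂ)) =
    (7 / 12 : ℂ) • (qExpansion 1 (E₄ : ℍ → ℂ)) ^ 3 +
      (5 / 12 : ℂ) • (qExpansion 1 (E₆ : ℍ → ℂ)) ^ 2 := by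
  have hexp := (hB.hasQExpansion_thetaSeries.add
    (((HasQExpansion.of_modularForm E₄).pow 3).const_mul (-(7 / 12)))).add
      (((HasQExpansion.of_modularForm E₆).pow 2).const_mul (-(5 / 12)))
  have hzero := hexp.eq_zero_of_coeff_zero_of_coeff_one
    (slash_S_eq_self_iff.2 fun τ => by
      simp only [hB.thetaSeries_S_smul, apply_S_smul_of_modularForm]
      rw [zpow_ofNat, zpow_ofNat, zpow_ofNat]
      ring)
    (by norm_num [pow_succ, qExpansion_E₄_coeff, qExpansion_E₆_coeff, PowerSeries.coeff_mul,
      hB.shellCard_zero, -PowerSeries.coeff_zero_eq_constantCoeff])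
    (by norm_num [pow_succ, qExpansion_E₄_coeff, qExpansion_E₆_coeff, PowerSeries.coeff_mul,
      Finset.Nat.antidiagonal_succ, hB.shellCard_one, -PowerSeries.coeff_zero_eq_constantCoeff])
  rw [_root_.neg_smul, _root_.neg_smul] at hzero
  linear_combination hzero

lemma shellCard_two_three_four (hB : IsLeech B) : shellCard B 2 = 196560 ∧
    shellCard B 3 = 16773120 ∧ shellCard B 4 = 398034000 := by
  have hcoeff (n : ℕ) := congrArg (PowerSeries.coeff n) hB.mk_shellCard_eq
  simp only [PowerSeries.coeff_mk] at hcoeff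
  have hsigma (k : ℕ) : ArithmeticFunction.sigma k 2 = 1 + 2 ^ k ∧
      ArithmeticFunction.sigma k 3 = 1 + 3 ^ k ∧
      ArithmeticFunction.sigma k 4 = 1 + (2 ^ k + 4 ^ k) := by
    simp only [ArithmeticFunction.sigma_apply]
    rw [show Nat.divisors 2 = {1, 2} by decide, show Nat.divisors 3 = {1, 3} by decide,
      show Nat.divisors 4 = {1, 2, 4} by decide]
    simp
  refine ⟨?_, ?_, ?_⟩ <;> rw [← Nat.cast_inj (R := ℂ), hcoeff] <;>
    norm_num [pow_succ, PowerSeries.coeff_mul, Finset.Nat.antidiagonal_succ, qExpansion_E₄_coeff,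
      qExpansion_E₆_coeff, hsigma, -PowerSeries.coeff_zero_eq_constantCoeff]

lemma exists_pairZ_self_eq_eight (hB : IsLeech B) : ∃ z, pairZ B z z = 8 := by
  have hne : Nat.card (halfNorm B ⁻¹' {4}) ≠ 0 := by
    rw [← shellCard, hB.shellCard_two_three_four.2.2]
    norm_num
  obtain ⟨⟨z, hz⟩⟩ := (Nat.card_ne_zero.1 hne).1
  exact ⟨z, by rw [hB.pairZ_self_eq_two_mul_halfNorm, show halfNorm B z = 4 from hz]; rfl⟩

/-- The vectors of norm at most `8`. -/
def shortVectors (hB : IsLeech B) : Finset LV := (hB.finite_setOf_pairZ_self_le 8).toFinset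

lemma mem_shortVectors (hB : IsLeech B) {u : LV} : u ∈ hB.shortVectors ↔ pairZ B u u ≤ 8 := by
  simp [shortVectors]

lemma mem_shortVectors_iff_halfNorm (hB : IsLeech B) {u : LV} :
    u ∈ hB.shortVectors ↔ halfNorm B u ∈ Finset.range 5 := by
  rw [hB.mem_shortVectors, hB.pairZ_self_eq_two_mul_halfNorm, Finset.mem_range]
  lia

/-- The shell sizes satisfy `1/1 + 196560/2 + 16773120/2 + 398034000/48 = 2²⁴`. -/
lemma isSaturatedShortSet (hB : IsLeech B) : IsSaturatedShortSet B hB.shortVectors := by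
  refine ⟨fun x => hB.mem_shortVectors, ?_⟩
  have hshell : ∀ n ∈ Finset.range 5,
      ∑ u ∈ hB.shortVectors with halfNorm B u = n, shortVectorWeight (pairZ B u u) =
        shellCard B n * shortVectorWeight (2 * n) := fun n hn => by
    have hcard : (hB.shortVectors.filter (halfNorm B · = n)).card = shellCard B n :=
      (Nat.subtype_card _ fun u => by
        rw [Finset.mem_filter, hB.mem_shortVectors_iff_halfNorm, Set.mem_preimage,
          Set.mem_singleton_iff]
        exact ⟨And.right, fun h => ⟨h ▸ hn, h⟩⟩).symm
    rw [← hcard, ← smul_eq_mul]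
    refine Finset.sum_eq_card_nsmul fun u hu => ?_
    rw [hB.pairZ_self_eq_two_mul_halfNorm, (Finset.mem_filter.1 hu).2]
  obtain ⟨h2, h3, h4⟩ := hB.shellCard_two_three_four
  rw [← Finset.sum_fiberwise_of_maps_to fun u hu => hB.mem_shortVectors_iff_halfNorm.1 hu,
    Finset.sum_congr rfl hshell]
  simp [Finset.sum_range_succ, h2, h3, h4, hB.shellCard_zero, hB.shellCard_one, shortVectorWeight]

lemma exists_congr_le_eight (hB : IsLeech B) (x : LV) :
    ∃ y, CongrModTwo y x ∧ pairZ B y y ≤ 8 :=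
  hB.isSaturatedShortSet.exists_congr_le_eight hB x

theorem conwayEquiv_of_norm_eq (hB : IsLeech B) {x y : LV} (hx : pairZ B x x ≤ 8)
    (hxy : pairZ B x x = pairZ B y y) : ConwayEquiv B x y :=
  hB.isSaturatedShortSet.conwayEquiv_of_norm_eq hB hB.exists_pairZ_self_eq_eight hx hxy

end IsLeech

end Shells

/-! ### Fourier coefficients of Jacobi forms -/

section FourierUniqueness

-- The normalised Haar measure, for which the library states the orthonormality of `mFourier`.
local instance : MeasureTheory.MeasureSpace UnitAddCircle := ⟨AddCircle.haarAddCircle⟩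

local instance : MeasureTheory.IsProbabilityMeasure
    (MeasureTheory.volume : MeasureTheory.Measure UnitAddCircle) :=
  inferInstanceAs (MeasureTheory.IsProbabilityMeasure AddCircle.haarAddCircle)

variable {d ι : Type*} [Fintype d]

lemma mFourier_coe (n : d → ℤ) (x : d → ℝ) :
    UnitAddTorus.mFourier n (fun j => (x j : UnitAddCircle)) = eC (∑ j, (n j : ℂ) * x j) := by
  rw [eC_sum]
  refine Finset.prod_congr rfl fun j _ => ?_
  rw [fourier_coe_apply, eC]
  congr 1
  push_cast
  ring

lemma eq_zero_of_hasSum_mFourier {n : ι → d → ℤ} (hn : Function.Injective n) {c : ι → ℂ}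
    (h : HasSum (fun i => c i • UnitAddTorus.mFourier (n i)) 0) (m : ι) : c m = 0 := by
  have hortho := UnitAddTorus.orthonormal_mFourier.comp n hn
  have hself : inner ℂ (UnitAddTorus.mFourierLp 2 (n m)) (UnitAddTorus.mFourierLp 2 (n m)) =
      (1 : ℂ) := by
    rw [inner_self_eq_norm_sq_to_K, show ‖UnitAddTorus.mFourierLp 2 (n m)‖ = 1 from hortho.1 m]
    simp
  have hinner := (h.mapL (ContinuousMap.toLp 2 _ ℂ)).mapL
    (innerSL ℂ (UnitAddTorus.mFourierLp 2 (n m)))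
  simp only [map_smul, map_zero, innerSL_apply_apply] at hinner
  refine (mul_one (c m)).symm.trans ?_
  rw [← hself]
  refine (hasSum_single m fun i hi => ?_).unique hinner
  exact (congrArg (c i • ·) (hortho.2 hi.symm)).trans (smul_zero _)

lemma eq_zero_of_tsum_eC_eq_zero {n : ι → d → ℤ} (hn : Function.Injective n) {c : ι → ℂ}
    (hc : Summable fun i => ‖c i‖)
    (h : ∀ x : d → ℝ, ∑' i, c i * eC (∑ j, (n i j : ℂ) * x j) = 0) : c = 0 := by
  have hsum : Summable fun i => c i • UnitAddTorus.mFourier (n i) :=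
    Summable.of_norm (by simpa only [norm_smul, UnitAddTorus.mFourier_norm, mul_one] using hc)
  have hzero : ∑' i, c i • UnitAddTorus.mFourier (n i) = 0 := by
    ext x
    obtain ⟨y, rfl⟩ : ∃ y : d → ℝ, (fun j => (y j : UnitAddCircle)) = x :=
      ⟨fun j => (x j).out, funext fun j => Quotient.out_eq _⟩
    rw [← (ContinuousMap.hasSum_apply hsum.hasSum _).tsum_eq, ContinuousMap.zero_apply, ← h y]
    simp only [ContinuousMap.smul_apply, mFourier_coe, smul_eq_mul]
  exact funext (eq_zero_of_hasSum_mFourier hn (hzero ▸ hsum.hasSum))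

lemma eq_of_forall_hasSum_pow {F : ℂ → ℂ} {a b : ℕ → ℂ}
    (ha : ∀ s, HasSum (fun m => a m * s ^ m) (F s))
    (hb : ∀ s, HasSum (fun m => b m * s ^ m) (F s)) : a = b := by
  have hsub (s : ℂ) : HasSum (fun m => (a - b) m * s ^ m) 0 := by
    simpa only [Pi.sub_apply, sub_mul, sub_self] using (ha s).sub (hb s)
  have hinj : Function.Injective fun (m : ℕ) (_ : Unit) => (m : ℤ) := fun m m' hmm' => by
    simpa using congrFun hmm' ()
  refine sub_eq_zero.1 (eq_zero_of_tsum_eC_eq_zero hinj ?_ fun x => ?_)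
  · simpa using (hsub 1).summable.norm
  · rw [← (hsub (eC (x ()))).tsum_eq]
    simp only [eC, ← Complex.exp_nat_mul, Fintype.sum_unique, Int.cast_natCast]
    exact tsum_congr fun m => by congr 2; ring

end FourierUniqueness

section FourierCoefficients

variable {B : Matrix (Fin 24) (Fin 24) ℤ} {k : ℤ} {t : ℕ} {φ : ℍ → CV → ℂ} {f : ℕ → LV → ℂ}

lemma pairC_add_left (x y z : CV) : pairC B (x + y) z = pairC B x z + pairC B y z := by
  simp [pairC, add_dotProduct]

lemma pairC_add_right (x y z : CV) : pairC B x (y + z) = pairC B x y + pairC B x z := by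
  simp [pairC, mulVec_add, dotProduct_add]

lemma pairC_smul_left (c : ℂ) (x y : CV) : pairC B (c • x) y = c * pairC B x y := by
  simp [pairC, smul_dotProduct]

lemma pairC_smul_right (c : ℂ) (x y : CV) : pairC B x (c • y) = c * pairC B x y := by
  simp [pairC, mulVec_smul, dotProduct_smul]

lemma pairC_liftC (x y : LV) : pairC B (liftC x) (liftC y) = pairZ B x y := by
  simp only [pairC, pairZ, liftC, dotProduct, mulVec, Matrix.map_apply]
  push_cast
  rfl

lemma pairC_liftC_ofReal (x : LV) (y : Fin 24 → ℝ) :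
    pairC B (liftC x) (fun i => (y i : ℂ)) = ∑ j, ((x ᵥ* B) j : ℂ) * y j := by
  rw [pairC, dotProduct_mulVec]
  simp only [dotProduct, vecMul, liftC, Matrix.map_apply]
  push_cast
  rfl

lemma liftC_add (x y : LV) : liftC (x + y) = liftC x + liftC y := by
  ext i
  simp [liftC]

lemma liftC_smul (a : ℤ) (x : LV) : liftC (a • x) = (a : ℂ) • liftC x := by
  ext i
  simp [liftC]

lemma liftC_zero : liftC 0 = 0 := by
  ext i
  simp [liftC]

lemma pairC_liftC_mulVec_actC {σ : Matrix (Fin 24) (Fin 24) ℤ} (hσ : σ ∈ ConwayGroup B) (x : LV)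
    (z : CV) : pairC B (liftC (σ *ᵥ x)) (actC σ z) = pairC B (liftC x) z := by
  have hlift : liftC (σ *ᵥ x) = σ.map (Int.cast : ℤ → ℂ) *ᵥ liftC x := by
    ext i
    simp [liftC, mulVec, dotProduct]
  have hgram : (σ.map (Int.cast : ℤ → ℂ))ᵀ * B.map Int.cast * σ.map Int.cast = B.map Int.cast := by
    simpa [map_mul, Matrix.transpose_map] using
      congrArg (Int.castRingHom ℂ).mapMatrix hσ.2
  rw [hlift, pairC, actC, pairC, dotProduct_mulVec, vecMul_mulVec, ← dotProduct_mulVec,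
    mulVec_mulVec, hgram]

lemma IsLeech.vecMul_injective (hB : IsLeech B) : Function.Injective fun x : LV => x ᵥ* B :=
  Matrix.vecMul_injective_of_isUnit <|
    (Matrix.isUnit_iff_isUnit_det B).2 (hB.det_eq_one ▸ isUnit_one)

/-- The term `q^N ζ^ℓ` with an integral exponent `N`, extending `fterm`. -/
def intFterm (B : Matrix (Fin 24) (Fin 24) ℤ) (p : ℤ × LV) (τ : ℍ) (z : CV) : ℂ :=
  eC (p.1 * τ) * eC (pairC B (liftC p.2) z)

lemma IsLeech.eq_zero_of_hasSum_intFterm (hB : IsLeech B) {c : ℤ × LV → ℂ}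
    (h : ∀ τ z, HasSum (fun p => c p * intFterm B p τ z) 0) : c = 0 := by
  have hinj : Function.Injective fun (p : ℤ × LV) (o : Option (Fin 24)) =>
      o.elim p.1 fun j => (p.2 ᵥ* B) j := fun p p' hpp' =>
    Prod.ext (congrFun hpp' none) (hB.vecMul_injective (funext fun j => congrFun hpp' (some j)))
  have hzero := eq_zero_of_tsum_eC_eq_zero hinj (c := fun p => c p * eC (p.1 * Complex.I))
    ((h UpperHalfPlane.I 0).summable.norm.congr fun p => by simp [intFterm, pairC, eC])
    fun x => by
      have him : 0 < ((x none : ℂ) + Complex.I).im := by simp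
      rw [← (h ⟨_, him⟩ fun i => (x (some i) : ℂ)).tsum_eq]
      refine tsum_congr fun p => ?_
      simp only [intFterm, pairC_liftC_ofReal, Fintype.sum_option, Option.elim, mul_assoc,
        ← eC_add]
      congr 2
      ring
  exact funext fun p => (mul_eq_zero.1 (congrFun hzero p)).resolve_right (Complex.exp_ne_zero _)

lemma IsLeech.eq_of_hasSum_intFterm (hB : IsLeech B) {φ : ℍ → CV → ℂ} {c c' : ℤ × LV → ℂ}
    (hc : ∀ τ z, HasSum (fun p => c p * intFterm B p τ z) (φ τ z))
    (hc' : ∀ τ z, HasSum (fun p => c' p * intFterm B p τ z) (φ τ z)) : c = c' :=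
  sub_eq_zero.1 <| hB.eq_zero_of_hasSum_intFterm fun τ z => by
    simpa only [Pi.sub_apply, sub_mul, sub_self] using (hc τ z).sub (hc' τ z)

/-- The Fourier coefficients `f(N, ℓ)` extended by zero to negative `N`. -/
def intCoeff (f : ℕ → LV → ℂ) (p : ℤ × LV) : ℂ := if 0 ≤ p.1 then f p.1.toNat p.2 else 0

@[simp] lemma intCoeff_natCast (n : ℕ) (x : LV) : intCoeff f (n, x) = f n x := by simp [intCoeff]

lemma intCoeff_eq_zero_of_lt {n : ℕ} (hn : ∀ m < n, ∀ x, f m x = 0) {N : ℤ} (hN : N < n) (x : LV) :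
    intCoeff f (N, x) = 0 := by
  rw [intCoeff]
  split_ifs with h0
  · exact hn _ (by lia) x
  · rfl

namespace IsJacobiFormWith

lemma hasSum_intFterm (h : IsJacobiFormWith B k t φ f) (τ : ℍ) (z : CV) :
    HasSum (fun p => intCoeff f p * intFterm B p τ z) (φ τ z) := by
  have hinj : Function.Injective fun p : ℕ × LV => ((p.1 : ℤ), p.2) := by
    rintro ⟨a, x⟩ ⟨b, y⟩ hab
    simpa using hab
  rw [← hinj.hasSum_iff]
  · exact (h.expansion τ z).congr_fun fun p => by simp [intFterm, fterm]
  · rintro ⟨a, x⟩ hx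
    rw [intCoeff, if_neg fun ha => hx ⟨(a.toNat, x), by simpa using ha⟩, zero_mul]

lemma coeff_mulVec (h : IsJacobiFormWith B k t φ f) (hB : IsLeech B)
    {σ : Matrix (Fin 24) (Fin 24) ℤ} (hσ : σ ∈ ConwayGroup B) (n : ℕ) (x : LV) :
    f n (σ *ᵥ x) = f n x := by
  let e : ℤ × LV ≃ ℤ × LV :=
    { toFun p := (p.1, σ *ᵥ p.2)
      invFun p := (p.1, σ⁻¹ *ᵥ p.2)
      left_inv p := by simp only [mulVec_mulVec, nonsing_inv_mul _ hσ.1, one_mulVec]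
      right_inv p := by simp only [mulVec_mulVec, mul_nonsing_inv _ hσ.1, one_mulVec] }
  have heq : intCoeff f ∘ e = intCoeff f :=
    hB.eq_of_hasSum_intFterm (fun τ z => ?_) h.hasSum_intFterm
  · simpa [e] using congrFun heq (n, x)
  have hact := h.hasSum_intFterm τ (actC σ z)
  rw [h.conway_invar σ hσ, ← e.hasSum_iff] at hact
  exact hact.congr_fun fun p => by simp [e, intFterm, pairC_liftC_mulVec_actC hσ]

/-- Quasi-periodicity in the direction `xτ`, read off coefficientwise. -/
lemma intCoeff_eq_intCoeff_add_smul (h : IsJacobiFormWith B k t φ f) (hB : IsLeech B) (x : LV)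
    (N : ℤ) (y : LV) : intCoeff f (N, y) =
      intCoeff f (N + pairZ B y x + t * halfNorm B x, y + (t : ℤ) • x) := by
  let e₁ : ℤ × LV ≃ ℤ × LV :=
    { toFun p := (p.1 - pairZ B p.2 x, p.2)
      invFun p := (p.1 + pairZ B p.2 x, p.2)
      left_inv p := by simp
      right_inv p := by simp }
  let e₂ : ℤ × LV ≃ ℤ × LV :=
    { toFun p := (p.1 + t * halfNorm B x, p.2 + (t : ℤ) • x)
      invFun p := (p.1 - t * halfNorm B x, p.2 - (t : ℤ) • x)
      left_inv p := by simp
      right_inv p := by simp }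
  have heq : intCoeff f ∘ e₁ = intCoeff f ∘ e₂ := hB.eq_of_hasSum_intFterm
    (φ := fun τ z => φ τ (z + (τ : ℂ) • liftC x + liftC 0)) (fun τ z => ?_) fun τ z => ?_
  · simpa [e₁, e₂] using congrFun heq (N + pairZ B y x, y)
  · refine (e₁.hasSum_iff.2 (h.hasSum_intFterm τ _)).congr_fun fun p => ?_
    simp only [Function.comp, e₁, Equiv.coe_fn_mk, intFterm, liftC_zero, add_zero,
      pairC_add_right, pairC_smul_right, pairC_liftC, ← eC_add]
    congr 2
    push_cast
    ring
  · rw [h.quasi_periodic x 0 τ z]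
    refine (e₂.hasSum_iff.2 ((h.hasSum_intFterm τ z).mul_left _)).congr_fun fun p => ?_
    simp only [Function.comp, e₂, Equiv.coe_fn_mk, intFterm, liftC_add, liftC_smul,
      pairC_add_left, pairC_smul_left, ← eC_add, hB.pairZ_self_eq_two_mul_halfNorm x]
    rw [mul_left_comm (cexp _), eC, eC, ← Complex.exp_add]
    congr 2
    push_cast
    ring

variable {n : ℕ}

lemma mem_minimalSet_of_coeff_ne_zero (h : IsJacobiFormWith B k t φ f) (hB : IsLeech B)
    (hn : ∀ m < n, ∀ x, f m x = 0) {x : LV} (hx : f n x ≠ 0) : x ∈ minimalSet B t := by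
  rintro _ ⟨w, rfl⟩
  have hexp : (n : ℤ) ≤ n + pairZ B x w + t * halfNorm B w := by
    contrapose! hx
    rw [← intCoeff_natCast (f := f), h.intCoeff_eq_intCoeff_add_smul hB w,
      intCoeff_eq_zero_of_lt hn hx]
  simp only [pairZ_add_left, pairZ_add_right, pairZ_smul_left, pairZ_smul_right,
    hB.pairZ_comm w x, hB.pairZ_self_eq_two_mul_halfNorm w]
  nlinarith [Int.natCast_nonneg t]

lemma coeff_eq_of_conwayEquiv (h : IsJacobiFormWith B k t φ f) (hB : IsLeech B) {x y : LV}
    (hxy : ConwayEquiv B x y) : f n y = f n x := by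
  obtain ⟨F, hF, rfl⟩ := hxy
  rw [← LinearMap.toMatrix'_mulVec F]
  exact h.coeff_mulVec hB (hF.toMatrix'_mem_conwayGroup hB) n x

end IsJacobiFormWith

lemma IsLeech.pairZ_self_le_eight_of_mem_minimalSet (hB : IsLeech B) {x : LV}
    (hx : x ∈ minimalSet B 2) : pairZ B x x ≤ 8 := by
  obtain ⟨y, hy, hy8⟩ := hB.exists_congr_le_eight x
  exact (hx y hy).trans hy8

end FourierCoefficients

/-! ### Taylor development of Jacobi forms -/

section CosineSeries

variable {ι : Type*} {c : ι → ℂ} {x : ι → ℝ} {F : ℂ → ℂ}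

lemma hasSum_real_cosh (r : ℝ) :
    HasSum (fun n : ℕ => r ^ (2 * n) / ((2 * n).factorial : ℝ)) (Real.cosh r) := by
  have hcos := Complex.hasSum_cos (r * Complex.I)
  rw [Complex.cos_mul_I, ← Complex.ofReal_cosh] at hcos
  refine Complex.hasSum_ofReal.1 (hcos.congr_fun fun n => ?_)
  rw [mul_pow, pow_mul Complex.I, Complex.I_sq, mul_left_comm, ← mul_pow]
  norm_num

lemma summable_norm_mul_cosh (h : ∀ s : ℂ, Summable fun i => c i * Complex.cos (s * x i)) (r : ℝ) :
    Summable fun i => ‖c i‖ * Real.cosh (r * x i) := by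
  refine (h (r * Complex.I)).norm.congr fun i => ?_
  rw [norm_mul, mul_right_comm, Complex.cos_mul_I, ← Complex.ofReal_mul, ← Complex.ofReal_cosh,
    Complex.norm_real, Real.norm_of_nonneg (Real.cosh_pos _).le]

lemma summable_mul_even_pow (h : ∀ s : ℂ, Summable fun i => c i * Complex.cos (s * x i)) (a : ℕ) :
    Summable fun i => c i * (x i : ℂ) ^ (2 * a) := by
  refine ((summable_norm_mul_cosh h 1).mul_left ((2 * a).factorial : ℝ)).of_norm_bounded fun i => ?_
  have hterm : x i ^ (2 * a) / ((2 * a).factorial : ℝ) ≤ Real.cosh (x i) :=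
    le_hasSum (hasSum_real_cosh (x i)) a fun n _ => by rw [pow_mul]; positivity
  rw [div_le_iff₀' (by positivity)] at hterm
  have hnorm : ‖(x i : ℂ) ^ (2 * a)‖ = x i ^ (2 * a) := by
    rw [norm_pow, Complex.norm_real, Real.norm_eq_abs, pow_mul, sq_abs, ← pow_mul]
  rw [norm_mul, hnorm, one_mul, mul_left_comm]
  gcongr

lemma hasSum_even_pow_of_hasSum_cos
    (h : ∀ s : ℂ, HasSum (fun i => c i * Complex.cos (s * x i)) (F s)) (s : ℂ) :
    HasSum (fun a : ℕ => (-1) ^ a / ((2 * a).factorial : ℂ) *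
      (∑' i, c i * (x i : ℂ) ^ (2 * a)) * (s ^ 2) ^ a) (F s) := by
  let term (y : ι × ℕ) : ℂ :=
    c y.1 * ((-1) ^ y.2 * (s * x y.1) ^ (2 * y.2) / ((2 * y.2).factorial : ℂ))
  have hnorm (i : ι) : HasSum (fun a => ‖term (i, a)‖) (‖c i‖ * Real.cosh (‖s‖ * x i)) :=
    ((hasSum_real_cosh (‖s‖ * x i)).mul_left ‖c i‖).congr_fun fun a => by
      simp only [term, norm_mul, norm_div, norm_pow, norm_neg, norm_one, one_pow, one_mul,
        Complex.norm_natCast, Complex.norm_real, Real.norm_eq_abs, mul_pow]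
      rw [pow_mul |x i|, sq_abs, ← pow_mul]
  have hsum : Summable term := Summable.of_norm <|
    (summable_prod_of_nonneg fun y => norm_nonneg _).2 ⟨fun i => (hnorm i).summable,
      (summable_norm_mul_cosh (fun s => (h s).summable) ‖s‖).congr fun i => (hnorm i).tsum_eq.symm⟩
  have hrows (i : ι) : HasSum (fun a => term (i, a)) (c i * Complex.cos (s * x i)) :=
    (Complex.hasSum_cos _).mul_left _
  have htotal : HasSum term (F s) :=
    (hsum.hasSum.prod_fiberwise hrows).unique (h s) ▸ hsum.hasSum
  refine ((Equiv.prodComm ℕ ι).hasSum_iff.2 htotal).prod_fiberwise fun a => ?_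
  have hcol := (summable_mul_even_pow (fun s => (h s).summable) a).hasSum.mul_left
    ((-1) ^ a / ((2 * a).factorial : ℂ) * (s ^ 2) ^ a)
  rw [mul_right_comm] at hcol
  refine hcol.congr_fun fun i => ?_
  simp only [Function.comp, Equiv.prodComm_apply, Prod.swap_prod_mk, term, mul_pow, ← pow_mul]
  ring

end CosineSeries

section TaylorDevelopment

open ModularGroup Finset.HasAntidiagonal

variable {B : Matrix (Fin 24) (Fin 24) ℤ} {k : ℤ} {t : ℕ} {φ : ℍ → CV → ℂ} {f : ℕ → LV → ℂ}

lemma hasQExpansion_eisensteinE2 : HasQExpansion EisensteinSeries.E2 (PowerSeries.mk e2coeff) :=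
  fun τ => by
    simpa only [PowerSeries.coeff_mk, e2coeff, Function.Periodic.qParam,
      Complex.ofReal_one, div_one, sigmaNat, ArithmeticFunction.sigma_apply]
      using EisensteinSeries.hasSum_qExpansion_E2 (z := τ)

lemma eisensteinE2_S_smul (τ : ℍ) : EisensteinSeries.E2 (S • τ) =
    (τ : ℂ) ^ 2 * EisensteinSeries.E2 τ + 6 * τ / (π * Complex.I) := by
  have hslash := congrFun (EisensteinSeries.E2_slash_action S) τ
  have hdenom : denom (S : GL (Fin 2) ℝ) τ = (τ : ℂ) := by
    erw [ModularGroup.denom_apply]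
    simp [ModularGroup.S]
  have hτ := UpperHalfPlane.ne_zero τ
  have hπ : (π : ℂ) ≠ 0 := by exact_mod_cast Real.pi_ne_zero
  rw [ModularForm.SL_slash_apply, hdenom, Pi.sub_apply, Pi.smul_apply, EisensteinSeries.D2_S,
    riemannZeta_two, smul_eq_mul, _root_.zpow_neg, ← div_eq_mul_inv,
    div_eq_iff (zpow_ne_zero _ hτ)] at hslash
  rw [hslash, zpow_ofNat]
  field_simp [Complex.I_ne_zero]
  linear_combination (-6 : ℂ) * Complex.I_sq

/-- The `2a`-th moment `∑ f(n,ℓ) (ℓ,v)^(2a) qⁿ` of the Fourier coefficients along `v`. -/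
def evenMoment (B : Matrix (Fin 24) (Fin 24) ℤ) (f : ℕ → LV → ℂ) (v : LV) (a : ℕ) (τ : ℍ) : ℂ :=
  ∑' p : ℕ × LV, f p.1 p.2 * eC (p.1 * τ) * (pairZ B p.2 v : ℂ) ^ (2 * a)

/-- The `q`-series of `evenMoment`. -/
def evenMomentSeries (B : Matrix (Fin 24) (Fin 24) ℤ) (f : ℕ → LV → ℂ) (v : LV) (a : ℕ) :
    PowerSeries ℂ :=
  PowerSeries.mk fun n => ∑' x : LV, f n x * (pairZ B x v : ℂ) ^ (2 * a)

/-- The `m`-th coefficient in `s²` of `exp(t(v,v)E₂(τ)s²/24) φ(τ, sv/2π)`. The exponential turns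
the Taylor coefficients of a Jacobi form of index `t` into modular forms. -/
def correctedTaylorCoeff (B : Matrix (Fin 24) (Fin 24) ℤ) (t : ℕ) (f : ℕ → LV → ℂ) (v : LV)
    (m : ℕ) (τ : ℍ) : ℂ :=
  ∑ y ∈ antidiagonal m,
    (t * pairZ B v v / 24 * EisensteinSeries.E2 τ) ^ y.1 / (y.1.factorial : ℂ) *
      ((-1) ^ y.2 / ((2 * y.2).factorial : ℂ) * evenMoment B f v y.2 τ)

lemma neg_one_mem_conwayGroup : (-1 : Matrix (Fin 24) (Fin 24) ℤ) ∈ ConwayGroup B :=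
  ⟨by simp [Matrix.det_neg], by simp⟩

namespace IsJacobiFormWith

lemma apply_neg (h : IsJacobiFormWith B k t φ f) (τ : ℍ) (z : CV) : φ τ (-z) = φ τ z := by
  have hact : actC (-1) z = -z := by
    rw [actC, show (-1 : Matrix (Fin 24) (Fin 24) ℤ).map (Int.cast : ℤ → ℂ) = -1 by
      ext i j; simp [Matrix.one_apply, apply_ite], neg_mulVec, one_mulVec]
  rw [← hact, h.conway_invar _ neg_one_mem_conwayGroup]

lemma eq_zero_of_odd_weight (h : IsJacobiFormWith B k t φ f) (hk : Odd k) (τ : ℍ) (z : CV) :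
    φ τ z = 0 := by
  have hmod := h.modular (-1) τ (-z)
  simp only [jfactor, slc, sld, h.apply_neg] at hmod
  simpa [hk.neg_one_zpow, self_eq_neg] using hmod

lemma hasSum_cos (h : IsJacobiFormWith B k t φ f) (v : LV) (τ : ℍ) (s : ℂ) :
    HasSum (fun p : ℕ × LV => f p.1 p.2 * eC (p.1 * τ) * Complex.cos (s * (pairZ B p.2 v : ℝ)))
      (φ τ ((s / (2 * π)) • liftC v)) := by
  have hπ : (π : ℂ) ≠ 0 := by exact_mod_cast Real.pi_ne_zero
  have hneg := h.expansion τ (-((s / (2 * π)) • liftC v))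
  rw [h.apply_neg] at hneg
  have havg := ((h.expansion τ ((s / (2 * π)) • liftC v)).add hneg).div_const 2
  rw [add_self_div_two] at havg
  refine havg.congr_fun fun p => ?_
  rw [fterm, fterm, ← _root_.neg_smul, pairC_smul_right, pairC_smul_right, pairC_liftC, eC, eC, eC,
    Complex.cos]
  rw [show 2 * (π : ℂ) * Complex.I * (s / (2 * π) * pairZ B p.2 v) =
      s * (pairZ B p.2 v : ℝ) * Complex.I by push_cast; field_simp,
    show 2 * (π : ℂ) * Complex.I * (-(s / (2 * π)) * pairZ B p.2 v) =
      -(s * (pairZ B p.2 v : ℝ)) * Complex.I by push_cast; field_simp]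
  ring

lemma summable_evenMoment (h : IsJacobiFormWith B k t φ f) (v : LV) (a : ℕ) (τ : ℍ) :
    Summable fun p : ℕ × LV => f p.1 p.2 * eC (p.1 * τ) * (pairZ B p.2 v : ℂ) ^ (2 * a) := by
  simpa using summable_mul_even_pow (fun s => (h.hasSum_cos v τ s).summable) a

lemma hasQExpansion_evenMoment (h : IsJacobiFormWith B k t φ f) (v : LV) (a : ℕ) :
    HasQExpansion (evenMoment B f v a) (evenMomentSeries B f v a) := by
  intro τ
  have hsum := h.summable_evenMoment v a τ
  refine (hsum.hasSum.prod_fiberwise fun n => (hsum.prod_factor n).hasSum).congr_fun fun n => ?_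
  rw [evenMomentSeries, PowerSeries.coeff_mk, smul_eq_mul, ← tsum_mul_right, qParam_one_pow]
  exact tsum_congr fun x => by ring

lemma hasSum_correctedTaylorCoeff (h : IsJacobiFormWith B k t φ f) (v : LV) (τ : ℍ) (s : ℂ) :
    HasSum (fun m => correctedTaylorCoeff B t f v m τ * (s ^ 2) ^ m)
      (cexp (t * pairZ B v v / 24 * EisensteinSeries.E2 τ * s ^ 2) *
        φ τ ((s / (2 * π)) • liftC v)) := by
  have hexp := NormedSpace.expSeries_div_hasSum_exp
    (t * pairZ B v v / 24 * EisensteinSeries.E2 τ * s ^ 2)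
  rw [← Complex.exp_eq_exp_ℂ] at hexp
  have hφ := hasSum_even_pow_of_hasSum_cos (h.hasSum_cos v τ) s
  have hprod := (summable_norm_sum_mul_antidiagonal_of_summable_norm hexp.summable.norm
    hφ.summable.norm).of_norm.hasSum
  rw [← tsum_mul_tsum_eq_tsum_sum_antidiagonal_of_summable_norm hexp.summable.norm
    hφ.summable.norm, hexp.tsum_eq, hφ.tsum_eq] at hprod
  refine hprod.congr_fun fun m => ?_
  rw [correctedTaylorCoeff, Finset.sum_mul]
  refine Finset.sum_congr rfl fun y hy => ?_
  rw [← mem_antidiagonal.1 hy, pow_add, mul_pow, evenMoment]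
  push_cast
  ring

lemma apply_S_smul (h : IsJacobiFormWith B k t φ f) (v : LV) (τ : ℍ) (s : ℂ) :
    φ (S • τ) (s • liftC v) = (τ : ℂ) ^ k *
      (cexp (t * π * Complex.I * pairZ B v v * s ^ 2 * τ) * φ τ ((τ * s) • liftC v)) := by
  have hτ := UpperHalfPlane.ne_zero τ
  have hslc : slc S = 1 := by simp [slc, ModularGroup.S]
  have hj : jfactor S τ = τ := by simp [jfactor, slc, sld, ModularGroup.S]
  have hmod := h.modular S τ ((τ * s) • liftC v)
  rw [hj, hslc, smul_smul, inv_mul_cancel_left₀ hτ, pairC_smul_left, pairC_smul_right,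
    pairC_liftC] at hmod
  rw [hmod, mul_assoc]
  congr 3
  field_simp

/-- The automorphy factor of `φ` cancels against the quasimodular correction of `E₂`. -/
lemma exp_E2_mul_apply_S_smul (h : IsJacobiFormWith B k t φ f) (v : LV) (τ : ℍ) (s : ℂ) :
    cexp (t * pairZ B v v / 24 * EisensteinSeries.E2 (S • τ) * s ^ 2) *
        φ (S • τ) ((s / (2 * π)) • liftC v) =
      (τ : ℂ) ^ k * (cexp (t * pairZ B v v / 24 * EisensteinSeries.E2 τ * (τ * s) ^ 2) *
        φ τ ((τ * s / (2 * π)) • liftC v)) := by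
  have hπ : (π : ℂ) ≠ 0 := by exact_mod_cast Real.pi_ne_zero
  rw [h.apply_S_smul, eisensteinE2_S_smul, mul_left_comm, ← mul_assoc (cexp _),
    ← Complex.exp_add, mul_div_assoc (τ : ℂ) s]
  congr 3
  field_simp [Complex.I_ne_zero]
  linear_combination (24 * t * pairZ B v v * s ^ 2 * τ : ℂ) * Complex.I_sq

lemma correctedTaylorCoeff_S_smul (h : IsJacobiFormWith B k t φ f) (v : LV) (m : ℕ) (τ : ℍ) :
    correctedTaylorCoeff B t f v m (S • τ) =
      (τ : ℂ) ^ (k + 2 * m) * correctedTaylorCoeff B t f v m τ := by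
  have hτ := UpperHalfPlane.ne_zero τ
  choose root hroot using fun u : ℂ => IsAlgClosed.exists_pow_nat_eq u two_pos
  have hleft (u : ℂ) := h.hasSum_correctedTaylorCoeff v (S • τ) (root u)
  simp only [hroot] at hleft
  refine congrFun (eq_of_forall_hasSum_pow
    (b := fun m => (τ : ℂ) ^ (k + 2 * m) * correctedTaylorCoeff B t f v m τ) hleft fun u => ?_) m
  have hright := (h.hasSum_correctedTaylorCoeff v τ (τ * root u)).mul_left ((τ : ℂ) ^ k)
  rw [← h.exp_E2_mul_apply_S_smul, hroot] at hright
  refine hright.congr_fun fun m => ?_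
  rw [mul_pow, hroot, mul_pow, ← pow_mul, zpow_add₀ hτ]
  norm_cast
  ring

lemma hasQExpansion_correctedTaylorCoeff (h : IsJacobiFormWith B k t φ f) (v : LV) (m : ℕ) :
    HasQExpansion (correctedTaylorCoeff B t f v m) (∑ y ∈ antidiagonal m,
      ((t * pairZ B v v / 24) ^ y.1 / (y.1.factorial : ℂ)) • PowerSeries.mk e2coeff ^ y.1 *
        (((-1) ^ y.2 / ((2 * y.2).factorial : ℂ)) • evenMomentSeries B f v y.2)) := by
  have hsum := HasQExpansion.sum (antidiagonal m) fun y _ =>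
    ((hasQExpansion_eisensteinE2.pow y.1).const_mul
      ((t * pairZ B v v / 24) ^ y.1 / (y.1.factorial : ℂ))).mul
        ((h.hasQExpansion_evenMoment v y.2).const_mul ((-1) ^ y.2 / ((2 * y.2).factorial : ℂ)))
  convert hsum using 2 with τ
  exact Finset.sum_congr rfl fun y _ => by rw [mul_pow]; ring

end IsJacobiFormWith

lemma coeff_mul_of_forall_lt {R : Type*} [Semiring R] (p : PowerSeries R) {r : PowerSeries R}
    {n : ℕ} (hr : ∀ m < n, r.coeff m = 0) : (p * r).coeff n = p.coeff 0 * r.coeff n := by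
  rw [PowerSeries.coeff_mul, Finset.sum_eq_single (0, n)]
  · rintro ⟨a, b⟩ hab hne
    rw [mem_antidiagonal] at hab
    have hb : b < n := by
      by_contra hb
      exact hne (Prod.ext (by lia) (by lia))
    rw [hr b hb, mul_zero]
  · simp

lemma IsJacobiFormWith.sum_moments_eq_zero (h : IsJacobiFormWith B k t φ f) {n : ℕ}
    (hn : ∀ m < n, ∀ x, f m x = 0) {m : ℕ}
    (hk : k + 2 * m < 0 ∨ k + 2 * m = 0 ∧ n ≠ 0 ∨ k + 2 * m = 2) (v : LV) :
    ∑ y ∈ antidiagonal m, (t * pairZ B v v / 24) ^ y.1 / (y.1.factorial : ℂ) *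
      ((-1) ^ y.2 / ((2 * y.2).factorial : ℂ) *
        ∑' x, f n x * (pairZ B x v : ℂ) ^ (2 * y.2)) = 0 := by
  have hcoeff := (h.hasQExpansion_correctedTaylorCoeff v m).coeff_eq_zero
    (slash_S_eq_self_iff.2 (h.correctedTaylorCoeff_S_smul v m)) hk
  rw [map_sum] at hcoeff
  refine (Finset.sum_congr rfl fun y _ => ?_).trans hcoeff
  rw [coeff_mul_of_forall_lt _ fun m hm => by simp [evenMomentSeries, hn m hm]]
  simp [evenMomentSeries, e2coeff]

end TaylorDevelopment

/-! ### Laplacians of products of linear and quadratic forms -/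

section Laplacian

open MvPolynomial

variable {ι K : Type*} [Fintype ι] [Field K] {c d : ι → K}

/-- The Laplacian `∑ dᵢ⁻¹ ∂ᵢ²` of the diagonal quadratic form `∑ dᵢ Xᵢ²`. -/
def laplacian (d : ι → K) : Module.End K (MvPolynomial ι K) :=
  ∑ i, (d i)⁻¹ • ((pderiv i).toLinearMap ∘ₗ (pderiv i).toLinearMap)

/-- The linear form `∑ cᵢ Xᵢ`. -/
def linearForm (c : ι → K) : MvPolynomial ι K := ∑ i, C (c i) * X i

/-- The diagonal quadratic form `∑ dᵢ Xᵢ²`. -/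
def diagonalForm (d : ι → K) : MvPolynomial ι K := ∑ i, C (d i) * X i ^ 2

lemma laplacian_apply (d : ι → K) (P : MvPolynomial ι K) :
    laplacian d P = ∑ i, C (d i)⁻¹ * pderiv i (pderiv i P) := by
  simp [laplacian, LinearMap.sum_apply, smul_eq_C_mul]

lemma pderiv_linearForm (c : ι → K) (i : ι) : pderiv i (linearForm c) = C (c i) := by
  classical
  simp [linearForm, pderiv_X, Pi.single_apply]

lemma pderiv_diagonalForm (d : ι → K) (i : ι) :
    pderiv i (diagonalForm d) = 2 * C (d i) * X i := by
  classical
  simp [diagonalForm, pderiv_X, Pi.single_apply]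
  ring

lemma pderiv_linearForm_pow_mul_diagonalForm_pow (c d : ι → K) (n b : ℕ) (i : ι) :
    pderiv i (linearForm c ^ n * diagonalForm d ^ b) =
      C (n * c i) * (linearForm c ^ (n - 1) * diagonalForm d ^ b) +
        C (2 * b * d i) * X i * (linearForm c ^ n * diagonalForm d ^ (b - 1)) := by
  rw [pderiv_mul, pderiv_pow, pderiv_pow, pderiv_linearForm, pderiv_diagonalForm]
  simp only [map_mul, map_natCast, map_ofNat]
  ring

lemma pderiv_pderiv_linearForm_pow_mul_diagonalForm_pow (c d : ι → K) (n b : ℕ) (i : ι) :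
    pderiv i (pderiv i (linearForm c ^ n * diagonalForm d ^ b)) =
      C (n * (n - 1 : ℕ) * (c i * c i)) * (linearForm c ^ (n - 2) * diagonalForm d ^ b) +
        C (4 * n * b * d i) * (C (c i) * X i) *
          (linearForm c ^ (n - 1) * diagonalForm d ^ (b - 1)) +
        C (2 * b * d i) * (linearForm c ^ n * diagonalForm d ^ (b - 1)) +
        C (4 * b * (b - 1 : ℕ) * d i) * (C (d i) * X i ^ 2) *
          (linearForm c ^ n * diagonalForm d ^ (b - 2)) := by
  rw [pderiv_linearForm_pow_mul_diagonalForm_pow, map_add, pderiv_C_mul,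
    pderiv_linearForm_pow_mul_diagonalForm_pow, pderiv_mul, pderiv_C_mul, pderiv_X_self,
    pderiv_linearForm_pow_mul_diagonalForm_pow]
  simp only [map_mul, map_natCast, map_ofNat, Nat.sub_sub, one_add_one_eq_two]
  ring

lemma natCast_mul_natCast_sub_one {R : Type*} [Ring R] (n : ℕ) :
    (n : R) * (n - 1 : ℕ) = n * (n - 1) := by
  cases n <;> simp

lemma natCast_mul_pow_sub_one_mul {R : Type*} [CommSemiring R] (x : R) (n : ℕ) :
    n * (x ^ (n - 1) * x) = n * x ^ n := by
  cases n with
  | zero => simp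
  | succ n => rw [Nat.add_sub_cancel, pow_succ]

lemma laplacian_linearForm_pow_mul_diagonalForm_pow (hd : ∀ i, d i ≠ 0) (n b : ℕ) :
    laplacian d (linearForm c ^ n * diagonalForm d ^ b) =
      C ((n * (n - 1) : K) * ∑ i, c i * c i / d i) *
          (linearForm c ^ (n - 2) * diagonalForm d ^ b) +
        C (2 * b * (2 * n + 2 * b + Fintype.card ι - 2) : K) *
          (linearForm c ^ n * diagonalForm d ^ (b - 1)) := by
  have hterm (i : ι) : C (d i)⁻¹ * pderiv i (pderiv i (linearForm c ^ n * diagonalForm d ^ b)) =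
      C (c i * c i / d i) * (C (n * (n - 1) : K) * (linearForm c ^ (n - 2) * diagonalForm d ^ b)) +
        C (c i) * X i *
          (C (4 * n * b : K) * (linearForm c ^ (n - 1) * diagonalForm d ^ (b - 1))) +
        C (2 * b : K) * (linearForm c ^ n * diagonalForm d ^ (b - 1)) +
        C (d i) * X i ^ 2 *
          (C (4 * b * (b - 1 : ℕ) : K) * (linearForm c ^ n * diagonalForm d ^ (b - 2))) := by
    have hinv : (C (d i)⁻¹ * C (d i) : MvPolynomial ι K) = 1 := by
      rw [← map_mul, inv_mul_cancel₀ (hd i), map_one]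
    rw [pderiv_pderiv_linearForm_pow_mul_diagonalForm_pow, natCast_mul_natCast_sub_one]
    simp only [div_eq_mul_inv, map_mul]
    linear_combination
      (C (c i) * X i * (C (4 : K) * C (n : K) * C (b : K) *
          (linearForm c ^ (n - 1) * diagonalForm d ^ (b - 1))) +
        C (2 : K) * C (b : K) * (linearForm c ^ n * diagonalForm d ^ (b - 1)) +
        C (d i) * X i ^ 2 * (C (4 : K) * C (b : K) * C ((b - 1 : ℕ) : K) *
          (linearForm c ^ n * diagonalForm d ^ (b - 2)))) * hinv
  have hlinear := natCast_mul_pow_sub_one_mul (linearForm c) n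
  have hdiagonal := natCast_mul_pow_sub_one_mul (diagonalForm d) (b - 1)
  rw [Nat.sub_sub, one_add_one_eq_two] at hdiagonal
  rw [laplacian_apply, Finset.sum_congr rfl fun i _ => hterm i]
  simp only [Finset.sum_add_distrib, ← Finset.sum_mul, ← map_sum, Finset.sum_const,
    Finset.card_univ, nsmul_eq_mul]
  rw [← linearForm, ← diagonalForm]
  simp only [map_mul, map_add, map_sub, map_natCast, map_ofNat, map_one]
  linear_combination
    (4 * b * diagonalForm d ^ (b - 1)) * hlinear + (4 * b * linearForm c ^ n) * hdiagonal +
      (4 * linearForm c ^ n * diagonalForm d ^ (b - 1)) *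
        natCast_mul_natCast_sub_one (R := MvPolynomial ι K) b

/-- The constant `κ` in `Δ^(a+b) (ℓ^(2a) R^b) = κ (∑ cᵢ²/dᵢ)^a`, for the linear form `ℓ = ∑ cᵢ Xᵢ`,
the quadratic form `R = ∑ dᵢ Xᵢ²` in `D` variables and its Laplacian `Δ`. -/
def laplacianConst (D a b : ℕ) : ℕ :=
  (2 * a).factorial * ∏ j ∈ Finset.range b, 2 * (a + j + 1) * (2 * (a + j) + D)

lemma laplacianConst_succ_zero (D a : ℕ) :
    laplacianConst D (a + 1) 0 = (2 * a + 2) * (2 * a + 1) * laplacianConst D a 0 := by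
  simp only [laplacianConst, Finset.prod_range_zero, mul_add 2 a 1, mul_one, Nat.factorial_succ]
  ring

lemma laplacianConst_zero_succ (D b : ℕ) :
    laplacianConst D 0 (b + 1) = 2 * (b + 1) * (2 * b + D) * laplacianConst D 0 b := by
  simp [laplacianConst, Finset.prod_range_succ, mul_comm]

lemma laplacianConst_succ_succ (D a b : ℕ) :
    laplacianConst D (a + 1) (b + 1) =
      (2 * a + 2) * (2 * a + 1) * laplacianConst D a (b + 1) +
        2 * (b + 1) * (4 * a + 2 * b + D + 4) * laplacianConst D (a + 1) b := by
  have hshift : ∏ j ∈ Finset.range b, 2 * (a + (j + 1) + 1) * (2 * (a + (j + 1)) + D) =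
      ∏ j ∈ Finset.range b, 2 * (a + 1 + j + 1) * (2 * (a + 1 + j) + D) :=
    Finset.prod_congr rfl fun j _ => by ring
  rw [laplacianConst, laplacianConst, laplacianConst, Finset.prod_range_succ,
    Finset.prod_range_succ', hshift, mul_add 2 a 1, mul_one, Nat.factorial_succ, Nat.factorial_succ]
  ring

lemma laplacian_pow_linearForm_pow_mul_diagonalForm_pow (hd : ∀ i, d i ≠ 0) (a b : ℕ) :
    (laplacian d ^ (a + b)) (linearForm c ^ (2 * a) * diagonalForm d ^ b) =
      C (laplacianConst (Fintype.card ι) a b * (∑ i, c i * c i / d i) ^ a) := by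
  induction hN : a + b generalizing a b with
  | zero =>
    obtain ⟨rfl, rfl⟩ : a = 0 ∧ b = 0 := by lia
    simp [laplacianConst]
  | succ N ih =>
    have hC (x : K) (P : MvPolynomial ι K) : (laplacian d ^ N) (C x * P) =
        C x * (laplacian d ^ N) P := by
      rw [← smul_eq_C_mul, map_smul, smul_eq_C_mul]
    rw [pow_succ, Module.End.mul_apply, laplacian_linearForm_pow_mul_diagonalForm_pow hd, map_add,
      hC, hC]
    rcases a with _ | a <;> rcases b with _ | b
    · lia
    · have hb := ih 0 b (by lia)
      simp only [mul_zero, Nat.cast_zero, zero_mul, map_zero, zero_add, Nat.add_sub_cancel] at hb ⊢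
      rw [hb, laplacianConst_zero_succ, ← map_mul]
      push_cast
      congr 1
      ring
    · have ha := ih a 0 (by lia)
      simp only [Nat.cast_zero, mul_zero, zero_mul, map_zero, add_zero]
      rw [show 2 * (a + 1) - 2 = 2 * a by lia, ha, laplacianConst_succ_zero, ← map_mul]
      push_cast
      congr 1
      ring
    · have ha := ih a (b + 1) (by lia)
      have hb := ih (a + 1) b (by lia)
      rw [show 2 * (a + 1) - 2 = 2 * a by lia, Nat.add_sub_cancel, ha, hb,
        laplacianConst_succ_succ, ← map_mul, ← map_mul, ← map_add]
      push_cast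
      congr 1
      ring

end Laplacian

/-! ### Vanishing in index two -/

section NormMoments

open MvPolynomial Finset.HasAntidiagonal

variable {B : Matrix (Fin 24) (Fin 24) ℤ} {k : ℤ} {t : ℕ} {φ : ℍ → CV → ℂ} {f : ℕ → LV → ℂ}

lemma IsLeech.eval_linearForm {K : Type*} [Field K] (hB : IsLeech B) (w : Fin 24 → LV) (x : LV)
    (z : Fin 24 → ℤ) : eval (fun i => (z i : K)) (linearForm fun i => (pairZ B x (w i) : K)) =
      pairZ B x (∑ i, z i • w i) := by
  rw [hB.pairZ_comm, pairZ_sum_left, linearForm]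
  simp only [map_sum, map_mul, eval_C, eval_X, pairZ_smul_left, hB.pairZ_comm x, Int.cast_sum,
    Int.cast_mul, mul_comm]

lemma IsOrthogonalBasis.eval_diagonalForm {K : Type*} [Field K] {w : Fin 24 → LV}
    (hw : IsOrthogonalBasis B w) (hB : IsLeech B) (z : Fin 24 → ℤ) :
    eval (fun i => (z i : K)) (diagonalForm fun i => (pairZ B (w i) (w i) : K)) =
      pairZ B (∑ i, z i • w i) (∑ i, z i • w i) := by
  rw [← hB.eval_linearForm, linearForm, diagonalForm]
  simp only [map_sum, map_mul, map_pow, eval_C, eval_X, hw.pairZ_sum_smul, Int.cast_mul]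
  exact Finset.sum_congr rfl fun i _ => by ring

/-- A polynomial identity in `v` stays true after applying the `m`-th power of the Laplacian, which
turns `(v,v)ᵇ(x,v)²ᵃ` into a multiple of `(x,x)ᵃ`. -/
lemma IsLeech.sum_mul_laplacianConst_eq_zero {K : Type*} [Field K] [CharZero K] (hB : IsLeech B)
    (U : Finset LV) (g : LV → K) (r : ℕ × ℕ → K) {m : ℕ}
    (h : ∀ v, ∑ y ∈ antidiagonal m, r y *
      ∑ x ∈ U, g x * ((pairZ B x v : K) ^ (2 * y.2) * (pairZ B v v : K) ^ y.1) = 0) :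
    ∑ y ∈ antidiagonal m, r y *
      (laplacianConst 24 y.2 y.1 * ∑ x ∈ U, g x * (pairZ B x x : K) ^ y.2) = 0 := by
  obtain ⟨w, hw⟩ := hB.exists_isOrthogonalBasis
  let d (i : Fin 24) : K := pairZ B (w i) (w i)
  let c (x : LV) (i : Fin 24) : K := pairZ B x (w i)
  have hd (i : Fin 24) : d i ≠ 0 := Int.cast_ne_zero.2 (hw.pos i).ne'
  have hpoly : ∑ y ∈ antidiagonal m, r y •
      ∑ x ∈ U, g x • (linearForm (c x) ^ (2 * y.2) * diagonalForm d ^ y.1) = 0 := by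
    refine funext_set (fun _ => Set.range ((↑) : ℤ → K))
      (fun _ => Set.infinite_range_of_injective Int.cast_injective) fun z hz => ?_
    choose n hn using fun i => hz i (Set.mem_univ i)
    obtain rfl : (fun i => (n i : K)) = z := _root_.funext hn
    simpa only [map_sum, smul_eval, map_mul, map_pow, c, d, hB.eval_linearForm,
      hw.eval_diagonalForm hB, map_zero] using h (∑ i, n i • w i)
  refine C_injective (Fin 24) K ?_
  rw [map_zero, ← map_zero (laplacian d ^ m), ← hpoly, map_sum, map_sum]
  refine Finset.sum_congr rfl fun y hy => ?_
  have hlap (x : LV) : (laplacian d ^ m) (linearForm (c x) ^ (2 * y.2) * diagonalForm d ^ y.1) =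
      C (laplacianConst 24 y.2 y.1 * (pairZ B x x : K) ^ y.2) := by
    rw [hw.parseval hB, ← mem_antidiagonal.1 hy, add_comm,
      laplacian_pow_linearForm_pow_mul_diagonalForm_pow hd, Fintype.card_fin]
  simp only [LinearMap.map_smul, map_sum, hlap]
  simp only [smul_eq_C_mul, ← map_mul, Finset.mul_sum, map_sum]
  exact Finset.sum_congr rfl fun x _ => congrArg C (by ring)

namespace IsLeech

/-- The `a`-th moment of the norm over the vectors of norm at most `8`, weighted by `g`. -/
def normMoment (hB : IsLeech B) (g : LV → ℂ) (a : ℕ) : ℂ :=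
  ∑ x ∈ hB.shortVectors, g x * (pairZ B x x : ℂ) ^ a

/-- The sum of `g` over the short vectors of norm `2j`. -/
def shellSum (hB : IsLeech B) (g : LV → ℂ) (j : ℕ) : ℂ :=
  ∑ x ∈ hB.shortVectors with halfNorm B x = j, g x

lemma normMoment_eq_sum_shellSum (hB : IsLeech B) (g : LV → ℂ) (a : ℕ) :
    hB.normMoment g a = ∑ j ∈ Finset.range 5, hB.shellSum g j * (2 * (j : ℂ)) ^ a := by
  rw [normMoment,
    ← Finset.sum_fiberwise_of_maps_to fun x hx => hB.mem_shortVectors_iff_halfNorm.1 hx]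
  refine Finset.sum_congr rfl fun j _ => ?_
  rw [shellSum, Finset.sum_mul]
  refine Finset.sum_congr rfl fun x hx => ?_
  rw [hB.pairZ_self_eq_two_mul_halfNorm, (Finset.mem_filter.1 hx).2]
  push_cast
  rfl

lemma shellSum_one (hB : IsLeech B) (g : LV → ℂ) : hB.shellSum g 1 = 0 :=
  Finset.sum_eq_zero fun x hx => absurd (Finset.mem_filter.1 hx).2 (hB.halfNorm_ne_one x)

lemma shellSum_eq_zero (hB : IsLeech B) {g : LV → ℂ} (h0 : hB.normMoment g 0 = 0)
    (h1 : hB.normMoment g 1 = 0) (h2 : hB.normMoment g 2 = 0)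
    (h34 : hB.normMoment g 3 = 0 ∨ hB.normMoment g 4 = 20 * hB.normMoment g 3) {j : ℕ}
    (hj : j < 5) : hB.shellSum g j = 0 := by
  simp only [normMoment_eq_sum_shellSum, Finset.sum_range_succ, Finset.sum_range_zero,
    shellSum_one] at h0 h1 h2 h34
  norm_num at h0 h1 h2 h34
  have h3 : hB.shellSum g 2 * 64 + hB.shellSum g 3 * 216 + hB.shellSum g 4 * 512 = 0 := by
    rcases h34 with h3 | h4
    · exact h3
    · linear_combination (-1 / 2) * h4 - 52 * h2 + 96 * h1
  have hshell4 : hB.shellSum g 4 = 0 := by linear_combination (1 / 64) * (h3 - 10 * h2 + 24 * h1)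
  have hshell3 : hB.shellSum g 3 = 0 := by
    linear_combination (1 / 12) * (h2 - 4 * h1) - (32 / 12) * hshell4
  have hshell2 : hB.shellSum g 2 = 0 := by
    linear_combination (1 / 4) * h1 - (6 / 4) * hshell3 - 2 * hshell4
  have hshell0 : hB.shellSum g 0 = 0 := by
    linear_combination h0 - hshell2 - hshell3 - hshell4
  interval_cases j
  exacts [hshell0, hB.shellSum_one g, hshell2, hshell3, hshell4]

lemma eq_zero_of_shellSum_eq_zero (hB : IsLeech B) {g : LV → ℂ} {x : LV} (hx : pairZ B x x ≤ 8)
    (hg : ∀ y, pairZ B x x = pairZ B y y → g y = g x)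
    (hsum : hB.shellSum g (halfNorm B x) = 0) : g x = 0 := by
  have hconst : ∀ y ∈ hB.shortVectors.filter (halfNorm B · = halfNorm B x), g y = g x :=
    fun y hy => hg y <| by
      rw [hB.pairZ_self_eq_two_mul_halfNorm, hB.pairZ_self_eq_two_mul_halfNorm,
        (Finset.mem_filter.1 hy).2]
  have hmem : x ∈ hB.shortVectors.filter (halfNorm B · = halfNorm B x) :=
    Finset.mem_filter.2 ⟨hB.mem_shortVectors.2 hx, rfl⟩
  rw [shellSum, Finset.sum_congr rfl hconst, Finset.sum_const, nsmul_eq_mul] at hsum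
  exact (mul_eq_zero.1 hsum).resolve_left (Nat.cast_ne_zero.2 (Finset.card_pos.2 ⟨x, hmem⟩).ne')

end IsLeech

namespace IsJacobiFormWith

variable {n : ℕ}

lemma pairZ_self_le_eight_of_coeff_ne_zero (h : IsJacobiFormWith B k 2 φ f) (hB : IsLeech B)
    (hn : ∀ m < n, ∀ x, f m x = 0) {x : LV} (hx : f n x ≠ 0) : pairZ B x x ≤ 8 :=
  hB.pairZ_self_le_eight_of_mem_minimalSet (h.mem_minimalSet_of_coeff_ne_zero hB hn hx)

lemma sum_normMoment_eq_zero (h : IsJacobiFormWith B k 2 φ f) (hB : IsLeech B)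
    (hn : ∀ m < n, ∀ x, f m x = 0) {m : ℕ}
    (hk : k + 2 * m < 0 ∨ k + 2 * m = 0 ∧ n ≠ 0 ∨ k + 2 * m = 2) :
    ∑ y ∈ antidiagonal m, ((1 / 12) ^ y.1 / y.1.factorial * ((-1) ^ y.2 / (2 * y.2).factorial)) *
      (laplacianConst 24 y.2 y.1 * hB.normMoment (f n) y.2) = 0 := by
  refine hB.sum_mul_laplacianConst_eq_zero _ (f n) _ fun v => ?_
  refine (Finset.sum_congr rfl fun y _ => ?_).trans (h.sum_moments_eq_zero hn hk v)
  rw [tsum_eq_sum (s := hB.shortVectors) fun x hx => ?_, Finset.mul_sum, Finset.mul_sum,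
    Finset.mul_sum]
  · refine Finset.sum_congr rfl fun x _ => ?_
    rw [show ((2 : ℕ) * pairZ B v v / 24 : ℂ) = 1 / 12 * pairZ B v v by push_cast; ring, mul_pow]
    ring
  · by_contra hne
    exact hx (hB.mem_shortVectors.2
      (h.pairZ_self_le_eight_of_coeff_ne_zero hB hn (left_ne_zero_of_mul hne)))

lemma normMoments_eq_zero (h : IsJacobiFormWith B k 2 φ f) (hB : IsLeech B) (hk : k < -5)
    (hn : ∀ m < n, ∀ x, f m x = 0) : hB.normMoment (f n) 0 = 0 ∧ hB.normMoment (f n) 1 = 0 ∧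
      hB.normMoment (f n) 2 = 0 ∧
      (hB.normMoment (f n) 3 = 0 ∨ hB.normMoment (f n) 4 = 20 * hB.normMoment (f n) 3) := by
  have h0 : hB.normMoment (f n) 0 = 0 := by
    simpa [laplacianConst] using h.sum_normMoment_eq_zero hB hn (m := 0) (by lia)
  have h1 : hB.normMoment (f n) 1 = 0 := by
    simpa [Finset.Nat.antidiagonal_succ, laplacianConst, h0] using
      h.sum_normMoment_eq_zero hB hn (m := 1) (by lia)
  have h2 : hB.normMoment (f n) 2 = 0 := by
    simpa [Finset.Nat.antidiagonal_succ, laplacianConst, h0, h1, Nat.factorial] using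
      h.sum_normMoment_eq_zero hB hn (m := 2) (by lia)
  refine ⟨h0, h1, h2, ?_⟩
  by_cases hc : k = -6 ∧ n = 0
  · right
    have h4 := h.sum_normMoment_eq_zero hB hn (m := 4) (by lia)
    simp [Finset.Nat.antidiagonal_succ, laplacianConst, Finset.prod_range_succ, Nat.factorial, h0,
      h1, h2] at h4
    linear_combination h4
  · left
    simpa [Finset.Nat.antidiagonal_succ, laplacianConst, h0, h1, h2, Nat.factorial] using
      h.sum_normMoment_eq_zero hB hn (m := 3) (by lia)

lemma coeff_eq_zero (h : IsJacobiFormWith B k 2 φ f) (hB : IsLeech B) (hk : k < -5) (n : ℕ)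
    (x : LV) : f n x = 0 := by
  induction n using Nat.strong_induction_on generalizing x with
  | _ n hn =>
    obtain ⟨h0, h1, h2, h34⟩ := h.normMoments_eq_zero hB hk hn
    by_contra hx
    have hx8 := h.pairZ_self_le_eight_of_coeff_ne_zero hB hn hx
    have hshell : halfNorm B x < 5 :=
      Finset.mem_range.1 (hB.mem_shortVectors_iff_halfNorm.1 (hB.mem_shortVectors.2 hx8))
    exact hx <| hB.eq_zero_of_shellSum_eq_zero hx8
      (fun y hy => h.coeff_eq_of_conwayEquiv hB (hB.conwayEquiv_of_norm_eq hx8 hy))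
      (hB.shellSum_eq_zero h0 h1 h2 h34 hshell)

end IsJacobiFormWith

end NormMoments

/-- Every Conway invariant weak Jacobi form of index 2 and weight `k < −4` vanishes. -/
theorem weak_jacobi_index_two_minimal_weight
    (B : Matrix (Fin 24) (Fin 24) ℤ) (hB : IsLeech B)
    (k : ℤ) (hk : k < -4)
    (φ : UpperHalfPlane → CV → ℂ) (hφ : IsWeakJacobiForm B k 2 φ) :
    ∀ (τ : UpperHalfPlane) (z : CV), φ τ z = 0 := by
  intro τ z
  obtain ⟨f, h⟩ := hφ
  rcases Int.even_or_odd k with heven | hodd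
  · have hk' : k < -5 := by
      have : k ≠ -5 := by rintro rfl; exact absurd heven (by decide)
      lia
    refine (h.expansion τ z).unique (hasSum_zero.congr_fun fun p => ?_)
    rw [h.coeff_eq_zero hB hk', zero_mul]
  · exact h.eq_zero_of_odd_weight hodd τ z

end
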